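/- Let X be a Borel subset of the Cantor space 2^ω that is dense in 2^ω, such that the subspace X is homogeneous, a Baire space, and X ∉ Δ. Then there exists a semifilter S on ω such that the subspace S is a Baire space and S ≡_W X as subsets of 2^ω. -/

import Mathlib

open Set

abbrev Cantor := ℕ → Bool

def UpwardClosed (S : Set Cantor) : Prop :=
  ∀ x ∈ S, ∀ y : Cantor, (∀ n, x n = true → y n = true) → y ∈ S

def DownwardClosed (R : Set Cantor) : Prop :=
  ∀ y ∈ R, ∀ x : Cantor, (∀ n, x n = true → y n = true) → x ∈ R

def ClosedUnderFinMod (S : Set Cantor) : Prop :=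
  ∀ x ∈ S, ∀ y : Cantor, {n | x n ≠ y n}.Finite → y ∈ S

def IsSemifilter (S : Set Cantor) : Prop :=
  (fun _ => false) ∉ S ∧ (fun _ => true) ∈ S ∧ UpwardClosed S ∧ ClosedUnderFinMod S

def IsSemiideal (R : Set Cantor) : Prop :=
  (fun _ => false) ∈ R ∧ (fun _ => true) ∉ R ∧ DownwardClosed R ∧ ClosedUnderFinMod R

def ClosedUnderInter (S : Set Cantor) : Prop :=
  ∀ x ∈ S, ∀ y ∈ S, (fun n => x n && y n) ∈ S

def IsFilterOnOmega (F : Set Cantor) : Prop := IsSemifilter F ∧ ClosedUnderInter F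

def IsHomogeneous (X : Type*) [TopologicalSpace X] : Prop :=
  ∀ x y : X, ∃ h : X ≃ₜ X, h x = y

def IsFsigma (A : Set Cantor) : Prop :=
  ∃ F : ℕ → Set Cantor, (∀ n, IsClosed (F n)) ∧ A = ⋃ n, F n

def DOmegaSigmaTwo (X : Set Cantor) : Prop :=
  ∃ A : ℕ → Set Cantor, (∀ n, IsFsigma (A n)) ∧ Monotone A ∧
    X = ⋃ n ∈ {n : ℕ | Odd n}, (A n \ ⋃ m < n, A m)

def InDelta (X : Set Cantor) : Prop := DOmegaSigmaTwo X ∧ DOmegaSigmaTwo Xᶜ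

def WadgeLe (A B : Set Cantor) : Prop :=
  ∃ f : Cantor → Cantor, Continuous f ∧ A = f ⁻¹' B

def WadgeEquiv (A B : Set Cantor) : Prop := WadgeLe A B ∧ WadgeLe B A

def CompletelyMetrizable (X : Type*) [t : TopologicalSpace X] : Prop :=
  ∃ m : MetricSpace X, m.toUniformSpace.toTopologicalSpace = t ∧
    @CompleteSpace X m.toUniformSpace

def FirstCategory (X : Type*) [TopologicalSpace X] : Prop :=
  ∃ f : ℕ → Set X, (∀ n, interior (closure (f n)) = ∅) ∧ (Set.univ : Set X) = ⋃ n, f n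

def CantorFin : Set Cantor := {x | {n | x n = true}.Finite}

def BorelSet (X : Set Cantor) : Prop := @MeasurableSet Cantor (borel Cantor) X

set_option linter.unusedVariables false

/-! Part 1 -/
section
open Set

structure Arena where
  P : ℕ → Type
  par : ∀ n, P (n+1) → P n
  ne : ∀ n (p : P n), ∃ q, par n q = p

namespace Arena

abbrev Child (T : Arena) {n : ℕ} (p : T.P n) : Type := {q : T.P (n+1) // T.par n q = p}

abbrev Strat (T : Arena) : Type := ∀ (n : ℕ) (p : T.P n), T.Child p

abbrev Play (T : Arena) : Type := {x : ∀ n, T.P n // ∀ n, T.par n (x (n+1)) = x n}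

def shift (T : Arena) : Arena where
  P n := T.P (n+1)
  par n := T.par (n+1)
  ne n := T.ne (n+1)

noncomputable def dflt (T : Arena) : T.Strat := fun n p => ⟨(T.ne n p).choose, (T.ne n p).choose_spec⟩

def ofStrat (T : Arena) (s : T.Strat) (r : T.P 0) : T.Play :=
  ⟨fun n => Nat.rec r (fun n p => (s n p).1) n, fun n => (s n _).2⟩

theorem exists_play (n : ℕ) : ∀ (T : Arena) (p : T.P n), ∃ x : T.Play, x.1 n = p := by
  induction n with
  | zero => intro T p; exact ⟨T.ofStrat T.dflt p, rfl⟩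
  | succ n ih =>
    intro T p
    obtain ⟨x, hx⟩ := ih T.shift p
    refine ⟨⟨fun m => Nat.casesOn m (T.par 0 (x.1 0)) (fun j => x.1 j), ?_⟩, hx⟩
    intro m
    cases m with
    | zero => rfl
    | succ j => exact x.2 j

theorem play_agree (T : Arena) (x y : T.Play) {n : ℕ} (h : x.1 n = y.1 n) :
    ∀ j ≤ n, x.1 j = y.1 j := by
  induction n with
  | zero => intro j hj; obtain rfl := Nat.le_zero.1 hj; exact h
  | succ n ih =>
    intro j hj
    rcases Nat.lt_or_ge n j with h1 | h1
    · obtain rfl : j = n+1 := by omega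
      exact h
    · refine ih ?_ j h1
      rw [← x.2 n, ← y.2 n, h]

noncomputable def thru (T : Arena) {n : ℕ} (p : T.P n) : T.Play := (exists_play n T p).choose

theorem thru_spec (T : Arena) {n : ℕ} (p : T.P n) : (T.thru p).1 n = p := (exists_play n T p).choose_spec

theorem thru_agree (T : Arena) (x : T.Play) (n j : ℕ) (h : j ≤ n) : (T.thru (x.1 n)).1 j = x.1 j :=
  T.play_agree _ _ (T.thru_spec _) j h

/-- consistency with the strategy of the player with parity `b` -/
def Cons (T : Arena) (b : ℕ) (s : T.Strat) (x : T.Play) : Prop :=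
  ∀ n, n % 2 = b → x.1 (n+1) = (s n (x.1 n)).1

/-- level maps -/
structure Hom (T' T : Arena) where
  f : ∀ n, T'.P n → T.P n
  comm : ∀ n q, T.par n (f (n+1) q) = f n (T'.par n q)

def Hom.map {T' T : Arena} (h : Hom T' T) (x : T'.Play) : T.Play :=
  ⟨fun n => h.f n (x.1 n), fun n => by rw [h.comm, x.2]⟩

def Hom.id (T : Arena) : Hom T T := ⟨fun _ p => p, fun _ _ => rfl⟩
def Hom.comp {A B C : Arena} (g : Hom B C) (f : Hom A B) : Hom A C :=
  ⟨fun n p => g.f n (f.f n p), fun n q => by rw [g.comm, f.comm]⟩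

structure Cov (k : ℕ) (T' T : Arena) extends Hom T' T where
  φ : ℕ → T'.Strat → T.Strat
  causal : ∀ b s s' n, (∀ m ≤ n, s m = s' m) → φ b s n = φ b s' n
  lift : ∀ b < 2, ∀ s x, T.Cons b (φ b s) x → ∃ x', T'.Cons b s x' ∧ toHom.map x' = x
  bij : ∀ n ≤ k, Function.Bijective (f n)
  early : ∀ b s n, n < k → ∀ p, (φ b s n (f n p)).1 = f (n+1) (s n p).1

def Cov.id (k : ℕ) (T : Arena) : Cov k T T where
  toHom := Hom.id T
  φ _ s := s
  causal b s s' n h := h n le_rfl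
  lift b _ s x h := ⟨x, h, rfl⟩
  bij n _ := Function.bijective_id
  early _ _ _ _ _ := rfl

def Cov.comp {k : ℕ} {A B C : Arena} (g : Cov k B C) (f : Cov k A B) : Cov k A C where
  toHom := g.toHom.comp f.toHom
  φ b s := g.φ b (f.φ b s)
  causal b s s' n h := g.causal _ _ _ _ (fun m hm => f.causal _ _ _ _ (fun j hj => h j (hj.trans hm)))
  lift b hb s x h := by
    obtain ⟨y, hy, rfl⟩ := g.lift b hb _ _ h
    obtain ⟨z, hz, rfl⟩ := f.lift b hb _ _ hy
    exact ⟨z, hz, rfl⟩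
  bij n hn := (g.bij n hn).comp (f.bij n hn)
  early b s n hn p := by
    show (g.φ b (f.φ b s) n (g.f n (f.f n p))).1 = g.f (n+1) (f.f (n+1) (s n p).1)
    rw [g.early _ _ _ hn, f.early _ _ _ hn]

def Clop (T : Arena) (X : Set T.Play) : Prop :=
  ∀ x, ∃ n, ∀ y : T.Play, y.1 n = x.1 n → (x ∈ X ↔ y ∈ X)

def Opn (T : Arena) (X : Set T.Play) : Prop :=
  ∀ x ∈ X, ∃ n, ∀ y : T.Play, y.1 n = x.1 n → y ∈ X

/-! ### thread lemma -/

theorem thread_bij (j : ℕ) : ∀ (A : ℕ → Type) (π : ∀ i, A (i+1) → A i)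
    (_ : ∀ i, j ≤ i → Function.Bijective (π i)),
    Function.Bijective (fun f : {f : ∀ i, A i // ∀ i, π i (f (i+1)) = f i} => f.1 j) := by
  induction j with
  | zero =>
    intro A π h
    constructor
    · rintro ⟨f, hf⟩ ⟨g, hg⟩ (hfg : f 0 = g 0)
      apply Subtype.ext
      funext i
      induction i with
      | zero => exact hfg
      | succ i ih => 
        apply (h i (Nat.zero_le _)).1
        rw [hf, hg]; exact ih
    · intro a
      refine ⟨⟨fun i => Nat.rec a (fun i b => ((h i (Nat.zero_le _)).2 b).choose) i, fun i => ?_⟩, rfl⟩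
      exact ((h i (Nat.zero_le _)).2 _).choose_spec
  | succ j ih =>
    intro A π h
    have := ih (fun i => A (i+1)) (fun i => π (i+1)) (fun i hi => h (i+1) (by omega))
    constructor
    · rintro ⟨f, hf⟩ ⟨g, hg⟩ (hfg : f (j+1) = g (j+1))
      have h1 : (⟨fun i => f (i+1), fun i => hf (i+1)⟩ : {f : ∀ i, A (i+1) // ∀ i, π (i+1) (f (i+1)) = f i})
        = ⟨fun i => g (i+1), fun i => hg (i+1)⟩ := this.1 hfg
      have h2 := congrArg Subtype.val h1
      apply Subtype.ext
      funext i
      cases i with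
      | zero =>
        show f 0 = g 0
        have h3 : f 1 = g 1 := congrFun h2 0
        rw [← hf 0, ← hg 0, h3]
      | succ i => exact congrFun h2 i
    · intro a
      obtain ⟨⟨f, hf⟩, hfa⟩ := this.2 a
      refine ⟨⟨fun i => Nat.casesOn i (π 0 (f 0)) f, fun i => ?_⟩, hfa⟩
      cases i with
      | zero => rfl
      | succ i => exact hf i

/-! ### limits -/
section limit
variable (k : ℕ) (T : ℕ → Arena) (C : ∀ i, Cov (k+i) (T (i+1)) (T i))

abbrev Thr (n : ℕ) : Type := {f : ∀ i, (T i).P n // ∀ i, (C i).f n (f (i+1)) = f i}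

theorem ev_bij (n j : ℕ) (h : n ≤ k + j) : Function.Bijective (fun f : Thr k T C n => f.1 j) :=
  thread_bij j (fun i => (T i).P n) (fun i => (C i).f n) (fun i hi => (C i).bij n (by omega))

def thrPar (n : ℕ) (f : Thr k T C (n+1)) : Thr k T C n :=
  ⟨fun i => (T i).par n (f.1 i), fun i => by rw [← (C i).comm, f.2]⟩

def lim : Arena where
  P := Thr k T C
  par := thrPar k T C
  ne n p := by
    obtain ⟨q, hq⟩ := (T (n+1)).ne n (p.1 (n+1))
    obtain ⟨g, hg⟩ := (ev_bij k T C (n+1) (n+1) (by omega)).2 q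
    refine ⟨g, (ev_bij k T C n (n+1) (by omega)).1 ?_⟩
    show (T (n+1)).par n (g.1 (n+1)) = _
    have : g.1 (n+1) = q := hg
    rw [this, hq]

def evH (i : ℕ) : Hom (lim k T C) (T i) := ⟨fun _ f => f.1 i, fun _ _ => rfl⟩

open Classical in
/-- transport of a strategy to the `j`-th arena, on early levels -/
noncomputable def tr (s : (lim k T C).Strat) (j : ℕ) : (T j).Strat := fun n p =>
  if h : n + 1 ≤ k + j then
    let f : Thr k T C n := ((ev_bij k T C n j (by omega)).2 p).choose
    ⟨(s n f).1.1 j, by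
      have h2 : f.1 j = p := ((ev_bij k T C n j (by omega)).2 p).choose_spec
      have := congrArg (fun g : Thr k T C n => g.1 j) (s n f).2
      exact this.trans h2⟩
  else (T j).dflt n p

theorem tr_spec (s : (lim k T C).Strat) (j n : ℕ) (h : n + 1 ≤ k + j) (f : Thr k T C n) :
    (tr k T C s j n (f.1 j)).1 = (s n f).1.1 j := by
  have h2 : ((ev_bij k T C n j (by omega)).2 (f.1 j)).choose = f :=
    (ev_bij k T C n j (by omega)).1 ((ev_bij k T C n j (by omega)).2 (f.1 j)).choose_spec
  simp only [tr, dif_pos h]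
  rw [h2]

noncomputable def Phi (b : ℕ) (s : (lim k T C).Strat) : ℕ → ∀ i, (T i).Strat
  | 0, i => tr k T C s i
  | m+1, i => (C i).φ b (Phi b s m (i+1))

theorem Phi_stab (b : ℕ) (s : (lim k T C).Strat) (m : ℕ) : ∀ (i n : ℕ), n + 1 ≤ k + i + m →
    Phi k T C b s m i n = Phi k T C b s (m+1) i n := by
  induction m with
  | zero =>
    intro i n h
    funext p
    apply Subtype.ext
    obtain ⟨f, rfl⟩ := (ev_bij k T C n i (by omega)).2 p
    show (tr k T C s i n (f.1 i)).1 = ((C i).φ b (tr k T C s (i+1)) n (f.1 i)).1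
    rw [tr_spec _ _ _ _ _ _ (by omega), ← f.2 i, (C i).early _ _ _ (by omega), tr_spec _ _ _ _ _ _ (by omega)]
    exact ((s n f).1.2 i).symm
  | succ m ih =>
    intro i n h
    exact (C i).causal _ _ _ _ (fun j hj => ih (i+1) j (by omega))

theorem Phi_stab' (b : ℕ) (s : (lim k T C).Strat) (i n m d : ℕ) (h : n + 1 ≤ k + i + m) :
    Phi k T C b s m i n = Phi k T C b s (m+d) i n := by
  induction d with
  | zero => rfl
  | succ d ih => rw [ih]; exact Phi_stab k T C b s (m+d) i n (by omega)

noncomputable def sg (b : ℕ) (s : (lim k T C).Strat) (i : ℕ) : (T i).Strat :=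
  fun n => Phi k T C b s (n+1) i n

theorem sg_eq (b : ℕ) (s : (lim k T C).Strat) (i : ℕ) :
    sg k T C b s i = (C i).φ b (sg k T C b s (i+1)) := by
  funext n
  have h1 : (C i).φ b (sg k T C b s (i+1)) n = (C i).φ b (Phi k T C b s (n+1) (i+1)) n := by
    apply (C i).causal
    intro m hm
    show Phi k T C b s (m+1) (i+1) m = _
    obtain ⟨d, rfl⟩ := Nat.exists_eq_add_of_le hm
    have := Phi_stab' k T C b s (i+1) m (m+1) d (by omega)
    rw [this]; congr 1; omega
  rw [h1]
  exact Phi_stab k T C b s (n+1) i n (by omega)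

theorem sg_tr (b : ℕ) (s : (lim k T C).Strat) (j n : ℕ) (h : n + 1 ≤ k + j) :
    sg k T C b s j n = tr k T C s j n := by
  have := Phi_stab' k T C b s j n 0 (n+1) (by omega)
  show Phi k T C b s (n+1) j n = Phi k T C b s 0 j n
  rw [this]; congr 1; omega

theorem tr_congr (s s' : (lim k T C).Strat) (j n : ℕ) (h : s n = s' n) : tr k T C s j n = tr k T C s' j n := by
  funext p
  by_cases h' : n + 1 ≤ k + j
  · simp only [tr, dif_pos h', h]
  · simp only [tr, dif_neg h']

theorem Phi_congr (b : ℕ) (s s' : (lim k T C).Strat) (m : ℕ) : ∀ (i n : ℕ), (∀ j ≤ n, s j = s' j) →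
    Phi k T C b s m i n = Phi k T C b s' m i n := by
  induction m with
  | zero => intro i n h; exact tr_congr k T C s s' i n (h n le_rfl)
  | succ m ih =>
    intro i n h
    exact (C i).causal _ _ _ _ (fun j hj => ih (i+1) j (fun l hl => h l (hl.trans hj)))

noncomputable def limCov : Cov k (lim k T C) (T 0) where
  toHom := evH k T C 0
  φ b s := sg k T C b s 0
  causal b s s' n h := Phi_congr k T C b s s' _ _ _ h
  bij n hn := ev_bij k T C n 0 (by omega)
  early b s n hn p := by
    rw [sg_tr _ _ _ _ _ _ _ (by omega)]
    exact tr_spec k T C s 0 n (by omega) p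
  lift b hb s x hx := by
    have step : ∀ i (y : {y : (T i).Play // (T i).Cons b (sg k T C b s i) y}),
        ∃ z : {y : (T (i+1)).Play // (T (i+1)).Cons b (sg k T C b s (i+1)) y}, (C i).toHom.map z.1 = y.1 := by
      rintro i ⟨y, hy⟩
      rw [sg_eq] at hy
      obtain ⟨z, hz, h⟩ := (C i).lift b hb _ _ hy
      exact ⟨⟨z, hz⟩, h⟩
    choose nx hnx using step
    let xs : ∀ i, {y : (T i).Play // (T i).Cons b (sg k T C b s i) y} := fun i =>
      Nat.rec ⟨x, hx⟩ (fun i y => nx i y) i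
    have hxs : ∀ i, (C i).toHom.map (xs (i+1)).1 = (xs i).1 := fun i => hnx i (xs i)
    refine ⟨⟨fun n => ⟨fun i => (xs i).1.1 n, fun i => ?_⟩, fun n => ?_⟩, ?_, ?_⟩
    · exact congrArg (fun y : (T i).Play => y.1 n) (hxs i)
    · apply Subtype.ext
      funext i
      exact (xs i).1.2 n
    · intro n hn
      apply (ev_bij k T C (n+1) (n+1) (by omega)).1
      show (xs (n+1)).1.1 (n+1) = _
      rw [(xs (n+1)).2 n hn, sg_tr _ _ _ _ _ _ _ (by omega)]
      exact tr_spec k T C s (n+1) n (by omega) ⟨fun i => (xs i).1.1 n, _⟩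
    · rfl

end limit
end Arena

end

/-! Part 2 -/
section
open Set
namespace Arena

def AttR (T : Arena) (Q B : ∀ n, Set (T.P n)) (att : ℕ) (α : Ordinal.{0}) (n : ℕ) (p : T.P n) : Prop :=
  p ∈ B n ∨ (n % 2 = att ∧ ∃ q, T.par n q = p ∧ q ∈ Q (n+1) ∧ ∃ β, ∃ _ : β < α, AttR T Q B att β (n+1) q) ∨
  (n % 2 ≠ att ∧ ∀ q, T.par n q = p → q ∈ Q (n+1) → ∃ β, ∃ _ : β < α, AttR T Q B att β (n+1) q)
termination_by α

theorem attractor (T : Arena) (Q B : ∀ n, Set (T.P n)) (att : ℕ) :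
    ∃ Ws : (∀ n, Set (T.P n)) × T.Strat,
      (∀ n p, p ∈ B n → p ∈ Ws.1 n) ∧
      (∀ n p, p ∈ Ws.1 n → p ∉ B n → n % 2 = att → (Ws.2 n p).1 ∈ Q (n+1) ∧ (Ws.2 n p).1 ∈ Ws.1 (n+1)) ∧
      (∀ n p, p ∈ Ws.1 n → p ∉ B n → n % 2 ≠ att → ∀ q, T.par n q = p → q ∈ Q (n+1) → q ∈ Ws.1 (n+1)) ∧
      (∀ n p, p ∉ Ws.1 n → n % 2 = att → ∀ q, T.par n q = p → q ∈ Q (n+1) → q ∉ Ws.1 (n+1)) ∧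
      (∀ n p, p ∉ Ws.1 n → n % 2 ≠ att → ∃ q, T.par n q = p ∧ q ∈ Q (n+1) ∧ q ∉ Ws.1 (n+1)) ∧
      (∀ (x : T.Play) n0, x.1 n0 ∈ Ws.1 n0 →
        (∀ n ≥ n0, n % 2 ≠ att → x.1 (n+1) ∈ Q (n+1)) →
        (∀ n ≥ n0, n % 2 = att → x.1 n ∈ Ws.1 n → x.1 n ∉ B n → x.1 (n+1) = (Ws.2 n (x.1 n)).1) →
        ∃ n ≥ n0, x.1 n ∈ B n) := by
  classical
  let W : ∀ n, Set (T.P n) := fun n => {p | ∃ α, T.AttR Q B att α n p}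
  let rk : ∀ n, T.P n → Ordinal.{0} := fun n p => sInf {α | T.AttR Q B att α n p}
  have hrk : ∀ n p, p ∈ W n → T.AttR Q B att (rk n p) n p := fun n p hp => csInf_mem (s := {α | T.AttR Q B att α n p}) hp
  have hle : ∀ n p α, T.AttR Q B att α n p → rk n p ≤ α := fun n p α h => csInf_le' h
  have hc : ∀ n (p : T.P n), ∃ c : T.Child p, (p ∈ W n → p ∉ B n → n % 2 = att →
      c.1 ∈ Q (n+1) ∧ c.1 ∈ W (n+1) ∧ rk (n+1) c.1 < rk n p) := by
    intro n p
    by_cases h : p ∈ W n ∧ p ∉ B n ∧ n % 2 = att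
    · have h1 := hrk n p h.1
      rw [AttR] at h1
      rcases h1 with h1 | ⟨_, q, hq, hQ, β, hβ, h1⟩ | ⟨h1, _⟩
      · exact absurd h1 h.2.1
      · exact ⟨⟨q, hq⟩, fun _ _ _ => ⟨hQ, ⟨β, h1⟩, (hle _ _ _ h1).trans_lt hβ⟩⟩
      · exact absurd h.2.2 h1
    · exact ⟨T.dflt n p, fun h1 h2 h3 => absurd ⟨h1, h2, h3⟩ h⟩
  choose s hs using hc
  have hdef : ∀ n p, p ∈ W n → p ∉ B n → n % 2 ≠ att → ∀ q, T.par n q = p → q ∈ Q (n+1) →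
      q ∈ W (n+1) ∧ rk (n+1) q < rk n p := by
    intro n p hp hB hn q hq hQ
    have h1 := hrk n p hp
    rw [AttR] at h1
    rcases h1 with h1 | ⟨h1, _⟩ | ⟨_, h1⟩
    · exact absurd h1 hB
    · exact absurd h1 hn
    · obtain ⟨β, hβ, h2⟩ := h1 q hq hQ
      exact ⟨⟨β, h2⟩, (hle _ _ _ h2).trans_lt hβ⟩
  refine ⟨(W, s), ?_, ?_, ?_, ?_, ?_, ?_⟩
  · intro n p hp
    refine ⟨0, ?_⟩
    rw [AttR]; exact Or.inl hp
  · intro n p hp hB hn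
    exact ⟨(hs n p hp hB hn).1, (hs n p hp hB hn).2.1⟩
  · intro n p hp hB hn q hq hQ
    exact (hdef n p hp hB hn q hq hQ).1
  · rintro n p hp hn q hq hQ ⟨α, hα⟩
    apply hp
    refine ⟨Order.succ α, ?_⟩
    rw [AttR]
    exact Or.inr (Or.inl ⟨hn, q, hq, hQ, α, Order.lt_succ α, hα⟩)
  · intro n p hp hn
    by_contra hcon
    push Not at hcon
    apply hp
    refine ⟨⨆ q : T.P (n+1), Order.succ (rk (n+1) q), ?_⟩
    rw [AttR]
    refine Or.inr (Or.inr ⟨hn, fun q hq hQ => ?_⟩)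
    exact ⟨rk (n+1) q, (Order.lt_succ _).trans_le (Ordinal.le_iSup (fun q : T.P (n+1) => Order.succ (rk (n+1) q)) q), hrk _ _ (hcon q hq hQ)⟩
  · intro x n0 hx hQ hS
    have key : ∀ α : Ordinal.{0}, ∀ n ≥ n0, x.1 n ∈ W n → rk n (x.1 n) = α → ∃ n ≥ n0, x.1 n ∈ B n := by
      intro α
      induction α using WellFoundedLT.induction with
      | ind α ih =>
        intro n hn hW hr
        by_cases hB : x.1 n ∈ B n
        · exact ⟨n, hn, hB⟩
        · subst hr
          by_cases ha : n % 2 = att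
          · have := hS n hn ha hW hB
            have h3 := hs n (x.1 n) hW hB ha
            dsimp only at this
            rw [← this] at h3
            exact ih _ h3.2.2 (n+1) (by omega) h3.2.1 rfl
          · have h3 := hdef n _ hW hB ha (x.1 (n+1)) (x.2 n) (hQ n hn ha)
            exact ih _ h3.2 (n+1) (by omega) h3.1 rfl
    exact key _ n0 le_rfl hx rfl

end Arena

end

/-! Part 3 -/
section
open Set
namespace Arena

section unravel
variable (T : Arena) (K : ℕ) (B : ∀ n, Set (T.P n))

inductive Opt : Type
  | none : Opt
  | one (y : T.Play) (m : ℕ) : Opt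
  | two (R : ∀ m, Set (T.P m)) : Opt

def uQ : ∀ n, Set (T.P n) := fun _ => Set.univ

def QI (Q : ∀ n, Set (T.P n)) (p : T.P (K+1)) : Prop :=
  p ∈ Q (K+1) ∧ ∀ m, K+1 ≤ m → ∀ q ∈ Q m,
    (m % 2 = 1 → ∀ r, T.par m r = q → r ∈ Q (m+1)) ∧ (m % 2 = 0 → ∃ r, T.par m r = q ∧ r ∈ Q (m+1))

def QII (Q R : ∀ n, Set (T.P n)) (p : T.P (K+2)) : Prop :=
  p ∈ R (K+2) ∧ ∀ m, K+2 ≤ m → ∀ q ∈ R m, q ∈ Q m ∧ q ∉ B m ∧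
    (m % 2 = 0 → ∀ r, T.par m r = q → r ∈ Q (m+1) → r ∈ R (m+1)) ∧
    (m % 2 = 1 → ∃ r, T.par m r = q ∧ r ∈ R (m+1))

def OptOK (Q : ∀ n, Set (T.P n)) (z : T.Play) (n : ℕ) : T.Opt → Prop
  | Opt.none => False
  | Opt.one y m => K+2 ≤ m ∧ y.1 m ∈ B m ∧ (∀ j, K+1 ≤ j → j ≤ m → y.1 j ∈ Q j) ∧
      ∀ j, j ≤ m → j ≤ n → z.1 j = y.1 j
  | Opt.two R => T.QII K B Q R (z.1 (K+2)) ∧ ∀ j, K+2 ≤ j → j ≤ n → z.1 j ∈ R j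

def LegalZ (n : ℕ) (Q : ∀ n, Set (T.P n)) (o : T.Opt) (z : T.Play) : Prop :=
  (n ≤ K → Q = T.uQ) ∧ (n ≤ K+1 → o = Opt.none) ∧ (K+1 ≤ n → T.QI K Q (z.1 (K+1))) ∧
  (K+2 ≤ n → T.OptOK K B Q z n o)

def Legal (n : ℕ) (p : T.P n) (Q : ∀ n, Set (T.P n)) (o : T.Opt) : Prop :=
  ∃ z : T.Play, z.1 n = p ∧ T.LegalZ K B n Q o z

variable {T K B}

theorem LegalZ.congr {n : ℕ} {Q : ∀ n, Set (T.P n)} {o : T.Opt} {z w : T.Play}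
    (h : T.LegalZ K B n Q o z) (hzw : z.1 n = w.1 n) : T.LegalZ K B n Q o w := by
  have h0 := T.play_agree z w hzw
  refine ⟨h.1, h.2.1, fun hn => ?_, fun hn => ?_⟩
  · rw [← h0 _ hn]; exact h.2.2.1 hn
  · have h1 := h.2.2.2 hn
    cases o with
    | none => exact h1
    | one y m => exact ⟨h1.1, h1.2.1, h1.2.2.1, fun j hj hjn => by rw [← h0 j hjn]; exact h1.2.2.2 j hj hjn⟩
    | two R =>
      refine ⟨?_, fun j hj hjn => by rw [← h0 j hjn]; exact h1.2 j hj hjn⟩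
      rw [← h0 _ hn]; exact h1.1

theorem Legal.z {n : ℕ} {Q : ∀ n, Set (T.P n)} {o : T.Opt} {z : T.Play}
    (h : T.Legal K B n (z.1 n) Q o) : T.LegalZ K B n Q o z := by
  obtain ⟨w, hw, h⟩ := h
  exact h.congr hw

variable (T K)
open Classical in
noncomputable def cQ (n : ℕ) (Q : ∀ n, Set (T.P n)) : ∀ n, Set (T.P n) := if n ≤ K then T.uQ else Q
open Classical in
noncomputable def cO (n : ℕ) (o : T.Opt) : T.Opt := if n ≤ K+1 then Opt.none else o
variable {T K}

theorem LegalZ.down {n : ℕ} {Q : ∀ n, Set (T.P n)} {o : T.Opt} {z : T.Play}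
    (h : T.LegalZ K B (n+1) Q o z) : T.LegalZ K B n (T.cQ K n Q) (T.cO K n o) z := by
  refine ⟨fun h => by simp [cQ, h], fun h => by simp [cO, h], fun hn => ?_, fun hn => ?_⟩
  · rw [cQ, if_neg (by omega)]; exact h.2.2.1 (by omega)
  · rw [cQ, if_neg (by omega), cO, if_neg (by omega)]
    have h1 := h.2.2.2 (by omega)
    cases o with
    | none => exact h1
    | one y m => exact ⟨h1.1, h1.2.1, h1.2.2.1, fun j hj hjn => h1.2.2.2 j hj (by omega)⟩
    | two R => exact ⟨h1.1, fun j hj hjn => h1.2 j hj (by omega)⟩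

/-- play through a node with a prescribed child -/
theorem exists_ext (z : T.Play) (n : ℕ) (q : T.P (n+1)) (hq : T.par n q = z.1 n) :
    ∃ w : T.Play, w.1 (n+1) = q ∧ w.1 n = z.1 n := by
  refine ⟨T.thru q, T.thru_spec q, ?_⟩
  rw [← (T.thru q).2 n, T.thru_spec, hq]

variable (T K B)

theorem legal_ne (hK : K % 2 = 0) (n : ℕ) (Q : ∀ n, Set (T.P n)) (o : T.Opt) (z : T.Play)
    (h : T.LegalZ K B n Q o z) : ∃ (w : T.Play) (Q' : ∀ n, Set (T.P n)) (o' : T.Opt),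
      w.1 n = z.1 n ∧ T.LegalZ K B (n+1) Q' o' w ∧ T.cQ K n Q' = Q ∧ T.cO K n o' = o := by
  rcases Nat.lt_or_ge n K with hn | hn
  · refine ⟨z, T.uQ, Opt.none, rfl, ⟨fun _ => rfl, fun _ => rfl, fun _ => by omega, fun _ => by omega⟩, ?_, ?_⟩
    · rw [cQ, if_pos (by omega), h.1 (by omega)]
    · rw [cO, if_pos (by omega), h.2.1 (by omega)]
  rcases Nat.eq_or_lt_of_le hn with rfl | hn
  · refine ⟨z, T.uQ, Opt.none, rfl, ⟨fun _ => rfl, fun _ => rfl, fun _ => ?_, fun _ => by omega⟩, ?_, ?_⟩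
    · refine ⟨trivial, fun m hm q hq => ⟨fun _ _ _ => trivial, fun _ => ?_⟩⟩
      obtain ⟨r, hr⟩ := T.ne m q
      exact ⟨r, hr, trivial⟩
    · rw [cQ, if_pos (by omega), h.1 (by omega)]
    · rw [cO, if_pos (by omega), h.2.1 (by omega)]
  have hq := h.2.2.1 hn
  rcases Nat.eq_or_lt_of_le hn with rfl | hn
  · by_cases hy : ∃ (y : T.Play) (m : ℕ), y.1 (K+1) = z.1 (K+1) ∧ K+2 ≤ m ∧ y.1 m ∈ B m ∧ ∀ j, K+1 ≤ j → j ≤ m → y.1 j ∈ Q j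
    · obtain ⟨y, m, h1, h2, h3, h4⟩ := hy
      refine ⟨y, Q, Opt.one y m, h1, ⟨fun _ => by omega, fun _ => by omega, fun _ => h1 ▸ hq, fun _ => ⟨h2, h3, h4, fun _ _ _ => rfl⟩⟩, ?_, ?_⟩
      · rw [cQ, if_neg (by omega)]
      · rw [cO, if_pos (by omega), h.2.1 (by omega)]
    · refine ⟨z, Q, Opt.two (fun m => {q | ∃ y : T.Play, y.1 m = q ∧ y.1 (K+1) = z.1 (K+1) ∧ ∀ j, K+1 ≤ j → j ≤ m → y.1 j ∈ Q j}), rfl, ⟨fun _ => by omega, fun _ => by omega, fun _ => hq, fun _ => ?_⟩, ?_, ?_⟩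
      · have e2 : ∀ j, K+1 ≤ j → j ≤ K+2 → z.1 j ∈ Q j := by
          intro j hj hj2
          rcases Nat.eq_or_lt_of_le hj with rfl | hj3
          · exact hq.1
          · obtain rfl : j = K+2 := by omega
            exact (hq.2 (K+1) le_rfl _ hq.1).1 (by omega) _ (z.2 (K+1))
        refine ⟨⟨⟨z, rfl, rfl, e2⟩, ?_⟩, ?_⟩
        · rintro m hm _ ⟨y, rfl, hy1, hy2⟩
          have ext : ∀ r, T.par m r = y.1 m → r ∈ Q (m+1) → ∃ y' : T.Play, y'.1 (m+1) = r ∧ y'.1 (K+1) = z.1 (K+1) ∧ ∀ j, K+1 ≤ j → j ≤ m+1 → y'.1 j ∈ Q j := by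
            intro r hr hQ
            obtain ⟨w, hw1, hw2⟩ := exists_ext y m r hr
            have h5 := T.play_agree w y hw2
            refine ⟨w, hw1, by rw [h5 _ (by omega)]; exact hy1, fun j hj hjm => ?_⟩
            rcases Nat.eq_or_lt_of_le hjm with rfl | hjm
            · rw [hw1]; exact hQ
            · rw [h5 j (by omega)]; exact hy2 j hj (by omega)
          refine ⟨hy2 m (by omega) le_rfl, ?_, ?_, ?_⟩
          · intro hB
            exact hy ⟨y, m, hy1, hm, hB, hy2⟩
          · intro _ r hr hQ
            exact ext r hr hQ
          · intro hm2
            obtain ⟨r, hr⟩ := T.ne m (y.1 m)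
            exact ⟨r, hr, ext r hr ((hq.2 m (by omega) _ (hy2 m (by omega) le_rfl)).1 hm2 r hr)⟩
        · intro j hj hj2
          obtain rfl : j = K+2 := by omega
          exact ⟨z, rfl, rfl, e2⟩
      · rw [cQ, if_neg (by omega)]
      · rw [cO, if_pos (by omega), h.2.1 (by omega)]
  · have ho := h.2.2.2 hn
    have main : ∃ w : T.Play, w.1 n = z.1 n ∧ T.LegalZ K B (n+1) Q o w := by
      cases o with
      | none => exact ho.elim
      | one y m =>
        rcases Nat.lt_or_ge n m with hm | hm
        · have e : y.1 n = z.1 n := (ho.2.2.2 n hm.le le_rfl).symm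
          refine ⟨y, e, fun _ => by omega, fun _ => by omega, fun _ => ?_, fun _ => ⟨ho.1, ho.2.1, ho.2.2.1, fun _ _ _ => rfl⟩⟩
          rw [T.play_agree y z e _ (by omega)]; exact hq
        · exact ⟨z, rfl, fun _ => by omega, fun _ => by omega, fun _ => hq, fun _ => ⟨ho.1, ho.2.1, ho.2.2.1, fun j hj _ => ho.2.2.2 j hj (by omega)⟩⟩
      | two R =>
        have h1 := ho.2 n hn le_rfl
        have h2 := ho.1.2 n hn _ h1
        have : ∃ r, T.par n r = z.1 n ∧ r ∈ R (n+1) := by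
          rcases Nat.mod_two_eq_zero_or_one n with h3 | h3
          · obtain ⟨r, hr, hrQ⟩ := (hq.2 n (by omega) _ h2.1).2 h3
            exact ⟨r, hr, h2.2.2.1 h3 r hr hrQ⟩
          · exact h2.2.2.2 h3
        obtain ⟨r, hr, hR⟩ := this
        obtain ⟨w, hw1, hw2⟩ := exists_ext z n r hr
        have h5 := T.play_agree w z hw2
        refine ⟨w, hw2, fun _ => by omega, fun _ => by omega, fun _ => ?_, fun _ => ⟨?_, ?_⟩⟩
        · rw [h5 _ (by omega)]; exact hq
        · rw [h5 _ (by omega)]; exact ho.1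
        · intro j hj hj2
          rcases Nat.eq_or_lt_of_le hj2 with rfl | hj2
          · rw [hw1]; exact hR
          · rw [h5 _ (by omega)]; exact ho.2 j hj (by omega)
    obtain ⟨w, h1, h2⟩ := main
    refine ⟨w, Q, o, h1, h2, ?_, ?_⟩
    · rw [cQ, if_neg (by omega)]
    · rw [cO, if_neg (by omega)]

abbrev UP (n : ℕ) : Type := {t : T.P n × (∀ m, Set (T.P m)) × T.Opt // T.Legal K B n t.1 t.2.1 t.2.2}

noncomputable def upar (n : ℕ) (t : T.UP K B (n+1)) : T.UP K B n :=
  ⟨(T.par n t.1.1, T.cQ K n t.1.2.1, T.cO K n t.1.2.2), by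
    obtain ⟨z, hz, h⟩ := t.2
    exact ⟨z, by rw [← z.2 n, hz], h.down⟩⟩

@[reducible] noncomputable def unr (hK : K % 2 = 0) : Arena where
  P := T.UP K B
  par := T.upar K B
  ne n p := by
    obtain ⟨⟨p, Q, o⟩, z, hz, h⟩ := p
    dsimp only at hz h
    obtain ⟨w, Q', o', h1, h2, h3, h4⟩ := T.legal_ne K B hK n Q o z h
    refine ⟨⟨(w.1 (n+1), Q', o'), w, rfl, h2⟩, ?_⟩
    apply Subtype.ext
    simp only [upar, w.2, h1, h3, h4, hz]

noncomputable def unrH (hK : K % 2 = 0) : Hom (T.unr K B hK) T := ⟨fun n t => t.1.1, fun n t => rfl⟩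

/-- lifting plays -/
noncomputable def lp (hK : K % 2 = 0) (x : T.Play) (Q : ∀ n, Set (T.P n)) (o : T.Opt) (h1 : T.QI K Q (x.1 (K+1)))
    (h2 : ∀ n, K+2 ≤ n → T.OptOK K B Q x n o) : (T.unr K B hK).Play :=
  ⟨fun n => ⟨(x.1 n, T.cQ K n Q, T.cO K n o), x, rfl, fun h => by simp [cQ, h], fun h => by simp [cO, h], fun h => by
      rw [cQ, if_neg (by omega)]; exact h1, fun h => by
      rw [cQ, if_neg (by omega), cO, if_neg (by omega)]; exact h2 n h⟩, fun n => by
    apply Subtype.ext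
    show (T.par n (x.1 (n+1)), T.cQ K n (T.cQ K (n+1) Q), T.cO K n (T.cO K (n+1) o)) = (x.1 n, T.cQ K n Q, T.cO K n o)
    rw [x.2]
    congr 2
    · unfold cQ; split_ifs <;> first | rfl | omega
    · unfold cO; split_ifs <;> first | rfl | omega⟩

end unravel
end Arena

end

/-! Part 4 -/
section
open Set
namespace Arena

section unravel
variable (T : Arena) (K : ℕ) (B : ∀ n, Set (T.P n)) (hK : K % 2 = 0)

theorem legal_early (n : ℕ) (hn : n ≤ K) (p : T.P n) : T.Legal K B n p T.uQ Opt.none :=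
  ⟨T.thru p, T.thru_spec p, fun _ => rfl, fun _ => rfl, fun _ => by omega, fun _ => by omega⟩

open Classical in
noncomputable def stp (σ : (T.unr K B hK).Strat) (n : ℕ) (p : T.P n) (Q : ∀ n, Set (T.P n)) (o : T.Opt) : T.Child p :=
  if h : T.Legal K B n p Q o then ⟨(σ n ⟨(p, Q, o), h⟩).1.1.1, congrArg (fun t : T.UP K B n => t.1.1) (σ n ⟨(p, Q, o), h⟩).2⟩
  else T.dflt n p

theorem stp_eq (σ : (T.unr K B hK).Strat) (n : ℕ) (p : T.P n) (Q : ∀ n, Set (T.P n)) (o : T.Opt) (h : T.Legal K B n p Q o) :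
    (T.stp K B hK σ n p Q o).1 = (σ n ⟨(p, Q, o), h⟩).1.1.1 := by
  unfold stp; rw [dif_pos h]

noncomputable def Q1f (σ : (T.unr K B hK).Strat) (p : T.P K) : ∀ n, Set (T.P n) :=
  (σ K ⟨(p, T.uQ, Opt.none), T.legal_early K B K le_rfl p⟩).1.1.2.1

open Classical in
noncomputable def ans (σ : (T.unr K B hK).Strat) (p : T.P (K+1)) (Q : ∀ n, Set (T.P n)) : T.Opt :=
  if h : T.Legal K B (K+1) p Q Opt.none then (σ (K+1) ⟨(p, Q, Opt.none), h⟩).1.1.2.2 else Opt.none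

noncomputable def att (Q : ∀ n, Set (T.P n)) (C : ∀ n, Set (T.P n)) (a : ℕ) : (∀ n, Set (T.P n)) × T.Strat :=
  (T.attractor Q C a).choose

open Classical in
noncomputable def core0 (n : ℕ) (p : T.P n) (Q1 : ∀ n, Set (T.P n)) (st : (∀ n, Set (T.P n)) → T.Opt → T.Child p) : T.Child p :=
  if n ≤ K then st T.uQ Opt.none
  else if h : ∃ m, K+2 ≤ m ∧ m ≤ n ∧ (T.thru p).1 m ∈ B m then
    st Q1 (Opt.one (T.thru ((T.thru p).1 (Nat.find h))) (Nat.find h))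
  else if p ∈ (T.att Q1 B 0).1 n then (T.att Q1 B 0).2 n p
  else st Q1 (Opt.two (fun m => Q1 m \ (T.att Q1 B 0).1 m))

def Uset (an : (∀ n, Set (T.P n)) → T.Opt) : ∀ n, Set (T.P n) :=
  fun m => {q | K+2 ≤ m ∧ ∃ w : (∀ n, Set (T.P n)) × T.Play, an w.1 = Opt.one w.2 m ∧ w.2.1 m = q}

noncomputable def Uwit (an : (∀ n, Set (T.P n)) → T.Opt) (m : ℕ) (q : T.P m) (h : q ∈ T.Uset K an m) :
    (∀ n, Set (T.P n)) × T.Play := h.2.choose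

open Classical in
noncomputable def core1 (n : ℕ) (p : T.P n) (an : (∀ n, Set (T.P n)) → T.Opt) (st : (∀ n, Set (T.P n)) → T.Opt → T.Child p) : T.Child p :=
  if n ≤ K then st T.uQ Opt.none
  else if h : ∃ m, K+2 ≤ m ∧ m ≤ n ∧ (T.thru p).1 m ∈ T.Uset K an m then
    st (T.Uwit K an _ _ (Nat.find_spec h).2.2).1 (Opt.one (T.Uwit K an _ _ (Nat.find_spec h).2.2).2 (Nat.find h))
  else if p ∈ (T.att T.uQ (T.Uset K an) 1).1 n then (T.att T.uQ (T.Uset K an) 1).2 n p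
  else st (fun m => ((T.att T.uQ (T.Uset K an) 1).1 m)ᶜ)
    (T.cO K n (an (fun m => ((T.att T.uQ (T.Uset K an) 1).1 m)ᶜ)))

open Classical in
noncomputable def uphi (b : ℕ) (σ : (T.unr K B hK).Strat) : T.Strat := fun n p =>
  if b = 0 then T.core0 K B n p (T.Q1f K B hK σ ((T.thru p).1 K)) (T.stp K B hK σ n p)
  else T.core1 K n p (T.ans K B hK σ ((T.thru p).1 (K+1))) (T.stp K B hK σ n p)

theorem stp_congr (σ σ' : (T.unr K B hK).Strat) (n : ℕ) (h : σ n = σ' n) (p : T.P n) :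
    T.stp K B hK σ n p = T.stp K B hK σ' n p := by
  funext Q o
  by_cases h' : T.Legal K B n p Q o
  · apply Subtype.ext
    rw [stp_eq _ _ _ _ _ _ _ _ _ h', stp_eq _ _ _ _ _ _ _ _ _ h', h]
  · unfold stp; rw [dif_neg h', dif_neg h']

theorem uphi_causal (b : ℕ) (s s' : (T.unr K B hK).Strat) (n : ℕ) (h : ∀ m ≤ n, s m = s' m) :
    T.uphi K B hK b s n = T.uphi K B hK b s' n := by
  funext p
  unfold uphi
  rw [T.stp_congr K B hK s s' n (h n le_rfl)]
  split_ifs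
  · rcases Nat.lt_or_ge K n with hn | hn
    · have : T.Q1f K B hK s = T.Q1f K B hK s' := by
        funext q; unfold Q1f; rw [h K hn.le]
      rw [this]
    · unfold core0; rw [if_pos hn, if_pos hn]
  · rcases Nat.lt_or_ge K n with hn | hn
    · have : T.ans K B hK s = T.ans K B hK s' := by
        funext q; unfold ans; rw [h (K+1) hn]
      rw [this]
    · unfold core1; rw [if_pos hn, if_pos hn]

theorem uphi_early (b : ℕ) (s : (T.unr K B hK).Strat) (n : ℕ) (h : n ≤ K) (p : T.P n) :
    T.uphi K B hK b s n p = T.stp K B hK s n p T.uQ Opt.none := by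
  unfold uphi core0 core1
  split_ifs <;> rfl

variable {T K B hK}

theorem up_early {n : ℕ} (hn : n ≤ K) (t : T.UP K B n) : t.1 = (t.1.1, T.uQ, Opt.none) := by
  obtain ⟨⟨p, Q, o⟩, z, hz, h⟩ := t
  change T.LegalZ K B n Q o z at h
  show (p, Q, o) = (p, T.uQ, Opt.none)
  rw [h.1 hn, h.2.1 (by omega)]

theorem uext {n : ℕ} (t t' : T.UP K B (n+1)) (h1 : t.1.1 = t'.1.1) (h2 : T.upar K B n t = T.upar K B n t')
    (h3 : n = K → t.1.2.1 = t'.1.2.1) (h4 : n = K+1 → t.1.2.2 = t'.1.2.2) : t = t' := by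
  obtain ⟨⟨p, Q, o⟩, z, hz, h⟩ := t
  obtain ⟨⟨p', Q', o'⟩, z', hz', h'⟩ := t'
  change T.LegalZ K B _ Q o z at h
  change T.LegalZ K B _ Q' o' z' at h'
  have h5 := congrArg Subtype.val h2
  simp only [upar, Prod.mk.injEq] at h5
  dsimp only at h1 h3 h4
  apply Subtype.ext
  simp only [Prod.mk.injEq]
  refine ⟨h1, ?_, ?_⟩
  · rcases Nat.lt_or_ge n K with hn | hn
    · rw [h.1 hn, h'.1 hn]
    · by_cases hn' : n = K
      · exact h3 hn'
      · have := h5.2.1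
        rwa [cQ, cQ, if_neg (by omega), if_neg (by omega)] at this
  · rcases Nat.lt_or_ge n (K+1) with hn | hn
    · rw [h.2.1 hn, h'.2.1 hn]
    · by_cases hn' : n = K+1
      · exact h4 hn'
      · have := h5.2.2
        rwa [cO, cO, if_neg (by omega), if_neg (by omega)] at this

theorem lp_cons (b : ℕ) (σ : (T.unr K B hK).Strat) (x : T.Play) (Q : ∀ n, Set (T.P n)) (o : T.Opt) (h1 : T.QI K Q (x.1 (K+1)))
    (h2 : ∀ n, K+2 ≤ n → T.OptOK K B Q x n o)
    (e1 : ∀ n, n % 2 = b → x.1 (n+1) = (T.stp K B hK σ n (x.1 n) (T.cQ K n Q) (T.cO K n o)).1)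
    (e2 : K % 2 = b → T.Q1f K B hK σ (x.1 K) = Q)
    (e3 : (K + 1) % 2 = b → T.ans K B hK σ (x.1 (K+1)) Q = o) :
    (T.unr K B hK).Cons b σ (T.lp K B hK x Q o h1 h2) := by
  intro n hn
  have hL : ∀ n, T.Legal K B n (x.1 n) (T.cQ K n Q) (T.cO K n o) := fun n => ((T.lp K B hK x Q o h1 h2).1 n).2
  apply uext
  · refine (e1 n hn).trans ?_
    rw [T.stp_eq K B hK σ n _ _ _ (hL n)]
    rfl
  · exact ((T.lp K B hK x Q o h1 h2).2 n).trans (σ n ((T.lp K B hK x Q o h1 h2).1 n)).2.symm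
  · rintro rfl
    show T.cQ n (n+1) Q = _
    rw [cQ, if_neg (by omega)]
    refine (e2 hn).symm.trans ?_
    unfold Q1f
    refine congrArg (fun t : T.UP n B n => (σ n t).1.1.2.1) (Subtype.ext ?_)
    exact (up_early le_rfl ((T.lp n B hK x Q o h1 h2).1 n)).symm
  · rintro rfl
    show T.cO K (K+1+1) o = _
    rw [cO, if_neg (by omega)]
    refine (e3 hn).symm.trans ?_
    have e : T.cQ K (K+1) Q = Q := by rw [cQ, if_neg (by omega)]
    have e' : ∀ o, T.cO K (K+1) o = Opt.none := fun o => by rw [cO, if_pos (by omega)]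
    have := hL (K+1)
    rw [e, e'] at this
    unfold ans
    rw [dif_pos this]
    refine congrArg (fun t : T.UP K B (K+1) => (σ (K+1) t).1.1.2.2) (Subtype.ext ?_)
    show _ = (x.1 (K+1), T.cQ K (K+1) Q, T.cO K (K+1) _)
    rw [e, e']

theorem stp_legal (σ : (T.unr K B hK).Strat) (n : ℕ) (hn : K+2 ≤ n) (p : T.P n) (Q : ∀ n, Set (T.P n)) (o : T.Opt)
    (h : T.Legal K B n p Q o) : T.Legal K B (n+1) (T.stp K B hK σ n p Q o).1 Q o := by
  rw [T.stp_eq K B hK σ n _ _ _ h]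
  have h2 := congrArg Subtype.val (σ n ⟨(p, Q, o), h⟩).2
  have h3 := (σ n ⟨(p, Q, o), h⟩).1.2
  simp only [unr, upar, Prod.mk.injEq] at h2
  rw [cQ, cO, if_neg (by omega), if_neg (by omega)] at h2
  rwa [h2.2.1, h2.2.2] at h3

theorem stp_legal1 (σ : (T.unr K B hK).Strat) (p : T.P (K+1)) (Q : ∀ n, Set (T.P n)) 
    (h : T.Legal K B (K+1) p Q Opt.none) : T.Legal K B (K+2) (T.stp K B hK σ (K+1) p Q Opt.none).1 Q (T.ans K B hK σ p Q) := by
  rw [T.stp_eq K B hK σ _ _ _ _ h]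
  unfold ans
  rw [dif_pos h]
  have h2 := congrArg Subtype.val (σ (K+1) ⟨(p, Q, Opt.none), h⟩).2
  have h3 := (σ (K+1) ⟨(p, Q, Opt.none), h⟩).1.2
  simp only [unr, upar, Prod.mk.injEq] at h2
  rw [cQ, if_neg (by omega)] at h2
  rwa [h2.2.1] at h3

theorem stp_legal0 (σ : (T.unr K B hK).Strat) (p : T.P K) :
    T.Legal K B (K+1) (T.stp K B hK σ K p T.uQ Opt.none).1 (T.Q1f K B hK σ p) Opt.none := by
  rw [T.stp_eq K B hK σ _ _ _ _ (T.legal_early K B K le_rfl p)]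
  unfold Q1f
  have h3 := (σ K ⟨(p, T.uQ, Opt.none), T.legal_early K B K le_rfl p⟩).1.2
  have h4 := h3
  obtain ⟨z, hz, hh⟩ := h4
  have := hh.2.1 le_rfl
  rwa [this] at h3

theorem one_uniq (σ : (T.unr K B hK).Strat) (n m : ℕ) (hn : K+2 ≤ n) (hm : n < m) (p : T.P n) (Q : ∀ n, Set (T.P n)) (y : T.Play)
    (h : T.Legal K B n p Q (Opt.one y m)) : (T.stp K B hK σ n p Q (Opt.one y m)).1 = y.1 (n+1) := by
  obtain ⟨z, hz, h2⟩ := stp_legal (hK := hK) σ n hn p Q _ h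
  rw [← hz]
  exact (h2.2.2.2 (by omega)).2.2.2 (n+1) hm le_rfl

end unravel
end Arena

end

/-! Part 5 -/
section
open Set
namespace Arena

section unravel
variable {T : Arena} {K : ℕ} {B : ∀ n, Set (T.P n)} {hK : K % 2 = 0}

theorem att_spec (Q C : ∀ n, Set (T.P n)) (a : ℕ) : 
      (∀ n p, p ∈ C n → p ∈ (T.att Q C a).1 n) ∧
      (∀ n p, p ∈ (T.att Q C a).1 n → p ∉ C n → n % 2 = a → ((T.att Q C a).2 n p).1 ∈ Q (n+1) ∧ ((T.att Q C a).2 n p).1 ∈ (T.att Q C a).1 (n+1)) ∧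
      (∀ n p, p ∈ (T.att Q C a).1 n → p ∉ C n → n % 2 ≠ a → ∀ q, T.par n q = p → q ∈ Q (n+1) → q ∈ (T.att Q C a).1 (n+1)) ∧
      (∀ n p, p ∉ (T.att Q C a).1 n → n % 2 = a → ∀ q, T.par n q = p → q ∈ Q (n+1) → q ∉ (T.att Q C a).1 (n+1)) ∧
      (∀ n p, p ∉ (T.att Q C a).1 n → n % 2 ≠ a → ∃ q, T.par n q = p ∧ q ∈ Q (n+1) ∧ q ∉ (T.att Q C a).1 (n+1)) ∧
      (∀ (x : T.Play) n0, x.1 n0 ∈ (T.att Q C a).1 n0 →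
        (∀ n ≥ n0, n % 2 ≠ a → x.1 (n+1) ∈ Q (n+1)) →
        (∀ n ≥ n0, n % 2 = a → x.1 n ∈ (T.att Q C a).1 n → x.1 n ∉ C n → x.1 (n+1) = ((T.att Q C a).2 n (x.1 n)).1) →
        ∃ n ≥ n0, x.1 n ∈ C n) := (T.attractor Q C a).choose_spec

theorem lp_map (x : T.Play) (Q : ∀ n, Set (T.P n)) (o : T.Opt) (h1 : T.QI K Q (x.1 (K+1)))
    (h2 : ∀ n, K+2 ≤ n → T.OptOK K B Q x n o) : (T.unrH K B hK).map (T.lp K B hK x Q o h1 h2) = x := rfl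

theorem cQ_big {n : ℕ} (h : K+1 ≤ n) (Q : ∀ n, Set (T.P n)) : T.cQ K n Q = Q := by rw [cQ, if_neg (by omega)]
theorem cQ_small {n : ℕ} (h : n ≤ K) (Q : ∀ n, Set (T.P n)) : T.cQ K n Q = T.uQ := by rw [cQ, if_pos h]
theorem cO_big {n : ℕ} (h : K+2 ≤ n) (o : T.Opt) : T.cO K n o = o := by rw [cO, if_neg (by omega)]
theorem cO_small {n : ℕ} (h : n ≤ K+1) (o : T.Opt) : T.cO K n o = Opt.none := by rw [cO, if_pos h]

theorem lift0 (σ : (T.unr K B hK).Strat) (x : T.Play) (hx : T.Cons 0 (T.uphi K B hK 0 σ) x) :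
    ∃ x', (T.unr K B hK).Cons 0 σ x' ∧ (T.unrH K B hK).map x' = x := by
  classical
  have hearly : ∀ n, n % 2 = 0 → n ≤ K → x.1 (n+1) = (T.stp K B hK σ n (x.1 n) T.uQ Opt.none).1 := by
    intro n hn hnK
    rw [hx n hn, uphi_early _ _ _ _ _ _ _ hnK]
  set Q1 := T.Q1f K B hK σ (x.1 K) with hQ1
  have hlate : ∀ n, n % 2 = 0 → K < n → x.1 (n+1) = (T.core0 K B n (x.1 n) Q1 (T.stp K B hK σ n (x.1 n))).1 := by
    intro n hn hnK
    rw [hx n hn]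
    unfold uphi
    rw [if_pos rfl, T.thru_agree x n K hnK.le]
  have hL1 : T.Legal K B (K+1) (x.1 (K+1)) Q1 Opt.none := by
    rw [hearly K hK le_rfl]; exact stp_legal0 σ (x.1 K)
  have hQI : T.QI K Q1 (x.1 (K+1)) := hL1.z.2.2.1 le_rfl
  obtain ⟨a1, a2, a3, a4, a5, a6⟩ := att_spec Q1 B 0
  set A := T.att Q1 B 0 with hA
  set R : ∀ n, Set (T.P n) := fun m => Q1 m \ A.1 m with hR
  -- the three regimes
  have hit : ∀ n, n % 2 = 0 → ∀ m, K+2 ≤ m → m ≤ n → x.1 m ∈ B m → (∀ i, K+2 ≤ i → i < m → x.1 i ∉ B i) →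
      x.1 (n+1) = (T.stp K B hK σ n (x.1 n) Q1 (Opt.one (T.thru (x.1 m)) m)).1 := by
    intro n hn m hm hmn hB hlt
    have hex : ∃ m, K+2 ≤ m ∧ m ≤ n ∧ (T.thru (x.1 n)).1 m ∈ B m :=
      ⟨m, hm, hmn, by rw [T.thru_agree x n m hmn]; exact hB⟩
    have hf : Nat.find hex = m := by
      rw [Nat.find_eq_iff]
      refine ⟨⟨hm, hmn, by rw [T.thru_agree x n m hmn]; exact hB⟩, fun i hi ⟨h1, h2, h3⟩ => ?_⟩
      rw [T.thru_agree x n i h2] at h3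
      exact hlt i h1 hi h3
    rw [hlate n hn (by omega)]
    unfold core0
    rw [if_neg (by omega), dif_pos hex, hf, T.thru_agree x n m hmn]
  have nohit : ∀ n, n % 2 = 0 → K+2 ≤ n → (∀ i, K+2 ≤ i → i ≤ n → x.1 i ∉ B i) →
      x.1 (n+1) = (if x.1 n ∈ A.1 n then A.2 n (x.1 n) else T.stp K B hK σ n (x.1 n) Q1 (Opt.two R)).1 := by
    intro n hn hnK hlt
    have hex : ¬ ∃ m, K+2 ≤ m ∧ m ≤ n ∧ (T.thru (x.1 n)).1 m ∈ B m := by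
      rintro ⟨m, h1, h2, h3⟩
      rw [T.thru_agree x n m h2] at h3
      exact hlt m h1 h2 h3
    rw [hlate n hn (by omega)]
    unfold core0
    rw [if_neg (by omega), dif_neg hex]
  have hQII : ∀ r, r ∈ R (K+2) → T.QII K B Q1 R r := by
    intro r hr
    refine ⟨hr, fun m hm q hq => ⟨hq.1, fun h => hq.2 (a1 _ _ h), fun h2 r hr hQ => ⟨hQ, a4 m q hq.2 h2 r hr hQ⟩, fun h2 => ?_⟩⟩
    obtain ⟨r, h3, h4, h5⟩ := a5 m q hq.2 (by omega)
    exact ⟨r, h3, h4, h5⟩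
  have two_legal : ∀ n, K+2 ≤ n → (∀ i, K+2 ≤ i → i ≤ n → x.1 i ∈ R i) → T.LegalZ K B n Q1 (Opt.two R) x := by
    intro n hn h
    exact ⟨fun _ => by omega, fun _ => by omega, fun _ => hQI, fun _ => ⟨hQII _ (h _ le_rfl hn), h⟩⟩
  have claim : ∀ d, (∀ i, K+2 ≤ i → i < K+2+d → x.1 i ∉ B i) → x.1 (K+2+d) ∈ Q1 (K+2+d) ∧
      (x.1 (K+2+d) ∉ A.1 (K+2+d) → ∀ i, K+2 ≤ i → i ≤ K+2+d → x.1 i ∈ R i) := by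
    intro d
    induction d with
    | zero =>
      intro _
      have : x.1 (K+2) ∈ Q1 (K+2) := (hQI.2 (K+1) le_rfl _ hQI.1).1 (by omega) _ (x.2 (K+1))
      refine ⟨this, fun h i h1 h2 => ?_⟩
      obtain rfl : i = K+2 := by omega
      exact ⟨this, h⟩
    | succ d ih =>
      intro hnb
      obtain ⟨i1, i2⟩ := ih (fun i h1 h2 => hnb i h1 (by omega))
      set j := K+2+d with hj
      have hjs : K+2+(d+1) = j+1 := by omega
      rw [hjs]
      have hext : (x.1 (j+1) ∈ Q1 (j+1)) → (x.1 (j+1) ∉ A.1 (j+1) → x.1 j ∉ A.1 j) → x.1 (j+1) ∈ Q1 (j+1) ∧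
      (x.1 (j+1) ∉ A.1 (j+1) → ∀ i, K+2 ≤ i → i ≤ j+1 → x.1 i ∈ R i) := by
        intro h1 h2
        refine ⟨h1, fun h3 i hi hi2 => ?_⟩
        rcases Nat.eq_or_lt_of_le hi2 with rfl | hi2
        · exact ⟨h1, h3⟩
        · exact i2 (h2 h3) i hi (by omega)
      rcases Nat.mod_two_eq_zero_or_one j with hj2 | hj2
      · have hn := nohit j hj2 (by omega) (fun i h1 h2 => hnb i h1 (by omega))
        by_cases hW : x.1 j ∈ A.1 j
        · rw [if_pos hW] at hn
          have := a2 j _ hW (hnb j (by omega) (by omega)) hj2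
          rw [← hn] at this
          exact hext this.1 (fun h => absurd this.2 h)
        · rw [if_neg hW] at hn
          have h1 := stp_legal (hK := hK) σ j (by omega) (x.1 j) Q1 (Opt.two R) ⟨x, rfl, two_legal j (by omega) (i2 hW)⟩
          rw [← hn] at h1
          have h2 := (h1.z.2.2.2 (by omega)).2 (j+1) (by omega) le_rfl
          exact hext h2.1 (fun _ => hW)
      · have hq : x.1 (j+1) ∈ Q1 (j+1) := (hQI.2 j (by omega) _ i1).1 hj2 _ (x.2 j)
        refine hext hq (fun h h' => h ?_)
        exact a3 j _ h' (hnb j (by omega) (by omega)) (by omega) _ (x.2 j) hq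
  by_cases hh : ∃ m, K+2 ≤ m ∧ x.1 m ∈ B m
  · set m := Nat.find hh with hm
    obtain ⟨m1, m2⟩ := Nat.find_spec hh
    have m3 : ∀ i, K+2 ≤ i → i < m → x.1 i ∉ B i := fun i h1 h2 h3 => Nat.find_min hh h2 ⟨h1, h3⟩
    have hy : ∀ j, j ≤ m → (T.thru (x.1 m)).1 j = x.1 j := fun j hj => T.thru_agree x m j hj
    have hOK : ∀ n, K+2 ≤ n → T.OptOK K B Q1 x n (Opt.one (T.thru (x.1 m)) m) := by
      intro n hn
      refine ⟨m1, by rw [hy m le_rfl]; exact m2, fun j hj hjm => ?_, fun j hj _ => (hy j hj).symm⟩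
      rw [hy j hjm]
      rcases Nat.eq_or_lt_of_le hj with rfl | hj
      · exact hQI.1
      · obtain ⟨d, rfl⟩ := Nat.exists_eq_add_of_le hj
        exact (claim d (fun i h1 h2 => m3 i h1 (by omega))).1
    refine ⟨_, lp_cons 0 σ x Q1 _ hQI hOK ?_ (fun _ => rfl) (fun h => by omega), lp_map _ _ _ _ _⟩
    intro n hn
    rcases Nat.lt_or_ge K n with hnK | hnK
    · rw [cQ_big hnK, cO_big (by omega)]
      rcases Nat.lt_or_ge n m with hnm | hnm
      · rw [one_uniq σ n m (by omega) hnm]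
        · exact (hy _ hnm).symm
        · exact ⟨x, rfl, fun _ => by omega, fun _ => by omega, fun _ => hQI, fun _ => hOK n (by omega)⟩
      · exact hit n hn m m1 hnm m2 m3
    · rw [cQ_small hnK, cO_small (by omega)]
      exact hearly n hn hnK
  · have hnb : ∀ i, K+2 ≤ i → x.1 i ∉ B i := fun i h1 h2 => hh ⟨i, h1, h2⟩
    have hW : ∀ j, K+2 ≤ j → x.1 j ∉ A.1 j := by
      intro j hj hjW
      obtain ⟨n, hn, hB⟩ := a6 x j hjW (fun n hn hn2 => by
        obtain ⟨d, hd⟩ := Nat.exists_eq_add_of_le (show K+2 ≤ n+1 by omega)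
        rw [hd]; exact (claim d (fun i h1 h2 => hnb i h1)).1) (fun n hn hn2 hnW _ => by
        have := nohit n hn2 (by omega) (fun i h1 h2 => hnb i h1)
        rw [if_pos hnW] at this
        exact this)
      exact hnb n (by omega) hB
    have hR : ∀ i, K+2 ≤ i → x.1 i ∈ R i := by
      intro i hi
      obtain ⟨d, rfl⟩ := Nat.exists_eq_add_of_le hi
      exact (claim d (fun i h1 h2 => hnb i h1)).2 (hW _ hi) _ hi le_rfl
    have hOK : ∀ n, K+2 ≤ n → T.OptOK K B Q1 x n (Opt.two R) := fun n hn => ⟨hQII _ (hR _ le_rfl), fun j h1 _ => hR j h1⟩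
    refine ⟨_, lp_cons 0 σ x Q1 _ hQI hOK ?_ (fun _ => rfl) (fun h => by omega), lp_map _ _ _ _ _⟩
    intro n hn
    rcases Nat.lt_or_ge K n with hnK | hnK
    · rw [cQ_big hnK, cO_big (by omega)]
      have := nohit n hn (by omega) (fun i h1 h2 => hnb i h1)
      rw [if_neg (hW n (by omega))] at this
      exact this
    · rw [cQ_small hnK, cO_small (by omega)]
      exact hearly n hn hnK

theorem lift1 (σ : (T.unr K B hK).Strat) (x : T.Play) (hx : T.Cons 1 (T.uphi K B hK 1 σ) x) :
    ∃ x', (T.unr K B hK).Cons 1 σ x' ∧ (T.unrH K B hK).map x' = x := by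
  classical
  have hearly : ∀ n, n % 2 = 1 → n ≤ K → x.1 (n+1) = (T.stp K B hK σ n (x.1 n) T.uQ Opt.none).1 := by
    intro n hn hnK
    rw [hx n hn, uphi_early _ _ _ _ _ _ _ hnK]
  set an := T.ans K B hK σ (x.1 (K+1)) with han
  have hlate : ∀ n, n % 2 = 1 → K < n → x.1 (n+1) = (T.core1 K n (x.1 n) an (T.stp K B hK σ n (x.1 n))).1 := by
    intro n hn hnK
    rw [hx n hn]
    unfold uphi
    rw [if_neg (by omega), T.thru_agree x n (K+1) hnK]
  obtain ⟨a1, a2, a3, a4, a5, a6⟩ := att_spec T.uQ (T.Uset K an) 1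
  set A := T.att T.uQ (T.Uset K an) 1 with hA
  set Q1 : ∀ n, Set (T.P n) := fun m => (A.1 m)ᶜ with hQ1
  have nohit : ∀ n, n % 2 = 1 → K+1 ≤ n → (∀ i, K+2 ≤ i → i ≤ n → x.1 i ∉ T.Uset K an i) →
      x.1 (n+1) = (if x.1 n ∈ A.1 n then A.2 n (x.1 n) else T.stp K B hK σ n (x.1 n) Q1 (T.cO K n (an Q1))).1 := by
    intro n hn hnK hlt
    have hex : ¬ ∃ m, K+2 ≤ m ∧ m ≤ n ∧ (T.thru (x.1 n)).1 m ∈ T.Uset K an m := by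
      rintro ⟨m, h1, h2, h3⟩
      rw [T.thru_agree x n m h2] at h3
      exact hlt m h1 h2 h3
    rw [hlate n hn (by omega)]
    unfold core1
    rw [if_neg (by omega), dif_neg hex]
  have hansL : ∀ Q, an Q ≠ Opt.none → T.Legal K B (K+1) (x.1 (K+1)) Q Opt.none := by
    intro Q h
    by_contra h2
    apply h
    rw [han]; unfold ans; rw [dif_neg h2]
  by_cases hh : ∃ m, K+2 ≤ m ∧ x.1 m ∈ T.Uset K an m
  · set m := Nat.find hh with hm
    obtain ⟨m1, m2⟩ := Nat.find_spec hh
    have m3 : ∀ i, K+2 ≤ i → i < m → x.1 i ∉ T.Uset K an i := fun i h1 h2 h3 => Nat.find_min hh h2 ⟨h1, h3⟩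
    have hw : an (T.Uwit K an _ _ m2).1 = Opt.one (T.Uwit K an _ _ m2).2 m ∧ (T.Uwit K an _ _ m2).2.1 m = x.1 m := m2.2.choose_spec
    set Q := (T.Uwit K an _ _ m2).1 with hQ
    set y := (T.Uwit K an _ _ m2).2 with hy
    have hL := hansL Q (by rw [hw.1]; intro h; cases h)
    have hQI : T.QI K Q (x.1 (K+1)) := hL.z.2.2.1 le_rfl
    have h5 := stp_legal1 (hK := hK) σ (x.1 (K+1)) Q hL
    rw [← han, hw.1] at h5
    have hyx := T.play_agree y x hw.2
    have hf1 : (T.stp K B hK σ (K+1) (x.1 (K+1)) Q Opt.none).1 = x.1 (K+2) := by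
      obtain ⟨z, hz, h6⟩ := h5
      rw [← hz, (h6.2.2.2 le_rfl).2.2.2 (K+2) m1 le_rfl, hyx _ m1]
    rw [hf1] at h5
    have hOK : ∀ n, K+2 ≤ n → T.OptOK K B Q x n (Opt.one y m) := by
      intro n hn
      have := h5.z.2.2.2 le_rfl
      exact ⟨m1, this.2.1, this.2.2.1, fun j hj _ => (hyx j hj).symm⟩
    refine ⟨_, lp_cons 1 σ x Q _ hQI hOK ?_ (fun h => by omega) (fun _ => hw.1), lp_map _ _ _ _ _⟩
    intro n hn
    rcases Nat.lt_or_ge K n with hnK | hnK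
    · rw [cQ_big hnK]
      rcases Nat.eq_or_lt_of_le hnK with rfl | hnK2
      · rw [cO_small (by omega)]; exact hf1.symm
      rw [cO_big (by omega)]
      rcases Nat.lt_or_ge n m with hnm | hnm
      · rw [one_uniq σ n m (by omega) hnm]
        · exact (hyx _ hnm).symm
        · exact ⟨x, rfl, fun _ => by omega, fun _ => by omega, fun _ => hQI, fun _ => hOK n (by omega)⟩
      · have hex : ∃ m, K+2 ≤ m ∧ m ≤ n ∧ (T.thru (x.1 n)).1 m ∈ T.Uset K an m :=
          ⟨m, m1, hnm, by rw [T.thru_agree x n m hnm]; exact m2⟩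
        have hf : Nat.find hex = m := by
          rw [Nat.find_eq_iff]
          refine ⟨⟨m1, hnm, by rw [T.thru_agree x n m hnm]; exact m2⟩, fun i hi ⟨h1, h2, h3⟩ => ?_⟩
          rw [T.thru_agree x n i h2] at h3
          exact m3 i h1 hi h3
        rw [hlate n hn (by omega)]
        unfold core1
        rw [if_neg (by omega), dif_pos hex]
        have gen : ∀ (m' : ℕ) (q' : T.P m') (h' : q' ∈ T.Uset K an m'), m' = m → q' = x.1 m' →
          T.stp K B hK σ n (x.1 n) (T.Uwit K an m' q' h').1 (Opt.one (T.Uwit K an m' q' h').2 m') = 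
            T.stp K B hK σ n (x.1 n) Q (Opt.one y m) := by
          rintro m' q' h' rfl rfl
          rfl
        exact congrArg Subtype.val (gen _ _ _ hf (by rw [T.thru_agree]; exact (Nat.find_spec hex).2.1))
    · rw [cQ_small hnK, cO_small (by omega)]
      exact hearly n hn hnK
  · have hnb : ∀ i, K+2 ≤ i → x.1 i ∉ T.Uset K an i := fun i h1 h2 => hh ⟨i, h1, h2⟩
    have hW : ∀ j, K+1 ≤ j → x.1 j ∉ A.1 j := by
      intro j hj hjW
      obtain ⟨n, hn, hB⟩ := a6 x j hjW (fun n hn hn2 => trivial) (fun n hn hn2 hnW _ => by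
        have := nohit n hn2 (by omega) (fun i h1 h2 => hnb i h1)
        rw [if_pos hnW] at this
        exact this)
      exact hnb n hB.1 hB
    have hQI : T.QI K Q1 (x.1 (K+1)) := by
      refine ⟨hW _ le_rfl, fun m hm q hq => ⟨fun h2 r hr => a4 m q hq h2 r hr trivial, fun h2 => ?_⟩⟩
      obtain ⟨r, h3, _, h4⟩ := a5 m q hq (by omega)
      exact ⟨r, h3, h4⟩
    have hL : T.Legal K B (K+1) (x.1 (K+1)) Q1 Opt.none := ⟨x, rfl, fun _ => by omega, fun _ => rfl, fun _ => hQI, fun _ => by omega⟩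
    have h5 := stp_legal1 (hK := hK) σ (x.1 (K+1)) Q1 hL
    have e1 := nohit (K+1) (by omega) le_rfl (fun i h1 h2 => hnb i h1)
    rw [if_neg (hW _ le_rfl), cO_small le_rfl] at e1
    rw [← han, ← e1] at h5
    have h6 := h5.z.2.2.2 le_rfl
    cases hans : an Q1 with
    | none => rw [hans] at h6; exact h6.elim
    | one y m =>
      rw [hans] at h6
      exact absurd (a1 m (y.1 m) ⟨h6.1, (Q1, y), hans, rfl⟩) (h6.2.2.1 m (by have := h6.1; omega) le_rfl)
    | two R =>
      rw [hans] at h6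
      have hR : ∀ d i, K+2 ≤ i → i ≤ K+2+d → x.1 i ∈ R i := by
        intro d
        induction d with
        | zero => exact h6.2
        | succ d ih =>
          intro i hi hi2
          rcases Nat.lt_or_ge i (K+2+(d+1)) with hlt | hge
          · exact ih i hi (by omega)
          obtain ⟨j, rfl⟩ : ∃ j, i = j+1 := ⟨i-1, by omega⟩
          have hj := ih j (by omega) (by omega)
          rcases Nat.mod_two_eq_zero_or_one j with hj2 | hj2
          · exact (h6.1.2 j (by omega) _ hj).2.2.1 hj2 _ (x.2 j) (hW _ (by omega))
          · have e2 := nohit j hj2 (by omega) (fun i h1 h2 => hnb i h1)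
            rw [if_neg (hW _ (by omega)), cO_big (by omega), hans] at e2
            have h1 := stp_legal (hK := hK) σ j (by omega) (x.1 j) Q1 (Opt.two R) ⟨x, rfl,
              fun _ => by omega, fun _ => by omega, fun _ => hQI, fun _ => ⟨h6.1, fun l h1 h2 => ih l h1 (by omega)⟩⟩
            rw [← e2] at h1
            exact (h1.z.2.2.2 (by omega)).2 (j+1) (by omega) le_rfl
      have hOK : ∀ n, K+2 ≤ n → T.OptOK K B Q1 x n (Opt.two R) := fun n hn => ⟨h6.1, fun j h1 h2 => hR j j h1 (by omega)⟩
      refine ⟨_, lp_cons 1 σ x Q1 _ hQI hOK ?_ (fun h => by omega) (fun _ => hans), lp_map _ _ _ _ _⟩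
      intro n hn
      rcases Nat.lt_or_ge K n with hnK | hnK
      · rw [cQ_big hnK, ← hans]
        have := nohit n hn (by omega) (fun i h1 h2 => hnb i h1)
        rw [if_neg (hW n (by omega))] at this
        exact this
      · rw [cQ_small hnK, cO_small (by omega)]
        exact hearly n hn hnK

noncomputable def unrCov : Cov K (T.unr K B hK) T where
  toHom := T.unrH K B hK
  φ := T.uphi K B hK
  causal := T.uphi_causal K B hK
  lift b hb s x h := by
    interval_cases b
    · exact lift0 s x h
    · exact lift1 s x h
  bij n hn := by
    constructor
    · intro t t' h
      apply Subtype.ext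
      rw [up_early hn t, up_early hn t']
      have : t.1.1 = t'.1.1 := h
      rw [this]
    · intro p
      exact ⟨⟨(p, T.uQ, Opt.none), T.legal_early K B n hn p⟩, rfl⟩
  early b s n hn p := by
    rw [uphi_early _ _ _ _ _ _ _ hn.le]
    have : p = ⟨(p.1.1, T.uQ, Opt.none), T.legal_early K B n hn.le p.1.1⟩ := Subtype.ext (up_early hn.le p)
    rw [T.stp_eq K B hK s n _ _ _ (T.legal_early K B n hn.le _)]
    show _ = (s n p).1.1.1
    exact congrArg (fun t : T.UP K B n => (s n t).1.1.1) this.symm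

end unravel

def Cov.weaken {k l : ℕ} (h : k ≤ l) {A B : Arena} (c : Cov l A B) : Cov k A B where
  toHom := c.toHom
  φ := c.φ
  causal := c.causal
  lift := c.lift
  bij n hn := c.bij n (hn.trans h)
  early b s n hn := c.early b s n (hn.trans_le h)

theorem open_cov (k : ℕ) (T : Arena) (O : Set T.Play) (hO : T.Opn O) :
    ∃ (T' : Arena) (c : Cov k T' T), T'.Clop (c.toHom.map ⁻¹' O) := by
  let B : ∀ n, Set (T.P n) := fun n => {p | ∀ x : T.Play, x.1 n = p → x ∈ O}
  have hK : (2*k) % 2 = 0 := by omega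
  refine ⟨T.unr (2*k) B hK, (unrCov (B := B) (hK := hK)).weaken (by omega), ?_⟩
  have hleg : ∀ x : (T.unr (2*k) B hK).Play, ∀ n, T.LegalZ (2*k) B n (x.1 n).1.2.1 (x.1 n).1.2.2 ((T.unrH (2*k) B hK).map x) :=
    fun x n => Legal.z (z := (T.unrH (2*k) B hK).map x) (x.1 n).2
  have hcon : ∀ x : (T.unr (2*k) B hK).Play, ∀ d, (x.1 (2*k+2+d)).1.2.2 = (x.1 (2*k+2)).1.2.2 := by
    intro x d
    induction d with
    | zero => rfl
    | succ d ih =>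
      have := congrArg (fun t : T.UP (2*k) B (2*k+2+d) => t.1.2.2) (x.2 (2*k+2+d))
      have h2 : T.cO (2*k) (2*k+2+d) (x.1 (2*k+2+d+1)).1.2.2 = (x.1 (2*k+2+d)).1.2.2 := this
      rw [cO_big (by omega), ih] at h2
      exact h2
  have main : ∀ x : (T.unr (2*k) B hK).Play, x ∈ (T.unrH (2*k) B hK).map ⁻¹' O ↔ ∃ y m, (x.1 (2*k+2)).1.2.2 = Opt.one y m := by
    intro x
    set w := (T.unrH (2*k) B hK).map x with hw
    show w ∈ O ↔ _
    cases ho : (x.1 (2*k+2)).1.2.2 with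
    | none =>
      have := (hleg x (2*k+2)).2.2.2 le_rfl
      rw [ho] at this; exact this.elim
    | one y m =>
      refine ⟨fun _ => ⟨y, m, rfl⟩, fun _ => ?_⟩
      have h := (hleg x (2*k+2+m)).2.2.2 (by omega)
      rw [hcon, ho] at h
      exact h.2.1 w (h.2.2.2 m le_rfl (by omega))
    | two R =>
      refine ⟨fun h => ?_, fun ⟨y, m, h⟩ => by cases h⟩
      obtain ⟨n, hn⟩ := hO w h
      have h := (hleg x (2*k+2+n)).2.2.2 (by omega)
      rw [hcon, ho] at h
      refine absurd ?_ (h.1.2 _ (by omega) _ (h.2 (2*k+2+n) (by omega) le_rfl)).2.1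
      intro z hz
      exact hn z (T.play_agree z w hz n (by omega))
  intro x
  refine ⟨2*k+2, fun y hy => ?_⟩
  show x ∈ (T.unrH (2*k) B hK).map ⁻¹' O ↔ y ∈ (T.unrH (2*k) B hK).map ⁻¹' O
  rw [main, main, hy]

end Arena

end

/-! Part 6 -/
section
open Set
namespace Arena

def Det (T : Arena) (r : T.P 0) (X : Set T.Play) : Prop :=
  (∃ s, ∀ x : T.Play, x.1 0 = r → T.Cons 0 s x → x ∈ X) ∨ (∃ s, ∀ x : T.Play, x.1 0 = r → T.Cons 1 s x → x ∉ X)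

theorem clop_det (T : Arena) (r : T.P 0) (X : Set T.Play) (hX : T.Clop X) : T.Det r X := by
  classical
  let C : ∀ n, Set (T.P n) := fun n => {p | ∀ x : T.Play, x.1 n = p → x ∈ X}
  obtain ⟨a1, a2, a3, a4, a5, a6⟩ := att_spec T.uQ C 0
  set A := T.att T.uQ C 0
  by_cases hr : r ∈ A.1 0
  · refine Or.inl ⟨A.2, fun x hx hc => ?_⟩
    obtain ⟨n, _, hn⟩ := a6 x 0 (hx ▸ hr) (fun _ _ _ => trivial) (fun n _ hn _ _ => hc n hn)
    exact hn x rfl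
  · refine Or.inr ⟨fun n p => if h : p ∉ A.1 n ∧ n % 2 ≠ 0 then ⟨(a5 n p h.1 h.2).choose, (a5 n p h.1 h.2).choose_spec.1⟩ else T.dflt n p, fun x hx hc hxX => ?_⟩
    have hW : ∀ n, x.1 n ∉ A.1 n := by
      intro n
      induction n with
      | zero => rw [hx]; exact hr
      | succ n ih =>
        rcases Nat.mod_two_eq_zero_or_one n with h | h
        · exact a4 n _ ih h _ (x.2 n) trivial
        · have := hc n h
          have hh : x.1 n ∉ A.1 n ∧ n % 2 ≠ 0 := ⟨ih, by omega⟩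
          beta_reduce at this
          rw [dif_pos hh] at this
          rw [this]
          exact (a5 n _ ih (by omega)).choose_spec.2.2
    obtain ⟨n, hn⟩ := hX x
    exact hW n (a1 n _ (fun y hy => (hn y hy).1 hxX))

def Unr (T : Arena) (X : Set T.Play) : Prop :=
  ∀ (T' : Arena) (ρ : Hom T' T) (k : ℕ), ∃ (T'' : Arena) (c : Cov k T'' T'),
    T''.Clop (c.toHom.map ⁻¹' (ρ.map ⁻¹' X))

theorem Opn.preimage {T' T : Arena} (ρ : Hom T' T) {X : Set T.Play} (h : T.Opn X) : T'.Opn (ρ.map ⁻¹' X) := by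
  intro x hx
  obtain ⟨n, hn⟩ := h _ hx
  refine ⟨n, fun y hy => hn _ ?_⟩
  show ρ.f n (y.1 n) = ρ.f n (x.1 n)
  rw [hy]

theorem Clop.preimage {T' T : Arena} (ρ : Hom T' T) {X : Set T.Play} (h : T.Clop X) : T'.Clop (ρ.map ⁻¹' X) := by
  intro x
  obtain ⟨n, hn⟩ := h (ρ.map x)
  refine ⟨n, fun y hy => hn _ ?_⟩
  show ρ.f n (y.1 n) = ρ.f n (x.1 n)
  rw [hy]

theorem Unr.of_opn (T : Arena) (X : Set T.Play) (h : T.Opn X) : T.Unr X := 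
  fun T' ρ k => open_cov k T' _ (h.preimage ρ)

theorem Unr.compl {T : Arena} {X : Set T.Play} (h : T.Unr X) : T.Unr Xᶜ := by
  intro T' ρ k
  obtain ⟨T'', c, hc⟩ := h T' ρ k
  refine ⟨T'', c, fun x => ?_⟩
  obtain ⟨n, hn⟩ := hc x
  exact ⟨n, fun y hy => not_congr (hn y hy)⟩

theorem Unr.iUnion {T : Arena} {X : ℕ → Set T.Play} (h : ∀ i, T.Unr (X i)) : T.Unr (⋃ i, X i) := by
  intro T' ρ k
  choose N c hc using fun (i : ℕ) (A : Σ A : Arena, Hom A T) => h i A.1 A.2 (k+i)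
  let st : ℕ → Σ A : Arena, Hom A T := fun i => Nat.rec ⟨T', ρ⟩ (fun i A => ⟨N i A, A.2.comp (c i A).toHom⟩) i
  let L := lim k (fun i => (st i).1) (fun i => c i (st i))
  let lc : Cov k L T' := limCov k (fun i => (st i).1) (fun i => c i (st i))
  have hev : ∀ i (x : L.Play), (st i).2.map ((evH k (fun i => (st i).1) (fun i => c i (st i)) i).map x) = ρ.map (lc.toHom.map x) := by
    intro i x
    induction i with
    | zero => rfl
    | succ i ih =>
      rw [← ih]
      apply Subtype.ext
      funext n
      show (st i).2.f n ((c i (st i)).f n ((x.1 n).1 (i+1))) = (st i).2.f n ((x.1 n).1 i)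
      rw [(x.1 n).2 i]
  have hclop : ∀ i, L.Clop (lc.toHom.map ⁻¹' (ρ.map ⁻¹' (X i))) := by
    intro i
    have := (hc i (st i)).preimage (evH k (fun i => (st i).1) (fun i => c i (st i)) (i+1))
    convert this using 1
    ext x
    show ρ.map (lc.toHom.map x) ∈ X i ↔ _
    rw [← hev (i+1) x]
    rfl
  have hop : L.Opn (lc.toHom.map ⁻¹' (ρ.map ⁻¹' (⋃ i, X i))) := by
    intro x hx
    obtain ⟨i, hi⟩ := mem_iUnion.1 hx
    obtain ⟨n, hn⟩ := hclop i x
    exact ⟨n, fun y hy => mem_iUnion.2 ⟨i, (hn y hy).1 hi⟩⟩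
  obtain ⟨T'', d, hd⟩ := open_cov k L _ hop
  exact ⟨T'', lc.comp d, hd⟩

theorem Unr.det {T : Arena} {X : Set T.Play} (h : T.Unr X) (r : T.P 0) : T.Det r X := by
  obtain ⟨T'', c, hc⟩ := h T (Hom.id T) 0
  obtain ⟨r', hr'⟩ := (c.bij 0 le_rfl).2 r
  have key : ∀ b < 2, ∀ s (x : T.Play), x.1 0 = r → T.Cons b (c.φ b s) x → ∃ x', x'.1 0 = r' ∧ T''.Cons b s x' ∧ c.toHom.map x' = x := by
    intro b hb s x hx hcx
    obtain ⟨x', h1, h2⟩ := c.lift b hb s x hcx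
    refine ⟨x', (c.bij 0 le_rfl).1 ?_, h1, h2⟩
    rw [hr', ← hx, ← h2]; rfl
  rcases clop_det T'' r' _ hc with ⟨s, hs⟩ | ⟨s, hs⟩
  · refine Or.inl ⟨c.φ 0 s, fun x hx hcx => ?_⟩
    obtain ⟨x', h1, h2, rfl⟩ := key 0 (by omega) s x hx hcx
    exact hs x' h1 h2
  · refine Or.inr ⟨c.φ 1 s, fun x hx hcx => ?_⟩
    obtain ⟨x', h1, h2, rfl⟩ := key 1 (by omega) s x hx hcx
    exact hs x' h1 h2

/-! games on the naturals -/
def NN : Arena where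
  P n := Fin n → ℕ
  par n q := fun i => q i.castSucc
  ne n p := ⟨Fin.snoc p 0, by funext i; simp [Fin.snoc]⟩

def nseq (x : NN.Play) : ℕ → ℕ := fun n => (x.1 (n+1) : Fin (n+1) → ℕ) (Fin.last n)

theorem seq_spec (x : NN.Play) (n : ℕ) : (x.1 n : Fin n → ℕ) = fun i : Fin n => nseq x i := by
  induction n with
  | zero => funext i; exact i.elim0
  | succ n ih =>
    funext i
    refine Fin.lastCases ?_ (fun i => ?_) i
    · rfl
    · have := congrFun (x.2 n) i
      rw [ih] at this
      exact this

open MeasureTheory in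
theorem unr_nn (Y : Set (ℕ → ℕ)) (hY : MeasurableSet Y) : NN.Unr (nseq ⁻¹' Y) := by
  have hY' : @MeasurableSet (ℕ → ℕ) (borel (ℕ → ℕ)) Y := by
    rwa [← BorelSpace.measurable_eq (α := ℕ → ℕ)]
  refine MeasurableSpace.generateFrom_induction {s : Set (ℕ → ℕ) | IsOpen s} (fun Y _ => NN.Unr (nseq ⁻¹' Y)) ?_ ?_ ?_ ?_ Y hY'
  · intro O hO _
    apply Unr.of_opn
    intro x hx
    obtain ⟨n, hn⟩ : ∃ n, PiNat.cylinder (nseq x) n ⊆ O := by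
      obtain ⟨s, ⟨y, n, rfl⟩, h1, h2⟩ := (PiNat.isTopologicalBasis_cylinders (fun _ => ℕ)).exists_subset_of_mem_open hx hO
      refine ⟨n, ?_⟩
      rw [PiNat.mem_cylinder_iff_eq.1 h1]; exact h2
    refine ⟨n, fun y hy => hn ?_⟩
    intro i hi
    have := (seq_spec y n).symm.trans (hy.trans (seq_spec x n))
    exact congrFun this ⟨i, hi⟩
  · have : NN.Opn (∅ : Set NN.Play) := fun x hx => hx.elim
    exact Unr.of_opn _ _ this
  · intro t _ h; exact h.compl
  · intro f _ h
    rw [preimage_iUnion]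
    exact Unr.iUnion h

/-- combined strategy -/
noncomputable def cs (b : ℕ) (s : NN.Strat) (z : ℕ → ℕ) : NN.Strat := fun n p =>
  if n % 2 = b then s n p else ⟨(Fin.snoc p (z (n/2)) : Fin (n+1) → ℕ), by funext i; simp [NN, Fin.snoc]⟩

def root : NN.P 0 := (fun i : Fin 0 => i.elim0 : Fin 0 → ℕ)

noncomputable def csPlay (b : ℕ) (s : NN.Strat) (z : ℕ → ℕ) : NN.Play := NN.ofStrat (cs b s z) root

theorem csPlay_cons (b : ℕ) (s : NN.Strat) (z : ℕ → ℕ) : NN.Cons b s (csPlay b s z) := by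
  intro n hn
  show (cs b s z n ((csPlay b s z).1 n)).1 = _
  rw [cs, if_pos hn]

theorem csPlay_seq (b : ℕ) (s : NN.Strat) (z : ℕ → ℕ) (n : ℕ) (hn : n % 2 ≠ b) : nseq (csPlay b s z) n = z (n/2) := by
  show ((cs b s z n ((csPlay b s z).1 n)).1 : Fin (n+1) → ℕ) (Fin.last n) = _
  rw [cs, if_neg hn]
  exact Fin.snoc_last (α := fun _ => ℕ) _ _

theorem csPlay_congr (b : ℕ) (s : NN.Strat) (z z' : ℕ → ℕ) (n : ℕ) (h : ∀ m < n, m % 2 ≠ b → z (m/2) = z' (m/2)) :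
    (csPlay b s z).1 n = (csPlay b s z').1 n := by
  induction n with
  | zero => rfl
  | succ n ih =>
    show (cs b s z n ((csPlay b s z).1 n)).1 = (cs b s z' n ((csPlay b s z').1 n)).1
    rw [ih (fun m hm => h m (by omega))]
    by_cases hb : n % 2 = b
    · rw [cs, cs, if_pos hb, if_pos hb]
    · simp only [cs, if_neg hb, h n (by omega) hb]; rfl

end Arena

open Arena in
theorem wadge_nn (A B : Set (ℕ → ℕ)) (hA : MeasurableSet A) (hB : MeasurableSet B) :
    (∃ f : (ℕ → ℕ) → (ℕ → ℕ), (∀ n x y, (∀ i ≤ n, x i = y i) → f x n = f y n) ∧ ∀ x, x ∈ A ↔ f x ∈ B) ∨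
    (∃ g : (ℕ → ℕ) → (ℕ → ℕ), (∀ n x y, (∀ i < n, x i = y i) → g x n = g y n) ∧ ∀ x, x ∈ B ↔ g x ∉ A) := by
  let ev : (ℕ → ℕ) → (ℕ → ℕ) := fun c n => c (2*n)
  let od : (ℕ → ℕ) → (ℕ → ℕ) := fun c n => c (2*n+1)
  have hev : Measurable ev := by fun_prop
  have hod : Measurable od := by fun_prop
  have hY : MeasurableSet ((ev ⁻¹' A ∩ (od ⁻¹' B)ᶜ) ∪ ((ev ⁻¹' A)ᶜ ∩ od ⁻¹' B)) :=
    ((hev hA).inter (hod hB).compl).union ((hev hA).compl.inter (hod hB))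
  rcases (unr_nn _ hY).det root with ⟨s, hs⟩ | ⟨s, hs⟩
  · right
    refine ⟨fun z => ev (nseq (csPlay 0 s z)), ?_, fun z => ?_⟩
    · intro n x y h
      have := csPlay_congr 0 s x y (2*n+1) (fun m hm hm2 => h _ (by omega))
      show nseq _ (2*n) = nseq _ (2*n)
      rw [nseq, nseq, this]
    · have h1 := hs _ rfl (csPlay_cons 0 s z)
      have h2 : od (nseq (csPlay 0 s z)) = z := by
        funext n
        show nseq _ (2*n+1) = _
        rw [csPlay_seq _ _ _ _ (by omega)]
        congr 1; omega
      simp only [mem_preimage, mem_union, mem_inter_iff, mem_compl_iff, h2] at h1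
      tauto
  · left
    refine ⟨fun z => od (nseq (csPlay 1 s z)), ?_, fun z => ?_⟩
    · intro n x y h
      have := csPlay_congr 1 s x y (2*n+2) (fun m hm hm2 => h _ (by omega))
      show nseq _ (2*n+1) = nseq _ (2*n+1)
      rw [nseq, nseq, this]
    · have h1 := hs _ rfl (csPlay_cons 1 s z)
      have h2 : ev (nseq (csPlay 1 s z)) = z := by
        funext n
        show nseq _ (2*n) = _
        rw [csPlay_seq _ _ _ _ (by omega)]
        congr 1; omega
      simp only [mem_preimage, mem_union, mem_inter_iff, mem_compl_iff, h2] at h1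
      tauto

end

/-! Part 7 -/
section
open Set

/-! ### F-sigma sets -/

theorem IsFsigma.of_closed {A : Set Cantor} (h : IsClosed A) : IsFsigma A :=
  ⟨fun _ => A, fun _ => h, by simp [iUnion_const]⟩

theorem IsFsigma.iUnion {ι : Type*} [Countable ι] {A : ι → Set Cantor} (h : ∀ i, IsFsigma (A i)) : IsFsigma (⋃ i, A i) := by
  rcases isEmpty_or_nonempty ι with hι | hι
  · rw [iUnion_of_empty]; exact IsFsigma.of_closed isClosed_empty
  choose F hF hA using h
  obtain ⟨g, hg⟩ := exists_surjective_nat (ι × ℕ)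
  refine ⟨fun n => F (g n).1 (g n).2, fun n => hF _ _, ?_⟩
  ext x
  simp only [mem_iUnion]
  constructor
  · rintro ⟨i, hi⟩
    rw [hA i] at hi
    obtain ⟨n, hn⟩ := mem_iUnion.1 hi
    obtain ⟨m, hm⟩ := hg (i, n)
    exact ⟨m, by rw [hm]; exact hn⟩
  · rintro ⟨m, hm⟩
    exact ⟨(g m).1, by rw [hA]; exact mem_iUnion.2 ⟨_, hm⟩⟩

theorem IsFsigma.union {A B : Set Cantor} (hA : IsFsigma A) (hB : IsFsigma B) : IsFsigma (A ∪ B) := by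
  rw [union_eq_iUnion]
  exact IsFsigma.iUnion (fun b => by cases b <;> assumption)

theorem IsFsigma.inter {A B : Set Cantor} (hA : IsFsigma A) (hB : IsFsigma B) : IsFsigma (A ∩ B) := by
  obtain ⟨F, hF, rfl⟩ := hA
  obtain ⟨G, hG, rfl⟩ := hB
  have : (⋃ n, F n) ∩ (⋃ n, G n) = ⋃ q : ℕ × ℕ, F q.1 ∩ G q.2 := by
    ext x; simp only [mem_inter_iff, mem_iUnion, Prod.exists]
    constructor
    · rintro ⟨⟨i, hi⟩, ⟨j, hj⟩⟩; exact ⟨i, j, hi, hj⟩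
    · rintro ⟨i, j, hi, hj⟩; exact ⟨⟨i, hi⟩, ⟨j, hj⟩⟩
  rw [this]
  exact IsFsigma.iUnion (fun q => IsFsigma.of_closed ((hF _).inter (hG _)))

theorem IsFsigma.of_open {A : Set Cantor} (h : IsOpen A) : IsFsigma A := by
  letI := TopologicalSpace.metrizableSpaceMetric Cantor
  obtain ⟨F, hF, -, hA, _⟩ := IsOpen.exists_iUnion_isClosed (α := Cantor) h
  exact ⟨F, hF, hA.symm⟩

theorem IsFsigma.preimage {A : Set Cantor} (hA : IsFsigma A) {f : Cantor → Cantor} (hf : Continuous f) : IsFsigma (f ⁻¹' A) := by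
  obtain ⟨F, hF, rfl⟩ := hA
  exact ⟨fun n => f ⁻¹' F n, fun n => (hF n).preimage hf, by rw [preimage_iUnion]⟩

theorem IsFsigma.meas {A : Set Cantor} (hA : IsFsigma A) : MeasurableSet A := by
  obtain ⟨F, hF, rfl⟩ := hA
  exact MeasurableSet.iUnion (fun n => (hF n).measurableSet)

/-! ### cylinders of lists -/
def lcyl (s : List ℕ) : Set (ℕ → ℕ) := {d | ∀ i (h : i < s.length), d i = s[i]}

theorem lcyl_open (s : List ℕ) : IsClopen (lcyl s) := by
  have : lcyl s = ⋂ i : Fin s.length, (fun d : ℕ → ℕ => d i) ⁻¹' {s[i]} := by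
    ext d; simp only [lcyl, mem_ofPred_eq, mem_iInter, mem_preimage, mem_singleton_iff]
    exact ⟨fun h i => h i i.2, fun h i hi => h ⟨i, hi⟩⟩
  rw [this]
  exact isClopen_iInter_of_finite (fun i => (isClopen_discrete _).preimage (continuous_apply _))

theorem mem_lcyl_ofFn (d d' : ℕ → ℕ) (n : ℕ) : d' ∈ lcyl (List.ofFn (fun i : Fin n => d i)) ↔ ∀ i < n, d' i = d i := by
  simp [lcyl]

theorem exists_cyl {U : Set (ℕ → ℕ)} (hU : IsOpen U) {d : ℕ → ℕ} (hd : d ∈ U) : ∃ n, ∀ d', (∀ i < n, d' i = d i) → d' ∈ U := by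
  obtain ⟨s, ⟨y, n, rfl⟩, h1, h2⟩ := (PiNat.isTopologicalBasis_cylinders (fun _ => ℕ)).exists_subset_of_mem_open hd hU
  refine ⟨n, fun d' h => h2 ?_⟩
  rw [← PiNat.mem_cylinder_iff_eq.1 h1]; exact h

theorem exists_cylC {U : Set Cantor} (hU : IsOpen U) {d : Cantor} (hd : d ∈ U) : ∃ n, ∀ d' : Cantor, (∀ i < n, d' i = d i) → d' ∈ U := by
  obtain ⟨s, ⟨y, n, rfl⟩, h1, h2⟩ := (PiNat.isTopologicalBasis_cylinders (fun _ => Bool)).exists_subset_of_mem_open hd hU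
  refine ⟨n, fun d' h => h2 ?_⟩
  rw [← PiNat.mem_cylinder_iff_eq.1 h1]; exact h

theorem cyl_clopen {α : Type*} [TopologicalSpace α] [DiscreteTopology α] (d : ℕ → α) (n : ℕ) : IsClopen {d' : ℕ → α | ∀ i < n, d' i = d i} := by
  have : {d' : ℕ → α | ∀ i < n, d' i = d i} = ⋂ i : Fin n, (fun d' : ℕ → α => d' i) ⁻¹' {d i} := by
    ext d'; simp only [mem_ofPred_eq, mem_iInter, mem_preimage, mem_singleton_iff]
    exact ⟨fun h i => h i i.2, fun h i hi => h ⟨i, hi⟩⟩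
  rw [this]
  exact isClopen_iInter_of_finite (fun i => (isClopen_discrete _).preimage (continuous_apply _))

theorem open_eq_lcyl {U : Set (ℕ → ℕ)} (hU : IsOpen U) : U = ⋃ s : {s : List ℕ // lcyl s ⊆ U}, lcyl s.1 := by
  ext d
  simp only [mem_iUnion]
  constructor
  · intro hd
    obtain ⟨n, hn⟩ := exists_cyl hU hd
    refine ⟨⟨List.ofFn (fun i : Fin n => d i), fun d' h => hn d' ((mem_lcyl_ofFn _ _ _).1 h)⟩, ?_⟩
    exact (mem_lcyl_ofFn _ _ _).2 (fun _ _ => rfl)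
  · rintro ⟨s, hs⟩; exact s.2 hs

theorem cont_of_lcyl {Y : Type*} [TopologicalSpace Y] {f : Y → ℕ → ℕ} (h : ∀ s, IsOpen (f ⁻¹' lcyl s)) : Continuous f := by
  refine continuous_def.2 (fun U hU => ?_)
  rw [open_eq_lcyl hU, preimage_iUnion]
  exact isOpen_iUnion (fun s => h _)

/-! ### presentations of finer topologies -/
structure Pres where
  e : Cantor → (ℕ → ℕ)
  p : (ℕ → ℕ) → Cantor
  pe : ∀ x, p (e x) = x
  cp : Continuous p
  cep : Continuous (fun c => e (p c))
  fs : ∀ U, IsOpen U → IsFsigma (e ⁻¹' U)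

namespace Pres

def TO (t : Pres) (W : Set Cantor) : Prop := IsOpen (t.p ⁻¹' W)
def TCl (t : Pres) (W : Set Cantor) : Prop := IsClopen (t.p ⁻¹' W)
def TC (t t' : Pres) (f : Cantor → Cantor) : Prop := Continuous (fun c => t'.e (f (t.p c)))

theorem TCl.to {t : Pres} {W : Set Cantor} (h : t.TCl W) : t.TO W := h.2
theorem TCl.toc {t : Pres} {W : Set Cantor} (h : t.TCl W) : t.TO Wᶜ := h.compl.2
theorem TCl.inter {t : Pres} {W V : Set Cantor} (h : t.TCl W) (h' : t.TCl V) : t.TCl (W ∩ V) := IsClopen.inter h h'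
theorem TCl.univ (t : Pres) : t.TCl Set.univ := isClopen_univ
theorem TO.inter {t : Pres} {W V : Set Cantor} (h : t.TO W) (h' : t.TO V) : t.TO (W ∩ V) := IsOpen.inter h h'
theorem TO.union {t : Pres} {W V : Set Cantor} (h : t.TO W) (h' : t.TO V) : t.TO (W ∪ V) := IsOpen.union h h'
theorem TO.iUnion {t : Pres} {ι : Type*} {W : ι → Set Cantor} (h : ∀ i, t.TO (W i)) : t.TO (⋃ i, W i) := by
  unfold TO; rw [preimage_iUnion]; exact isOpen_iUnion h
theorem TCl.mk' {t : Pres} {W : Set Cantor} (h : t.TO W) (h' : t.TO Wᶜ) : t.TCl W := ⟨isOpen_compl_iff.1 h', h⟩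
theorem TCl.compl {t : Pres} {W : Set Cantor} (h : t.TCl W) : t.TCl Wᶜ := IsClopen.compl h

theorem TO.of_open (t : Pres) {W : Set Cantor} (h : IsOpen W) : t.TO W := h.preimage t.cp
theorem TCl.of_clopen (t : Pres) {W : Set Cantor} (h : IsClopen W) : t.TCl W := h.preimage t.cp
theorem TO.of_code (t : Pres) {U : Set (ℕ → ℕ)} (h : IsOpen U) : t.TO (t.e ⁻¹' U) := h.preimage t.cep
theorem TCl.of_code (t : Pres) {U : Set (ℕ → ℕ)} (h : IsClopen U) : t.TCl (t.e ⁻¹' U) := h.preimage t.cep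
theorem TO.fsigma {t : Pres} {W : Set Cantor} (h : t.TO W) : IsFsigma W := by
  have : W = t.e ⁻¹' (t.p ⁻¹' W) := by ext x; simp [t.pe]
  rw [this]; exact t.fs _ h

theorem TC.comp {t t' t'' : Pres} {f g : Cantor → Cantor} (hg : TC t' t'' g) (hf : TC t t' f) : TC t t'' (fun x => g (f x)) := by
  have := Continuous.comp hg hf
  unfold TC
  convert this using 2 with c
  simp [t'.pe]

theorem TC.id (t : Pres) : TC t t (fun x => x) := t.cep
theorem TC.const (t t' : Pres) (a : Cantor) : TC t t' (fun _ => a) := continuous_const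

theorem TC.preimage {t t' : Pres} {f : Cantor → Cantor} (hf : TC t t' f) {W : Set Cantor} (h : t'.TO W) : t.TO (f ⁻¹' W) := by
  have h2 : t.p ⁻¹' (f ⁻¹' W) = (fun c => t'.e (f (t.p c))) ⁻¹' (t'.p ⁻¹' W) := by ext c; simp [t'.pe]
  unfold TO
  rw [h2]; exact IsOpen.preimage hf h
theorem TC.preimageCl {t t' : Pres} {f : Cantor → Cantor} (hf : TC t t' f) {W : Set Cantor} (h : t'.TCl W) : t.TCl (f ⁻¹' W) :=
  TCl.mk' (hf.preimage h.to) (hf.preimage h.toc)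

/-- gluing -/
theorem TC.glue {t t' : Pres} {f : Cantor → Cantor} (h : ∀ x, ∃ P, t.TO P ∧ x ∈ P ∧ ∃ g, TC t t' g ∧ ∀ v ∈ P, f v = g v) : TC t t' f := by
  refine continuous_iff_continuousAt.2 (fun c => ?_)
  obtain ⟨P, hP, hx, g, hg, hv⟩ := h (t.p c)
  have h1 : ContinuousAt (fun c => t'.e (g (t.p c))) c := Continuous.continuousAt hg
  refine h1.congr ?_
  filter_upwards [IsOpen.mem_nhds hP hx] with c' hc'
  rw [hv _ hc']

theorem TC.of_lcyl {t t' : Pres} {f : Cantor → Cantor} (h : ∀ s, t.TO (f ⁻¹' (t'.e ⁻¹' lcyl s))) : TC t t' f :=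
  cont_of_lcyl h

theorem TO.of_local {t : Pres} {W : Set Cantor} (h : ∀ x ∈ W, ∃ P, t.TO P ∧ x ∈ P ∧ P ⊆ W) : t.TO W := by
  refine isOpen_iff_mem_nhds.2 (fun c hc => ?_)
  obtain ⟨P, hP, hx, hs⟩ := h _ hc
  exact Filter.mem_of_superset (IsOpen.mem_nhds hP hx) (fun c' hc' => hs hc')

/-- basic neighbourhoods -/
def nb (t : Pres) (x : Cantor) (n : ℕ) : Set Cantor := {v | ∀ i < n, t.e v i = t.e x i}
theorem nb_cl (t : Pres) (x : Cantor) (n : ℕ) : t.TCl (t.nb x n) := TCl.of_code t (cyl_clopen (t.e x) n)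
theorem mem_nb (t : Pres) (x : Cantor) (n : ℕ) : x ∈ t.nb x n := fun _ _ => rfl
theorem TO.nb {t : Pres} {W : Set Cantor} (h : t.TO W) {x : Cantor} (hx : x ∈ W) : ∃ n, t.nb x n ⊆ W := by
  obtain ⟨n, hn⟩ := exists_cyl (show IsOpen (t.p ⁻¹' W) from h) (show t.e x ∈ t.p ⁻¹' W by simpa [t.pe] using hx)
  refine ⟨n, fun v hv => ?_⟩
  have := hn (t.e v) hv
  simpa [t.pe] using this
theorem nb_mono (t : Pres) (x : Cantor) {m n : ℕ} (h : m ≤ n) : t.nb x n ⊆ t.nb x m := fun v hv i hi => hv i (by omega)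

open Classical in
noncomputable def cl (V : Set Cantor) (v0 : Cantor) (v : Cantor) : Cantor := if v ∈ V then v else v0
theorem cl_mem {V : Set Cantor} {v0 : Cantor} (h : v0 ∈ V) (v : Cantor) : cl V v0 v ∈ V := by unfold cl; split_ifs <;> assumption
theorem cl_eq {V : Set Cantor} {v0 : Cantor} {v : Cantor} (h : v ∈ V) : cl V v0 v = v := by unfold cl; rw [if_pos h]

theorem TC.cl {t : Pres} {V : Set Cantor} (hV : t.TCl V) (v0 : Cantor) : TC t t (cl V v0) := by
  apply TC.glue
  intro x
  by_cases hx : x ∈ V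
  · exact ⟨V, hV.to, hx, _, TC.id t, fun v hv => cl_eq hv⟩
  · exact ⟨Vᶜ, hV.toc, hx, _, TC.const t t v0, fun v hv => by unfold Pres.cl; rw [if_neg hv]⟩

/-! ### reductions -/
def Red (t : Pres) (V A : Set Cantor) (t' : Pres) (W B : Set Cantor) : Prop :=
  ∃ f, TC t t' f ∧ (∀ v, f v ∈ W) ∧ ∀ v ∈ V, (v ∈ A ↔ f v ∈ B)

theorem Red.comp {t t' t'' : Pres} {V A W B Z C : Set Cantor} (h : Red t V A t' W B) (h' : Red t' W B t'' Z C) : Red t V A t'' Z C := by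
  obtain ⟨f, f1, f2, f3⟩ := h
  obtain ⟨g, g1, g2, g3⟩ := h'
  exact ⟨_, g1.comp f1, fun v => g2 _, fun v hv => (f3 v hv).trans (g3 _ (f2 v))⟩

theorem Red.compl {t t' : Pres} {V A W B : Set Cantor} (h : Red t V A t' W B) : Red t V Aᶜ t' W Bᶜ := by
  obtain ⟨f, f1, f2, f3⟩ := h
  exact ⟨f, f1, f2, fun v hv => not_congr (f3 v hv)⟩

theorem Red.incl {t t' : Pres} (h : TC t t' (fun x => x)) {V W A : Set Cantor} (hV : t.TCl V) (hVW : V ⊆ W) (hne : W.Nonempty) : Red t V A t' W A := by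
  obtain ⟨w, hw⟩ := hne
  refine ⟨cl V w, h.comp (TC.cl hV w), fun v => ?_, fun v hv => by rw [cl_eq hv]⟩
  unfold cl; split_ifs with h'
  · exact hVW h'
  · exact hw

theorem cont_of_causal {f : (ℕ → ℕ) → (ℕ → ℕ)} (h : ∀ n x y, (∀ i ≤ n, x i = y i) → f x n = f y n) : Continuous f := by
  refine continuous_pi (fun n => ?_)
  refine continuous_iff_continuousAt.2 (fun x => ?_)
  have : ∀ᶠ y in nhds x, f y n = f x n := by
    filter_upwards [(cyl_clopen x (n+1)).2.mem_nhds (fun _ _ => rfl)] with y hy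
    exact h n y x (fun i hi => hy i (by omega))
  exact (continuousAt_const (y := f x n)).congr (this.mono (fun y hy => hy.symm))

theorem meas_borel {A : Set Cantor} : @MeasurableSet Cantor (borel Cantor) A ↔ MeasurableSet A := by
  rw [← BorelSpace.measurable_eq (α := Cantor)]

theorem wadge_core (t t' : Pres) {V W A B : Set Cantor} {v0 w0 : Cantor} (hV : t.TCl V) (hv : v0 ∈ V) (hW : t'.TCl W) (hw : w0 ∈ W)
    (hA : MeasurableSet A) (hB : MeasurableSet B) :
    Red t V A t' W B ∨ ∃ g : (ℕ → ℕ) → (ℕ → ℕ), (∀ n x y, (∀ i < n, x i = y i) → g x n = g y n) ∧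
      ∀ b, cl W w0 (t'.p b) ∈ B ↔ cl V v0 (t.p (g b)) ∉ A := by
  have c1 : Continuous (fun d => cl V v0 (t.p d)) := by
    have := t.cp.comp (TC.cl hV v0)
    convert this using 2 with d
    simp [t.pe]
  have c2 : Continuous (fun d => cl W w0 (t'.p d)) := by
    have := t'.cp.comp (TC.cl hW w0)
    convert this using 2 with d
    simp [t'.pe]
  rcases wadge_nn _ _ (c1.measurable hA) (c2.measurable hB) with ⟨f, f1, f2⟩ | ⟨g, g1, g2⟩
  · left
    refine ⟨fun v => cl W w0 (t'.p (f (t.e v))), ?_, fun v => cl_mem hw _, fun v hv => ?_⟩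
    · exact Continuous.comp (g := fun c => t'.e (cl W w0 (t'.p c))) (TC.cl hW w0) ((cont_of_causal f1).comp t.cep)
    · have := f2 (t.e v)
      simp only [mem_preimage, t.pe, cl_eq hv] at this
      exact this
  · right
    exact ⟨g, g1, fun b => g2 b⟩

theorem wadge (t t' : Pres) {V W A B : Set Cantor} (hV : t.TCl V) (hv : V.Nonempty) (hW : t'.TCl W) (hw : W.Nonempty)
    (hA : MeasurableSet A) (hB : MeasurableSet B) : Red t V A t' W B ∨ Red t' W B t V Aᶜ := by
  obtain ⟨v0, hv⟩ := hv
  obtain ⟨w0, hw⟩ := hw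
  rcases wadge_core t t' hV hv hW hw hA hB with h | ⟨g, g1, g2⟩
  · exact Or.inl h
  · right
    refine ⟨fun w => cl V v0 (t.p (g (t'.e w))), ?_, fun v => cl_mem hv _, fun w hw' => ?_⟩
    · exact Continuous.comp (g := fun c => t.e (cl V v0 (t.p c))) (TC.cl hV v0) ((cont_of_causal (fun n x y h => g1 n x y (fun i hi => h i hi.le))).comp t'.cep)
    · have := g2 (t'.e w)
      rw [t'.pe, cl_eq hw'] at this
      exact this

end Pres

end

/-! Part 8 -/
section
open Set

namespace Pres

/-- construction of a presentation from coordinates -/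
theorem exists_of_coord (φ : ℕ → Cantor → ℕ) (hφ : ∀ n k, IsClopen {x | φ n x = k + 1})
    (hb : ∀ n x, φ (2*n) x = if x n then 1 else 0) : ∃ t : Pres, ∀ x n, t.e x n = φ n x := by
  set e : Cantor → (ℕ → ℕ) := fun x n => φ n x with he
  set dec : (ℕ → ℕ) → Cantor := fun d n => decide (d (2*n) ≠ 0) with hdec
  have cdec : Continuous dec := by
    refine continuous_pi (fun n => ?_)
    exact Continuous.comp (g := fun m : ℕ => decide (m ≠ 0)) continuous_of_discreteTopology (continuous_apply _)
  have de : ∀ x, dec (e x) = x := by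
    intro x; funext n; simp only [hdec, he, hb]; cases x n <;> simp
  have hcl0 : ∀ n k, IsClosed {x | φ n x = k} := by
    intro n k
    cases k with
    | succ k => exact (hφ n k).1
    | zero =>
      have : {x | φ n x = 0} = (⋃ k, {x | φ n x = k + 1})ᶜ := by
        ext x; simp only [mem_ofPred_eq, mem_compl_iff, mem_iUnion, not_exists]
        constructor
        · intro h k; omega
        · intro h; by_contra h'
          exact h (φ n x - 1) (by omega)
      rw [this]
      exact (isOpen_iUnion (fun k => (hφ n k).2)).isClosed_compl
  have hr : range e = {d | e (dec d) = d} := by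
    ext d; constructor
    · rintro ⟨x, rfl⟩; simp [de]
    · intro h; exact ⟨_, h⟩
  have hrc : IsClosed (range e) := by
    rw [hr, ← isOpen_compl_iff, isOpen_iff_mem_nhds]
    intro d hd
    have : ∃ n, e (dec d) n ≠ d n := by
      by_contra h; push Not at h; exact hd (funext h)
    obtain ⟨n, hn⟩ := this
    have h1 : ∀ᶠ d' in nhds d, d' n = d n :=
      Filter.mem_of_superset ((cyl_clopen d (n+1)).2.mem_nhds (fun _ _ => rfl)) (fun d' (h' : ∀ i < n+1, d' i = d i) => h' n (by omega))
    rcases hdn : d n with _ | k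
    · rcases hen : φ n (dec d) with _ | k
      · exact absurd hen (by simp only [he] at hn; omega)
      · have h2 : ∀ᶠ d' in nhds d, dec d' ∈ {x | φ n x = k+1} :=
          cdec.continuousAt.eventually ((hφ n k).2.mem_nhds hen)
        filter_upwards [h1, h2] with d' h1' h2' h3
        have := congrFun h3 n
        simp only [he] at this
        have h2'' : φ n (dec d') = k+1 := h2'
        omega
    · have h2 : ∀ᶠ d' in nhds d, dec d' ∈ {x | φ n x = k+1}ᶜ :=
          cdec.continuousAt.eventually ((hφ n k).compl.2.mem_nhds (by
            simp only [mem_compl_iff, mem_ofPred_eq]; simp only [he] at hn; omega))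
      filter_upwards [h1, h2] with d' h1' h2' h3
      have := congrFun h3 n
      simp only [he] at this
      simp only [mem_compl_iff, mem_ofPred_eq] at h2'
      omega
  obtain ⟨r, r1, r2, r3⟩ := PiNat.exists_retraction_of_isClosed hrc (range_nonempty e)
  have her : ∀ d, e (dec (r d)) = r d := by
    intro d
    have : r d ∈ range e := by rw [← r2]; exact mem_range_self d
    rw [hr] at this; exact this
  refine ⟨⟨e, fun d => dec (r d), fun x => ?_, cdec.comp r3, ?_, fun U hU => ?_⟩, fun x n => rfl⟩
  · rw [r1 _ (mem_range_self x), de]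
  · simpa only [her] using r3
  · rw [open_eq_lcyl hU, preimage_iUnion]
    refine IsFsigma.iUnion (fun s => IsFsigma.of_closed ?_)
    have : e ⁻¹' lcyl s.1 = ⋂ i : Fin s.1.length, {x | φ i x = s.1[i]} := by
      ext x; simp only [lcyl, mem_preimage, mem_ofPred_eq, mem_iInter, he]
      exact ⟨fun h i => h i i.2, fun h i hi => h ⟨i, hi⟩⟩
    rw [this]
    exact isClosed_iInter (fun i => hcl0 _ _)

theorem open_eq_clopens {A : Set Cantor} (h : IsOpen A) : ∃ D : ℕ → Set Cantor, (∀ n, IsClopen (D n)) ∧ A = ⋃ n, D n := by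
  have hb := PiNat.isTopologicalBasis_cylinders (fun _ => Bool)
  let I := {q : List Bool // {d : Cantor | ∀ i (h : i < q.length), d i = q[i]} ⊆ A}
  have hcl : ∀ q : List Bool, IsClopen {d : Cantor | ∀ i (h : i < q.length), d i = q[i]} := by
    intro q
    have : {d : Cantor | ∀ i (h : i < q.length), d i = q[i]} = ⋂ i : Fin q.length, (fun d : Cantor => d i) ⁻¹' {q[i]} := by
      ext d; simp only [mem_ofPred_eq, mem_iInter, mem_preimage, mem_singleton_iff]
      exact ⟨fun h i => h i i.2, fun h i hi => h ⟨i, hi⟩⟩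
    rw [this]
    exact isClopen_iInter_of_finite (fun i => (isClopen_discrete _).preimage (continuous_apply _))
  rcases isEmpty_or_nonempty I with hI | hI
  · refine ⟨fun _ => ∅, fun _ => isClopen_empty, ?_⟩
    ext d
    simp only [iUnion_empty, mem_empty_iff_false, iff_false]
    intro hd
    obtain ⟨n, hn⟩ := exists_cylC h hd
    exact hI.elim ⟨List.ofFn (fun i : Fin n => d i), fun d' h => hn d' (by simpa using h)⟩
  · obtain ⟨g, hg⟩ := exists_surjective_nat I
    refine ⟨fun n => {d : Cantor | ∀ i (h : i < (g n).1.length), d i = (g n).1[i]}, fun n => hcl _, ?_⟩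
    ext d
    rw [mem_iUnion]
    constructor
    · intro hd
      obtain ⟨n, hn⟩ := exists_cylC h hd
      obtain ⟨m, hm⟩ := hg ⟨List.ofFn (fun i : Fin n => d i), fun d' h => hn d' (by simpa using h)⟩
      exact ⟨m, by rw [hm]; simp⟩
    · rintro ⟨n, hn⟩
      exact (g n).2 hn

open Classical in
theorem exists_phi {C : Set Cantor} (hC : IsClosed C) : ∃ φ : Cantor → ℕ, (∀ k, IsClopen {x | φ x = k + 1}) ∧ ∀ x, φ x = 0 ↔ x ∈ C := by
  obtain ⟨D, hD, h⟩ := open_eq_clopens hC.isOpen_compl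
  have h' : ∀ x, x ∈ C ↔ ¬ ∃ n, x ∈ D n := by
    intro x; rw [← mem_iUnion, ← h]; simp
  refine ⟨fun x => if hx : ∃ n, x ∈ D n then Nat.find hx + 1 else 0, fun k => ?_, fun x => ?_⟩
  · have : {x | (if hx : ∃ n, x ∈ D n then Nat.find hx + 1 else 0) = k + 1} = D k ∩ ⋂ i : Fin k, (D i)ᶜ := by
      ext x
      simp only [mem_ofPred_eq, mem_inter_iff, mem_iInter, mem_compl_iff]
      split_ifs with hx
      · rw [Nat.add_right_cancel_iff, Nat.find_eq_iff]
        exact and_congr_right (fun _ => ⟨fun h i => h i i.2, fun h i hi => h ⟨i, hi⟩⟩)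
      · simp only [reduceCtorEq, false_iff]
        rintro ⟨h1, -⟩; exact hx ⟨_, h1⟩
    rw [this]
    exact (hD k).inter (isClopen_iInter_of_finite (fun i => (hD _).compl))
  · rw [h']; by_cases hx : ∃ n, x ∈ D n
    · simp only [dif_pos hx]; simp [hx]
    · simp only [dif_neg hx]; simp [hx]

theorem exists_closed (C : ℕ → Set Cantor) (hC : ∀ n, IsClosed (C n)) : ∃ t : Pres, ∀ n, t.TO (C n) := by
  choose φ hφ h0 using fun n => exists_phi (hC n)
  obtain ⟨t, ht⟩ := exists_of_coord (fun n x => if n % 2 = 0 then (if x (n/2) then 1 else 0) else φ (n/2) x)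
    (fun n k => by
      by_cases h : n % 2 = 0
      · simp only [h, if_true]
        exact (isClopen_discrete {k+1}).preimage (f := fun x : Cantor => if x (n/2) then 1 else 0)
          ((continuous_of_discreteTopology (f := fun b : Bool => if b then 1 else 0)).comp (continuous_apply (n/2)))
      · simp only [h, if_false]; exact hφ _ k)
    (fun n x => by simp)
  refine ⟨t, fun n => ?_⟩
  have : C n = t.e ⁻¹' ((fun d : ℕ → ℕ => d (2*n+1)) ⁻¹' {0}) := by
    ext x
    simp only [mem_preimage, mem_singleton_iff, ht]
    rw [if_neg (by omega), h0, show (2*n+1)/2 = n by omega]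
  rw [this]
  exact TO.of_code t ((isOpen_discrete _).preimage (continuous_apply _))

theorem exists_fsigma {ι : Type} [Countable ι] (V : ι → Set Cantor) (h : ∀ i, IsFsigma (V i)) : ∃ t : Pres, ∀ i, t.TO (V i) := by
  choose F hF hV using h
  rcases isEmpty_or_nonempty ι with hι | hι
  · obtain ⟨t, -⟩ := exists_closed (fun _ => ∅) (fun _ => isClosed_empty)
    exact ⟨t, fun i => hι.elim i⟩
  obtain ⟨g, hg⟩ := exists_surjective_nat (ι × ℕ)
  obtain ⟨t, ht⟩ := exists_closed (fun n => F (g n).1 (g n).2) (fun n => hF _ _)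
  refine ⟨t, fun i => ?_⟩
  rw [hV]
  refine TO.iUnion (fun n => ?_)
  obtain ⟨m, hm⟩ := hg (i, n)
  have := ht m
  rwa [hm] at this

theorem exists_finer (t0 : Pres) {ι : Type} [Countable ι] (V : ι → Set Cantor) (h : ∀ i, IsFsigma (V i)) :
    ∃ t : Pres, TC t t0 (fun x => x) ∧ ∀ i, t.TO (V i) := by
  obtain ⟨t, ht⟩ := exists_fsigma (ι := ι ⊕ List ℕ) (Sum.elim V (fun s => t0.e ⁻¹' lcyl s)) (by
    rintro (i | s)
    · exact h i
    · exact t0.fs _ (lcyl_open s).2)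
  exact ⟨t, TC.of_lcyl (fun s => ht (Sum.inr s)), fun i => ht (Sum.inl i)⟩

theorem exists_std : ∃ t : Pres, Continuous t.e := by
  obtain ⟨t, ht⟩ := exists_of_coord (fun n x => if x (n/2) then 1 else 0)
    (fun n k => 
        (isClopen_discrete {k+1}).preimage (f := fun x : Cantor => if x (n/2) then 1 else 0)
          ((continuous_of_discreteTopology (f := fun b : Bool => if b then 1 else 0)).comp (continuous_apply (n/2))))
    (fun n x => by simp)
  refine ⟨t, continuous_pi (fun n => ?_)⟩
  simp only [ht]
  exact (continuous_of_discreteTopology (f := fun b : Bool => if b then 1 else 0)).comp (continuous_apply (n/2))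

theorem retract (t : Pres) {G : Set Cantor} (hG : t.TO Gᶜ) (hne : G.Nonempty) : ∃ r, TC t t r ∧ (∀ v, r v ∈ G) ∧ ∀ v ∈ G, r v = v := by
  have hc : IsClosed (t.p ⁻¹' G) := ⟨hG⟩
  obtain ⟨x, hx⟩ := hne
  obtain ⟨r, r1, r2, r3⟩ := PiNat.exists_retraction_of_isClosed hc ⟨t.e x, by simpa [t.pe] using hx⟩
  refine ⟨fun v => t.p (r (t.e v)), ?_, fun v => ?_, fun v hv => ?_⟩
  · exact t.cep.comp (r3.comp t.cep)
  · have : r (t.e v) ∈ t.p ⁻¹' G := by rw [← r2]; exact mem_range_self _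
    exact this
  · show t.p (r (t.e v)) = v
    rw [r1 (t.e v) (by simpa [t.pe] using hv), t.pe]

end Pres

end

/-! Part 9 -/
section
open Set

/-! ### flip sets -/

def flipAt (n : ℕ) (z : Cantor) : Cantor := fun i => if i = n then !(z i) else z i

theorem flipAt_invol (n : ℕ) (z : Cantor) : flipAt n (flipAt n z) = z := by
  funext i; unfold flipAt; split_ifs <;> simp

theorem flipAt_cont (n : ℕ) : Continuous (flipAt n) := by
  refine continuous_pi (fun i => ?_)
  unfold flipAt
  split_ifs
  · exact (continuous_of_discreteTopology (f := not)).comp (continuous_apply i)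
  · exact continuous_apply i

def flipH (n : ℕ) : Cantor ≃ₜ Cantor where
  toFun := flipAt n
  invFun := flipAt n
  left_inv := flipAt_invol n
  right_inv := flipAt_invol n
  continuous_toFun := flipAt_cont n
  continuous_invFun := flipAt_cont n

theorem no_flip_set (E : Set Cantor) (hE : MeasurableSet E) (h : ∀ n z, flipAt n z ∈ E ↔ z ∉ E) : False := by
  obtain ⟨U, hU, hEU⟩ := hE.residualEq_isOpen
  have hR : {z | z ∈ E ↔ z ∈ U} ∈ residual Cantor := by
    filter_upwards [hEU] with z hz
    exact Eq.to_iff hz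
  have hR' : ∀ n, {z | flipAt n z ∈ E ↔ flipAt n z ∈ U} ∈ residual Cantor := by
    intro n
    have := (flipH n).residual_map_eq
    have h2 : {z | z ∈ E ↔ z ∈ U} ∈ Filter.map (flipH n) (residual Cantor) := by rw [this]; exact hR
    exact h2
  by_cases hUe : U = ∅
  · obtain ⟨z, hz1, hz2⟩ := (dense_of_mem_residual (Filter.inter_mem hR (hR' 0))).nonempty
    have h1 : z ∈ E ↔ z ∈ U := hz1
    have h2 : flipAt 0 z ∈ E ↔ flipAt 0 z ∈ U := hz2
    have h3 := h 0 z
    rw [hUe] at h1 h2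
    simp at h1 h2
    tauto
  · obtain ⟨d, hd⟩ := nonempty_iff_ne_empty.2 hUe
    obtain ⟨n, hn⟩ := exists_cylC hU hd
    obtain ⟨z, hz0, hz1, hz2⟩ := (dense_of_mem_residual (Filter.inter_mem hR (hR' n))).inter_open_nonempty
      {d' | ∀ i < n, d' i = d i} (cyl_clopen d n).2 ⟨d, fun _ _ => rfl⟩
    have h1 : z ∈ E ↔ z ∈ U := hz1
    have h2 : flipAt n z ∈ E ↔ flipAt n z ∈ U := hz2
    have h3 := h n z
    have h4 : z ∈ U := hn z hz0
    have h5 : flipAt n z ∈ U := hn _ (fun i hi => by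
      unfold flipAt; rw [if_neg (by omega)]; exact hz0 i hi)
    tauto

def fcomp (p : ℕ → Bool → (ℕ → ℕ) → (ℕ → ℕ)) (z : Cantor) : ℕ → ℕ → (ℕ → ℕ) → (ℕ → ℕ)
  | _, 0, y => y
  | n, m+1, y => p n (z n) (fcomp p z (n+1) m y)

theorem fcomp_add (p : ℕ → Bool → (ℕ → ℕ) → (ℕ → ℕ)) (z : Cantor) (m m' n : ℕ) (y : ℕ → ℕ) :
    fcomp p z n (m + m') y = fcomp p z n m (fcomp p z (n+m) m' y) := by
  induction m generalizing n with
  | zero => simp [fcomp]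
  | succ m ih =>
    rw [show m + 1 + m' = (m + m') + 1 by omega]
    simp only [fcomp]
    rw [ih, show n + 1 + m = n + (m+1) by omega]

theorem fcomp_congr (p : ℕ → Bool → (ℕ → ℕ) → (ℕ → ℕ)) (z z' : Cantor) (m n : ℕ) (y : ℕ → ℕ)
    (h : ∀ i, n ≤ i → i < n + m → z i = z' i) :
    fcomp p z n m y = fcomp p z' n m y := by
  induction m generalizing n with
  | zero => rfl
  | succ m ih =>
    simp only [fcomp]
    rw [ih (n+1) (fun i h1 h2 => h i (by omega) (by omega)), h n le_rfl (by omega)]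

theorem flip_lemma (A : ℕ → Set (ℕ → ℕ)) (hA : MeasurableSet (A 0)) (p : ℕ → Bool → (ℕ → ℕ) → (ℕ → ℕ))
    (cp : ∀ n c, Continuous (p n c))
    (h0 : ∀ n y, p n false y ∈ A n ↔ y ∈ A (n+1)) (h1 : ∀ n y, p n true y ∈ A n ↔ y ∉ A (n+1))
    (hc : ∀ (z : Cantor) n k, ∃ M, ∀ m ≥ M, ∀ y y', ∀ i < k, fcomp p z n m y i = fcomp p z n m y' i) : False := by
  choose M hM using hc
  set Y : ℕ → Cantor → (ℕ → ℕ) := fun n z i => fcomp p z n (M z n (i+1)) 0 i with hY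
  have key : ∀ z n k m, M z n k ≤ m → ∀ y, ∀ i < k, fcomp p z n m y i = Y n z i := by
    intro z n k m hm y i hi
    have e1 : fcomp p z n (m + (M z n (i+1))) 0 i = fcomp p z n m y i := by
      rw [fcomp_add]; exact hM z n k m hm _ _ i hi
    have e2 : fcomp p z n ((M z n (i+1)) + m) 0 i = Y n z i := by
      rw [fcomp_add]; exact hM z n (i+1) _ le_rfl _ _ i (by omega)
    rw [← e1, ← e2, add_comm]
  have lim : ∀ z n (y : ℕ → ℕ → ℕ), Filter.Tendsto (fun m => fcomp p z n m (y m)) Filter.atTop (nhds (Y n z)) := by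
    intro z n y
    rw [tendsto_pi_nhds]
    intro i
    refine tendsto_const_nhds.congr' ?_
    filter_upwards [Filter.eventually_ge_atTop (M z n (i+1))] with m hm
    exact (key z n (i+1) m hm _ i (by omega)).symm
  have hrec : ∀ z n, Y n z = p n (z n) (Y (n+1) z) := by
    intro z n
    have l1 := (lim z n 0).comp (Filter.tendsto_add_atTop_nat 1)
    have l2 := ((cp n (z n)).tendsto _).comp (lim z (n+1) 0)
    exact tendsto_nhds_unique l1 l2
  have cont : Continuous (Y 0) := by
    refine continuous_pi (fun i => ?_)
    refine continuous_iff_continuousAt.2 (fun z => ?_)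
    have : ∀ᶠ z' in nhds z, Y 0 z i = Y 0 z' i := by
      filter_upwards [(cyl_clopen z (M z 0 (i+1))).2.mem_nhds (fun _ _ => rfl)] with z' hz'
      have e1 := key z' 0 (i+1) (M z 0 (i+1) + M z' 0 (i+1)) (by omega) 0 i (by omega)
      rw [fcomp_add, fcomp_congr p z' z _ _ _ (fun j _ hj => hz' j (by omega)), key z 0 (i+1) _ le_rfl _ i (by omega)] at e1
      exact e1
    exact (continuousAt_const (y := Y 0 z i)).congr this
  have indep : ∀ z z' n, (∀ i, n ≤ i → z i = z' i) → Y n z = Y n z' := by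
    intro z z' n h
    have l1 := lim z n 0
    have l2 := lim z' n 0
    have : (fun m => fcomp p z n m ((0 : ℕ → ℕ → ℕ) m)) = (fun m => fcomp p z' n m ((0 : ℕ → ℕ → ℕ) m)) :=
      funext (fun m => fcomp_congr _ _ _ _ _ _ (fun i hi _ => h i hi))
    rw [this] at l1
    exact tendsto_nhds_unique l1 l2
  have stepf : ∀ z n, Y n z ∈ A n ↔ (if z n then Y (n+1) z ∉ A (n+1) else Y (n+1) z ∈ A (n+1)) := by
    intro z n
    rw [hrec z n]
    cases hz : z n
    · simp [h0]
    · simp [h1]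
  refine no_flip_set (Y 0 ⁻¹' A 0) (cont.measurable hA) (fun n z => ?_)
  have : ∀ k ≤ n, (Y (n-k) (flipAt n z) ∈ A (n-k) ↔ Y (n-k) z ∉ A (n-k)) := by
    intro k
    induction k with
    | zero =>
      intro _
      rw [Nat.sub_zero, stepf, stepf z]
      have e1 : Y (n+1) (flipAt n z) = Y (n+1) z := indep _ _ _ (fun i hi => by
        unfold flipAt; rw [if_neg (by omega)])
      rw [e1]
      have : flipAt n z n = !(z n) := by simp [flipAt]
      rw [this]
      cases z n <;> simp
    | succ k ih =>
      intro hk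
      have ih' := ih (by omega)
      rw [stepf, stepf z]
      have e1 : n - (k+1) + 1 = n - k := by omega
      rw [e1, ih']
      have : flipAt n z (n-(k+1)) = z (n-(k+1)) := by unfold flipAt; rw [if_neg (by omega)]
      rw [this]
      cases z (n-(k+1)) <;> simp
  simpa using this n le_rfl

namespace Pres

theorem cl_cont {t : Pres} {V : Set Cantor} (hV : t.TCl V) (v0 : Cantor) : Continuous (fun d => cl V v0 (t.p d)) := by
  have := t.cp.comp (TC.cl hV v0)
  convert this using 2 with d
  simp [t.pe]

theorem min_lemma {X : Set Cantor} (hX : MeasurableSet X) (K : Set (Pres × Set Cantor)) (hK : K.Nonempty)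
    (hcl : ∀ q ∈ K, q.1.TCl q.2 ∧ q.2.Nonempty) :
    ∃ q ∈ K, ∀ q' ∈ K, Red q.1 q.2 X q'.1 q'.2 X ∨ Red q.1 q.2 X q'.1 q'.2 Xᶜ := by
  by_contra hcon
  push Not at hcon
  have : ∀ q : K, ∃ q' : K, ¬ Red q.1.1 q.1.2 X q'.1.1 q'.1.2 X ∧ ¬ Red q.1.1 q.1.2 X q'.1.1 q'.1.2 Xᶜ := by
    rintro ⟨q, hq⟩
    obtain ⟨q', h', h''⟩ := hcon q hq
    exact ⟨⟨q', h'⟩, h''⟩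
  choose nx hnx using this
  obtain ⟨q0, hq0⟩ := hK
  let κ : ℕ → K := fun n => nx^[n] ⟨q0, hq0⟩
  have hκ : ∀ n, κ (n+1) = nx (κ n) := fun n => Function.iterate_succ_apply' _ _ _
  have hw : ∀ n, ∃ w, w ∈ (κ n).1.2 := fun n => (hcl _ (κ n).2).2
  choose w hw using hw
  have g1 : ∀ n, ∃ g : (ℕ → ℕ) → (ℕ → ℕ), (∀ k x y, (∀ i < k, x i = y i) → g x k = g y k) ∧
      ∀ b, cl (κ (n+1)).1.2 (w (n+1)) ((κ (n+1)).1.1.p b) ∈ X ↔ cl (κ n).1.2 (w n) ((κ n).1.1.p (g b)) ∉ X := by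
    intro n
    refine (wadge_core _ _ (hcl _ (κ n).2).1 (hw n) (hcl _ (κ (n+1)).2).1 (hw (n+1)) hX hX).resolve_left ?_
    rw [hκ]; exact (hnx (κ n)).1
  have g2 : ∀ n, ∃ g : (ℕ → ℕ) → (ℕ → ℕ), (∀ k x y, (∀ i < k, x i = y i) → g x k = g y k) ∧
      ∀ b, cl (κ (n+1)).1.2 (w (n+1)) ((κ (n+1)).1.1.p b) ∈ Xᶜ ↔ cl (κ n).1.2 (w n) ((κ n).1.1.p (g b)) ∉ X := by
    intro n
    refine (wadge_core _ _ (hcl _ (κ n).2).1 (hw n) (hcl _ (κ (n+1)).2).1 (hw (n+1)) hX hX.compl).resolve_left ?_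
    rw [hκ]; exact (hnx (κ n)).2
  choose g1 g1c g1r using g1
  choose g2 g2c g2r using g2
  have caus : ∀ (n : ℕ) (c : Bool) (k : ℕ) (x y : ℕ → ℕ), (∀ i < k, x i = y i) → (if c then g1 n else g2 n) x k = (if c then g1 n else g2 n) y k := by
    intro n c
    cases c
    · simpa using g2c n
    · simpa using g1c n
  refine flip_lemma (fun n => {b | cl (κ n).1.2 (w n) ((κ n).1.1.p b) ∈ X}) ((cl_cont (hcl _ (κ 0).2).1 (w 0)).measurable hX)
    (fun n c => if c then g1 n else g2 n) (fun n c => ?_) (fun n y => ?_) (fun n y => ?_) (fun z n k => ?_)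
  · exact cont_of_causal (fun k x y h => caus n c k x y (fun i hi => h i hi.le))
  · have := g2r n y
    simp only [mem_ofPred_eq, mem_compl_iff] at this ⊢
    simp only [Bool.false_eq_true, if_false]
    tauto
  · have := g1r n y
    simp only [mem_ofPred_eq] at this ⊢
    simp only [if_true]
    tauto
  · have : ∀ m n, ∀ y y', ∀ i < m, fcomp (fun n c => if c then g1 n else g2 n) z n m y i = fcomp (fun n c => if c then g1 n else g2 n) z n m y' i := by
      intro m
      induction m with
      | zero => intro n y y' i hi; omega
      | succ m ih =>
        intro n y y' i hi
        simp only [fcomp]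
        exact caus _ _ _ _ _ (fun j hj => ih _ _ _ _ (by omega))
    exact ⟨k, fun m hm y y' i hi => this m n y y' i (by omega)⟩

theorem contract {X : Set Cantor} (hX : MeasurableSet X) (t : Pres) {W : Set Cantor} (hW : t.TCl W) {y : Cantor} (hy : y ∈ W)
    (hf : Red t W Xᶜ t W X) (hl : ∀ W', t.TCl W' → y ∈ W' → W' ⊆ W → Red t W X t W' X ∨ Red t W X t W' Xᶜ) : False := by
  have hf' : Red t W X t W Xᶜ := by simpa using hf.compl
  have hk : ∀ k, Red t W X t (W ∩ t.nb y k) X ∧ Red t W X t (W ∩ t.nb y k) Xᶜ := by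
    intro k
    rcases hl (W ∩ t.nb y k) (hW.inter (t.nb_cl y k)) ⟨hy, t.mem_nb y k⟩ inter_subset_left with h | h
    · exact ⟨h, hf'.comp h.compl⟩
    · refine ⟨?_, h⟩
      have := hf'.comp h.compl
      simpa using this
  choose hk0 hk1 using hk
  choose f0 f0c f0w f0r using hk0
  choose f1 f1c f1w f1r using hk1
  let P : ℕ → Bool → (ℕ → ℕ) → (ℕ → ℕ) := fun k c d => t.e ((if c then f1 k else f0 k) (cl W y (t.p d)))
  have Pcont : ∀ k c, Continuous (P k c) := by
    intro k c
    have : TC t t (if c then f1 k else f0 k) := by cases c <;> simp [f0c, f1c]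
    exact this.comp (TC.cl hW y)
  have Pnb : ∀ k c d, ∀ i < k, P k c d i = t.e y i := by
    intro k c d
    have : (if c then f1 k else f0 k) (cl W y (t.p d)) ∈ t.nb y k := by
      cases c
      · simpa using (f0w k _).2
      · simpa using (f1w k _).2
    exact this
  let A : Set (ℕ → ℕ) := {d | cl W y (t.p d) ∈ X}
  have PA0 : ∀ k d, P k false d ∈ A ↔ d ∈ A := by
    intro k d
    have h1 := f0r k (cl W y (t.p d)) (cl_mem hy _)
    have h2 := (f0w k (cl W y (t.p d))).1
    simp only [A, P, mem_ofPred_eq, t.pe, Bool.false_eq_true, if_false, cl_eq h2]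
    exact h1.symm
  have PA1 : ∀ k d, P k true d ∈ A ↔ d ∉ A := by
    intro k d
    have h1 := f1r k (cl W y (t.p d)) (cl_mem hy _)
    have h2 := (f1w k (cl W y (t.p d))).1
    simp only [A, P, mem_ofPred_eq, t.pe, if_true, cl_eq h2]
    simp only [mem_compl_iff] at h1
    tauto
  let St := {l : List ((ℕ → ℕ) → (ℕ → ℕ)) // ∀ g ∈ l, Continuous g}
  have hex : ∀ (j : ℕ) (l : St), ∃ k, ∀ g ∈ l.1, ∀ d, (∀ i < k, d i = t.e y i) → ∀ i < j, g d i = g (t.e y) i := by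
    rintro j ⟨l, hl⟩
    simp only
    induction l with
    | nil => exact ⟨0, by simp⟩
    | cons g l ih =>
      obtain ⟨k, hk⟩ := ih (fun g hg => hl g (List.mem_cons_of_mem _ hg))
      have hg := hl g List.mem_cons_self
      obtain ⟨k', hk'⟩ := exists_cyl ((cyl_clopen (g (t.e y)) j).2.preimage hg) (d := t.e y) (fun _ _ => rfl)
      refine ⟨max k k', fun g' hg' d hd => ?_⟩
      rcases List.mem_cons.1 hg' with rfl | h
      · exact hk' d (fun i hi => hd i (by omega))
      · exact hk g' h d (fun i hi => hd i (by omega))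
  choose K hKs using hex
  let nx : ℕ → St → St := fun j l => ⟨id :: ((l.1.map (fun g => g ∘ P (K j l) true)) ++ (l.1.map (fun g => g ∘ P (K j l) false))), by
    intro g hg
    simp only [List.mem_cons, List.mem_append, List.mem_map] at hg
    rcases hg with rfl | ⟨g', h, rfl⟩ | ⟨g', h, rfl⟩
    · exact continuous_id
    · exact (l.2 _ h).comp (Pcont _ _)
    · exact (l.2 _ h).comp (Pcont _ _)⟩
  let S : ℕ → St := fun j => Nat.rec ⟨[id], by simp [continuous_id]⟩ nx j
  have hS : ∀ j, S (j+1) = nx j (S j) := fun j => rfl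
  have idS : ∀ j, id ∈ (S j).1 := by
    intro j
    cases j with
    | zero => simp [S]
    | succ j => rw [hS]; simp [nx]
  let p : ℕ → Bool → (ℕ → ℕ) → (ℕ → ℕ) := fun j c => P (K j (S j)) c
  have hmem : ∀ z n m, fcomp p z n m ∈ (S (n+m)).1 := by
    intro z n m
    induction m with
    | zero => exact idS n
    | succ m ih =>
      have e1 : fcomp p z n (m+1) = fcomp p z n m ∘ P (K (n+m) (S (n+m))) (z (n+m)) := by
        funext d
        rw [fcomp_add]; rfl
      rw [e1, ← add_assoc, hS]
      simp only [nx, List.mem_cons, List.mem_append, List.mem_map]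
      cases z (n+m)
      · right; right; exact ⟨_, ih, rfl⟩
      · right; left; exact ⟨_, ih, rfl⟩
  refine flip_lemma (fun _ => A) ((cl_cont hW y).measurable hX) p (fun n c => Pcont _ _) (fun n d => PA0 _ d) (fun n d => PA1 _ d) (fun z n k => ?_)
  refine ⟨k + 1, fun m hm d d' i hi => ?_⟩
  obtain ⟨m, rfl⟩ : ∃ m', m = m' + 1 := ⟨m - 1, by omega⟩
  have : ∀ d, fcomp p z n (m+1) d i = fcomp p z n m (t.e y) i := by
    intro d
    rw [fcomp_add]
    exact hKs (n+m) (S (n+m)) _ (hmem z n m) _ (Pnb _ _ _) i (by omega)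
  rw [this, this]

end Pres

end

/-! Part 10 -/
section
open Set

namespace Pres

def Gen (t : Pres) (x : Cantor) : Prop := ∀ W, t.TO W → x ∈ W → W ∈ nhds x

theorem exists_gen {X : Set Cantor} (hd : Dense X) (hB : BaireSpace X) (t : Pres) {U : Set Cantor} (hU : IsOpen U) (hne : U.Nonempty) :
    ∃ x ∈ X, x ∈ U ∧ t.Gen x := by
  have hF := fun s : List ℕ => t.fs _ (lcyl_open s).2
  choose F hF1 hF2 using hF
  have hop : ∀ q : List ℕ × ℕ, IsOpen ((fun x : X => (x : Cantor)) ⁻¹' (frontier (F q.1 q.2))ᶜ) := fun q =>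
    isClosed_frontier.isOpen_compl.preimage continuous_subtype_val
  have hde : ∀ q : List ℕ × ℕ, Dense ((fun x : X => (x : Cantor)) ⁻¹' (frontier (F q.1 q.2))ᶜ) := by
    intro q
    rw [dense_iff_inter_open]
    rintro O hO ⟨x, hx⟩
    obtain ⟨O', hO', rfl⟩ := isOpen_induced_iff.1 hO
    have hd2 : Dense (frontier (F q.1 q.2))ᶜ := interior_eq_empty_iff_dense_compl.1 (interior_frontier (hF1 _ _))
    obtain ⟨y, hy1, hy2⟩ := hd2.inter_open_nonempty O' hO' ⟨x, hx⟩
    obtain ⟨z, ⟨hz1, hz2⟩, hz3⟩ := hd.inter_open_nonempty _ (hO'.inter isClosed_frontier.isOpen_compl) ⟨y, hy1, hy2⟩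
    exact ⟨⟨z, hz3⟩, hz1, hz2⟩
  have hall := dense_iInter_of_isOpen hop hde
  obtain ⟨z, hz1, hz2⟩ := hd.inter_open_nonempty U hU hne
  obtain ⟨x, hx1, hx2⟩ := hall.inter_open_nonempty _ (hU.preimage (continuous_subtype_val (p := (· ∈ X)))) ⟨⟨z, hz2⟩, hz1⟩
  refine ⟨x, x.2, hx1, fun W hW hxW => ?_⟩
  obtain ⟨n, hn⟩ := hW.nb hxW
  have hm : (x : Cantor) ∈ t.e ⁻¹' lcyl (List.ofFn (fun i : Fin n => t.e x i)) := (mem_lcyl_ofFn _ _ _).2 (fun _ _ => rfl)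
  have hsub : t.e ⁻¹' lcyl (List.ofFn (fun i : Fin n => t.e x i)) ⊆ W := fun v hv => hn ((mem_lcyl_ofFn _ _ _).1 hv)
  refine Filter.mem_of_superset ?_ hsub
  set s := List.ofFn (fun i : Fin n => t.e x i)
  rw [hF2 s] at hm ⊢
  obtain ⟨k, hk⟩ := mem_iUnion.1 hm
  have h1 : (x : Cantor) ∉ frontier (F s k) := mem_iInter.1 hx2 (s, k)
  have h2 : (x : Cantor) ∈ interior (F s k) := by
    by_contra h
    exact h1 ⟨subset_closure hk, h⟩
  exact Filter.mem_of_superset (mem_interior_iff_mem_nhds.1 h2) (subset_iUnion _ k)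

theorem exists_local {X : Set Cantor} (hX : MeasurableSet X) (t : Pres) (y : Cantor) :
    ∃ W, t.TCl W ∧ y ∈ W ∧ ∀ W', t.TCl W' → y ∈ W' → Red t W X t W' X := by
  obtain ⟨⟨t', W⟩, ⟨rfl, hW, hy⟩, hmin⟩ := min_lemma hX {q : Pres × Set Cantor | q.1 = t ∧ t.TCl q.2 ∧ y ∈ q.2}
    ⟨(t, univ), rfl, TCl.univ t, mem_univ _⟩ (by
      rintro ⟨t', W⟩ ⟨h1, h2, h3⟩
      exact ⟨by rw [show t' = t from h1]; exact h2, ⟨y, h3⟩⟩)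
  simp only at hW hy hmin
  refine ⟨W, hW, hy, fun W' hW' hy' => ?_⟩
  have key : ∀ W', t'.TCl W' → y ∈ W' → Red t' W X t' W' X ∨ Red t' W X t' W' Xᶜ := fun W' h1 h2 => hmin (t', W') ⟨rfl, h1, h2⟩
  rcases key (W ∩ W') (hW.inter hW') ⟨hy, hy'⟩ with h | h
  · exact h.comp (Red.incl (TC.id t') (hW.inter hW') inter_subset_right ⟨y, hy'⟩)
  · exfalso
    have h2 := h.comp (Red.incl (TC.id t') (hW.inter hW') inter_subset_left ⟨y, hy⟩)
    refine contract hX t' hW hy (by simpa using h2.compl) (fun W' h1 h2 _ => key W' h1 h2)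

structure Ctx (X : Set Cantor) (t0 : Pres) (s : Set Cantor) : Prop where
  mX : MeasurableSet X
  cs : IsClopen s
  ns : s.Nonempty
  nsd : ∀ t : Pres, TC t t0 (fun x => x) → ¬ Red t s Xᶜ t0 s X
  gen : ∀ x ∈ s, t0.Gen x → ∀ W', t0.TCl W' → x ∈ W' → Red t0 s X t0 W' X

theorem exists_clopen_nhds {x : Cantor} {W : Set Cantor} (h : W ∈ nhds x) : ∃ s, IsClopen s ∧ x ∈ s ∧ s ⊆ W := by
  obtain ⟨U, hU, hUo, hx⟩ := mem_nhds_iff.1 h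
  obtain ⟨n, hn⟩ := exists_cylC hUo hx
  exact ⟨{d | ∀ i < n, d i = x i}, cyl_clopen x n, fun _ _ => rfl, fun d hd => hU (hn d hd)⟩

theorem exists_ctx {X : Set Cantor} (hX : MeasurableSet X) (hd : Dense X) (hB : BaireSpace X) :
    ∃ t0 s, Ctx X t0 s := by
  obtain ⟨ts, -⟩ := exists_std
  obtain ⟨⟨t0, s⟩, ⟨cs, ns⟩, hmin⟩ := min_lemma hX {q : Pres × Set Cantor | IsClopen q.2 ∧ q.2.Nonempty}
    ⟨(ts, univ), isClopen_univ, univ_nonempty⟩ (by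
      rintro ⟨t', W⟩ ⟨h1, h2⟩
      exact ⟨TCl.of_clopen _ h1, h2⟩)
  simp only at cs ns hmin
  have key : ∀ t (W' : Set Cantor), IsClopen W' → W'.Nonempty → Red t0 s X t W' X ∨ Red t0 s X t W' Xᶜ := fun t W' h1 h2 => hmin (t, W') ⟨h1, h2⟩
  have nsd : ∀ t : Pres, TC t t0 (fun x => x) → ¬ Red t s Xᶜ t0 s X := by
    intro t ht hr
    obtain ⟨x, hxX, hxs, hg⟩ := exists_gen hd hB t cs.2 ns
    have hi : Red t s X t0 s X := Red.incl ht (TCl.of_clopen t cs) Subset.rfl ns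
    refine contract hX t (TCl.of_clopen t cs) hxs ?_ ?_
    · rcases key t s cs ns with h | h
      · exact hr.comp h
      · simpa using (hi.comp h).compl
    · intro W' hW' hx' hsub
      obtain ⟨s', hs', hxs', hsub'⟩ := exists_clopen_nhds (hg W' hW'.to hx')
      have hinc : ∀ B, Red t s' B t W' B := fun B => Red.incl (TC.id t) (TCl.of_clopen t hs') hsub' ⟨x, hx'⟩
      rcases key t s' hs' ⟨x, hxs'⟩ with h | h
      · exact Or.inl ((hi.comp h).comp (hinc _))
      · exact Or.inr ((hi.comp h).comp (hinc _))
  refine ⟨t0, s, hX, cs, ns, nsd, fun x hxs hg W' hW' hx' => ?_⟩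
  obtain ⟨s', hs', hxs', hsub'⟩ := exists_clopen_nhds (Filter.inter_mem (hg W' hW'.to hx') (cs.2.mem_nhds hxs))
  rcases key t0 s' hs' ⟨x, hxs'⟩ with h | h
  · exact h.comp (Red.incl (TC.id t0) (TCl.of_clopen t0 hs') (hsub'.trans inter_subset_left) ⟨x, hx'⟩)
  · exfalso
    have h2 := h.comp (Red.incl (TC.id t0) (TCl.of_clopen t0 hs') (hsub'.trans inter_subset_right) ns)
    exact nsd t0 (TC.id t0) (by simpa using h2.compl)

theorem cont_of_std {t : Pres} (ht : Continuous t.e) {f : Cantor → Cantor} (hf : TC t t f) : Continuous f := by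
  have := t.cp.comp (Continuous.comp hf ht)
  convert this using 1; funext v; simp [t.pe]

theorem lemmaB {X : Set Cantor} {t0 : Pres} {s : Set Cantor} (c : Ctx X t0 s) {Y : Set Cantor} (hY : MeasurableSet Y)
    {t : Pres} (ht : TC t t0 (fun x => x)) (hr : Red t univ Y t0 s X) :
    ∃ f : Cantor → Cantor, Continuous f ∧ (∀ v, f v ∈ s) ∧ Y = f ⁻¹' X := by
  obtain ⟨ts, hts⟩ := exists_std
  rcases wadge ts ts (TCl.univ ts) univ_nonempty (TCl.of_clopen ts c.cs) c.ns hY c.mX with ⟨f, f1, f2, f3⟩ | ⟨σ, σ1, σ2, σ3⟩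
  · exact ⟨f, cont_of_std hts f1, f2, by ext v; exact f3 v (mem_univ _)⟩
  · exfalso
    have cσ := cont_of_std hts σ1
    obtain ⟨t'', h1, h2⟩ := exists_finer t0 (fun l : List ℕ => σ ⁻¹' (t.e ⁻¹' lcyl l)) (fun l => (t.fs _ (lcyl_open l).2).preimage cσ)
    have h3 : Red t'' s X t univ Yᶜ := ⟨σ, TC.of_lcyl h2, σ2, σ3⟩
    have h4 := h3.comp hr.compl
    exact c.nsd t'' h1 (by simpa using h4.compl)

end Pres

end

/-! Part 11 -/
section
open Set

theorem fs_pre {G B : Set Cantor} {h : Cantor → Cantor} (hG : IsFsigma Gᶜ) (hh : ContinuousOn h G) (hB : IsFsigma B) :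
    IsFsigma (Gᶜ ∪ h ⁻¹' B) := by
  obtain ⟨F, hF, rfl⟩ := hB
  have := fun n => continuousOn_iff_isClosed.1 hh (F n) (hF n)
  choose u hu hu2 using this
  have e : Gᶜ ∪ h ⁻¹' (⋃ n, F n) = Gᶜ ∪ ⋃ n, u n := by
    ext v
    by_cases hv : v ∈ G
    · simp only [mem_union, mem_compl_iff, hv, not_true, false_or, mem_preimage, mem_iUnion]
      refine exists_congr (fun n => ?_)
      have := congrArg (fun S => v ∈ S) (hu2 n)
      simp only [mem_inter_iff, hv, and_true, mem_preimage] at this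
      exact Eq.to_iff this
    · simp [hv]
  rw [e]
  exact hG.union (IsFsigma.iUnion (fun n => IsFsigma.of_closed (hu n)))

theorem fs_pre' {G A : Set Cantor} {h : Cantor → Cantor} (hG : IsFsigma Gᶜ) (hh : ContinuousOn h G) (hA : IsFsigma Aᶜ) :
    IsFsigma (G ∩ h ⁻¹' A)ᶜ := by
  rw [compl_inter, ← preimage_compl]; exact fs_pre hG hh hA

open Classical in
theorem lavr {X : Set Cantor} (f : X → Cantor) (hf : Continuous f) : ∃ (G : Set Cantor) (F : Cantor → Cantor),
    IsFsigma Gᶜ ∧ ContinuousOn F G ∧ X ⊆ G ∧ ∀ x : X, F x = f x := by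
  have : ∀ n (c : Bool), ∃ O : Set Cantor, IsOpen O ∧ ∀ x : X, (x : Cantor) ∈ O ↔ f x n = c := by
    intro n c
    have : IsOpen {x : X | f x n = c} := (isOpen_discrete {c}).preimage ((continuous_apply n).comp hf)
    obtain ⟨O, hO, h⟩ := isOpen_induced_iff.1 this
    refine ⟨O, hO, fun x => ?_⟩
    have := congrArg (fun S => x ∈ S) h
    exact Eq.to_iff this
  choose O hO hx using this
  let G : Set Cantor := {v | ∀ n, (v ∈ O n true ↔ v ∉ O n false)}
  refine ⟨G, fun v n => decide (v ∈ O n true), ?_, ?_, ?_, ?_⟩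
  · have : Gᶜ = ⋃ n, ((O n true ∩ O n false) ∪ ((O n true)ᶜ ∩ (O n false)ᶜ)) := by
      ext v
      simp only [G, mem_compl_iff, mem_ofPred_eq, not_forall, mem_iUnion, mem_union, mem_inter_iff]
      refine exists_congr (fun n => ?_)
      tauto
    rw [this]
    exact IsFsigma.iUnion (fun n => ((IsFsigma.of_open (hO _ _)).inter (IsFsigma.of_open (hO _ _))).union
      ((IsFsigma.of_closed (hO _ _).isClosed_compl).inter (IsFsigma.of_closed (hO _ _).isClosed_compl)))
  · rw [continuousOn_pi]
    intro n v hv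
    by_cases h1 : v ∈ O n true
    · refine (continuousWithinAt_const (b := true)).congr_of_eventuallyEq ?_ (by simp [h1])
      filter_upwards [mem_nhdsWithin_of_mem_nhds ((hO n true).mem_nhds h1)] with v' hv'
      simp [hv']
    · have h2 : v ∈ O n false := by
        by_contra h; exact h1 ((hv n).2 h)
      refine (continuousWithinAt_const (b := false)).congr_of_eventuallyEq ?_ (by simp [h1])
      filter_upwards [mem_nhdsWithin_of_mem_nhds ((hO n false).mem_nhds h2), self_mem_nhdsWithin] with v' hv' hv''
      have := hv'' n
      simp only [decide_eq_false_iff_not]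
      tauto
  · intro x hxX n
    rw [hx n true ⟨x, hxX⟩, hx n false ⟨x, hxX⟩]; simp
  · intro x; funext n
    have := hx n true x
    by_cases h : f x n = true
    · rw [h]; simpa using this.2 h
    · simp only [Bool.not_eq_true] at h; rw [h]; simp only [decide_eq_false_iff_not]
      rw [this, h]; simp

theorem hom_local {X : Set Cantor} (hd : Dense X) (hh : IsHomogeneous X) {s : Set Cantor} (cs : IsClopen s) (ns : s.Nonempty)
    {x : Cantor} (hx : x ∈ X) : ∃ (T G : Set Cantor) (h : Cantor → Cantor), IsClopen T ∧ x ∈ T ∧ IsFsigma Gᶜ ∧ ContinuousOn h G ∧ MapsTo h G s ∧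
      ∀ v ∈ T, (v ∈ X ↔ v ∈ G ∧ h v ∈ X) := by
  obtain ⟨y, hys, hyX⟩ := hd.inter_open_nonempty s cs.2 ns
  obtain ⟨φ, hφ⟩ := hh ⟨x, hx⟩ ⟨y, hyX⟩
  obtain ⟨G1, F, hG1, hF, hXG1, hFφ⟩ := lavr (fun x : X => (φ x : Cantor)) (continuous_subtype_val.comp φ.continuous)
  obtain ⟨G2, K, hG2, hK, hXG2, hKφ⟩ := lavr (fun x : X => (φ.symm x : Cantor)) (continuous_subtype_val.comp φ.symm.continuous)
  have hop : IsOpen {z : X | (φ z : Cantor) ∈ s} := cs.2.preimage (continuous_subtype_val.comp φ.continuous)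
  obtain ⟨O, hO, hOe⟩ := isOpen_induced_iff.1 hop
  have hOe' : ∀ z : X, (z : Cantor) ∈ O ↔ (φ z : Cantor) ∈ s := fun z => Eq.to_iff (congrArg (fun S => z ∈ S) hOe)
  have hxO : x ∈ O := (hOe' ⟨x, hx⟩).2 (by rw [hφ]; exact hys)
  obtain ⟨T, hT, hxT, hTO⟩ := Pres.exists_clopen_nhds (hO.mem_nhds hxO)
  let P := G1 ∩ F ⁻¹' G2
  let Q : Cantor → Cantor := fun v n => xor (K (F v) n) (v n)
  have hP : IsFsigma Pᶜ := fs_pre' hG1 hF hG2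
  have hKF : ContinuousOn (fun v => K (F v)) P := hK.comp (hF.mono inter_subset_left) (fun v hv => hv.2)
  have hQ : ContinuousOn Q P := by
    rw [continuousOn_pi] at hKF ⊢
    intro n
    exact (continuous_of_discreteTopology (f := fun q : Bool × Bool => xor q.1 q.2)).comp_continuousOn
      ((hKF n).prodMk (continuous_apply n).continuousOn)
  let P2 := P ∩ Q ⁻¹' {fun _ => false}
  have hP2 : IsFsigma P2ᶜ := fs_pre' hP hQ (IsFsigma.of_open isClosed_singleton.isOpen_compl)
  have hP2' : ∀ v, v ∈ P2 ↔ v ∈ P ∧ K (F v) = v := by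
    intro v
    refine and_congr_right (fun _ => ?_)
    simp only [mem_preimage, mem_singleton_iff, Q, funext_iff]
    refine forall_congr' (fun n => ?_)
    cases K (F v) n <;> cases v n <;> simp
  have hFP2 : ContinuousOn F P2 := hF.mono (fun v hv => hv.1.1)
  refine ⟨T, P2 ∩ F ⁻¹' s, F, hT, hxT, fs_pre' hP2 hFP2 (IsFsigma.of_open cs.1.isOpen_compl), hFP2.mono inter_subset_left, fun v hv => hv.2, fun v hv => ?_⟩
  constructor
  · intro hvX
    have e1 := hFφ ⟨v, hvX⟩
    have e2 := hKφ (φ ⟨v, hvX⟩)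
    simp only [Homeomorph.symm_apply_apply] at e1 e2
    have hFX : F v ∈ X := by rw [e1]; exact Subtype.coe_prop _
    refine ⟨⟨(hP2' v).2 ⟨⟨hXG1 hvX, hXG2 hFX⟩, by rw [e1, e2]⟩, ?_⟩, hFX⟩
    show F v ∈ s
    rw [e1]; exact (hOe' ⟨v, hvX⟩).1 (hTO hv)
  · rintro ⟨⟨h1, -⟩, h2⟩
    have := ((hP2' v).1 h1).2
    have e2 := hKφ ⟨F v, h2⟩
    simp only at e2
    rw [← this, e2]; exact Subtype.coe_prop _

theorem hom_part {X : Set Cantor} (hd : Dense X) (hh : IsHomogeneous X) {s : Set Cantor} (cs : IsClopen s) (ns : s.Nonempty) :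
    ∃ (T G : ℕ → Set Cantor) (h : ℕ → Cantor → Cantor), (∀ n, IsClopen (T n)) ∧ (∀ m n v, v ∈ T m → v ∈ T n → m = n) ∧ X ⊆ ⋃ n, T n ∧
      ∀ n, IsFsigma (G n)ᶜ ∧ ContinuousOn (h n) (G n) ∧ MapsTo (h n) (G n) s ∧ ∀ v ∈ T n, (v ∈ X ↔ v ∈ G n ∧ h n v ∈ X) := by
  choose T G h hT hxT hG hc hm hX using fun x : X => hom_local hd hh cs ns x.2
  obtain ⟨I, hI, hIe⟩ := TopologicalSpace.isOpen_iUnion_countable T (fun x => (hT x).2)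
  have hIne : I.Nonempty := by
    by_contra hne
    rw [not_nonempty_iff_eq_empty] at hne
    obtain ⟨y, hyX⟩ := hd.nonempty
    have : y ∈ ⋃ i, T i := mem_iUnion.2 ⟨⟨y, hyX⟩, hxT _⟩
    rw [← hIe, hne] at this
    simp at this
  obtain ⟨g, hg⟩ := hI.exists_eq_range hIne
  refine ⟨fun n => T (g n) \ ⋃ m : Fin n, T (g m), fun n => G (g n), fun n => h (g n), fun n => ?_, ?_, ?_, fun n => ⟨hG _, hc _, hm _, fun v hv => hX _ v hv.1⟩⟩
  · exact (hT _).diff (isClopen_iUnion_of_finite (fun m => hT _))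
  · rintro m n v ⟨h1, h2⟩ ⟨h3, h4⟩
    rw [mem_iUnion, not_exists] at h2 h4
    rcases lt_trichotomy m n with h | h | h
    · exact absurd h1 (h4 ⟨m, h⟩)
    · exact h
    · exact absurd h3 (h2 ⟨n, h⟩)
  · classical
    intro v hv
    have : v ∈ ⋃ i, T i := mem_iUnion.2 ⟨⟨v, hv⟩, hxT _⟩
    rw [← hIe, hg] at this
    simp only [mem_iUnion, mem_range, exists_prop, exists_exists_eq_and] at this
    refine mem_iUnion.2 ⟨Nat.find this, Nat.find_spec this, ?_⟩
    rw [mem_iUnion, not_exists]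
    rintro ⟨m, hm⟩
    exact Nat.find_min this hm

theorem dOmega_of {X : Set Cantor} (N : Cantor → ℕ) (hN : ∀ n, IsFsigma {v | N v ≤ n}) (hX : ∀ v, v ∈ X ↔ Odd (N v)) : DOmegaSigmaTwo X := by
  refine ⟨fun n => {v | N v ≤ n}, hN, fun m n hmn v hv => le_trans hv hmn, ?_⟩
  ext v
  rw [hX]
  simp only [mem_iUnion, mem_ofPred_eq, mem_diff, not_exists, exists_prop, not_and, not_le]
  constructor
  · intro h; exact ⟨N v, h, le_rfl, fun m hm => hm⟩
  · rintro ⟨n, hn, h1, h2⟩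
    have : N v = n := by
      by_contra hne
      exact lt_irrefl _ (h2 (N v) (by omega))
    rw [this]; exact hn

theorem inDelta_of {X : Set Cantor} (N : Cantor → ℕ) (hN : ∀ n, IsFsigma {v | N v ≤ n}) (hX : ∀ v, v ∈ X ↔ Odd (N v)) : InDelta X := by
  refine ⟨dOmega_of N hN hX, dOmega_of (fun v => N v + 1) (fun n => ?_) (fun v => ?_)⟩
  · cases n with
    | zero => simpa using IsFsigma.of_closed isClosed_empty
    | succ n => simpa using hN n
  · rw [mem_compl_iff, hX]; rw [Nat.odd_add_one]

open Classical in
theorem delta_of_local {X : Set Cantor} (hd : Dense X) (hh : IsHomogeneous X) {s : Set Cantor} (cs : IsClopen s) (ns : s.Nonempty)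
    (N : Cantor → ℕ) (hN : ∀ n, IsFsigma {v | v ∈ s ∧ N v ≤ n}) (hNX : ∀ v ∈ s, (v ∈ X ↔ Odd (N v))) : InDelta X := by
  obtain ⟨T, G, h, hT, hdis, hcov, hp⟩ := hom_part hd hh cs ns
  let N' : Cantor → ℕ := fun v => if hv : ∃ n, v ∈ T n ∧ v ∈ G n then N (h hv.choose v) + 2 else 0
  have hN'1 : ∀ n v, v ∈ T n → v ∈ G n → N' v = N (h n v) + 2 := by
    intro n v h1 h2
    have hv : ∃ n, v ∈ T n ∧ v ∈ G n := ⟨n, h1, h2⟩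
    have : hv.choose = n := hdis _ _ v hv.choose_spec.1 h1
    simp only [N', dif_pos hv, this]
  have hN'2 : ∀ n v, v ∈ T n → v ∉ G n → N' v = 0 := by
    intro n v h1 h2
    have hv : ¬ ∃ n, v ∈ T n ∧ v ∈ G n := by
      rintro ⟨m, h3, h4⟩
      rw [hdis _ _ v h3 h1] at h4; exact h2 h4
    simp only [N', dif_neg hv]
  have hN'3 : ∀ v, v ∉ (⋃ n, T n) → N' v = 0 := by
    intro v h1
    have hv : ¬ ∃ n, v ∈ T n ∧ v ∈ G n := by
      rintro ⟨m, h3, h4⟩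
      exact h1 (mem_iUnion.2 ⟨m, h3⟩)
    simp only [N', dif_neg hv]
  refine inDelta_of N' (fun k => ?_) (fun v => ?_)
  · have : {v | N' v ≤ k} = (⋃ n, T n)ᶜ ∪ ⋃ n, (T n ∩ ((G n)ᶜ ∪ h n ⁻¹' {v | v ∈ s ∧ N v + 2 ≤ k})) := by
      ext v
      by_cases hv : v ∈ ⋃ n, T n
      · obtain ⟨n, hn⟩ := mem_iUnion.1 hv
        have e : (v ∈ ⋃ n, (T n ∩ ((G n)ᶜ ∪ h n ⁻¹' {v | v ∈ s ∧ N v + 2 ≤ k}))) ↔ v ∈ (G n)ᶜ ∪ h n ⁻¹' {v | v ∈ s ∧ N v + 2 ≤ k} := by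
          rw [mem_iUnion]
          constructor
          · rintro ⟨m, hm1, hm2⟩; rw [hdis _ _ v hn hm1]; exact hm2
          · intro h'; exact ⟨n, hn, h'⟩
        rw [mem_union, e]
        simp only [mem_compl_iff, hv, not_true, false_or]
        by_cases hG : v ∈ G n
        · simp only [mem_ofPred_eq, hN'1 n v hn hG, mem_union, mem_compl_iff, hG, not_true, false_or, mem_preimage]
          exact ⟨fun h' => ⟨(hp n).2.2.1 hG, h'⟩, fun h' => h'.2⟩
        · simp [hN'2 n v hn hG, hG]
      · simp only [mem_ofPred_eq, hN'3 v hv, mem_union, mem_compl_iff, hv]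
        simp
    rw [this]
    refine (IsFsigma.of_closed (isOpen_iUnion (fun n => (hT n).2)).isClosed_compl).union (IsFsigma.iUnion (fun n => ?_))
    refine (IsFsigma.of_closed (hT n).1).inter (fs_pre (hp n).1 (hp n).2.1 ?_)
    by_cases hk : 2 ≤ k
    · have e : {v | v ∈ s ∧ N v + 2 ≤ k} = {v | v ∈ s ∧ N v ≤ k - 2} := by
        ext v; simp only [mem_ofPred_eq]; constructor <;> rintro ⟨h1, h2⟩ <;> exact ⟨h1, by omega⟩
      rw [e]; exact hN _
    · have e : {v | v ∈ s ∧ N v + 2 ≤ k} = ∅ := by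
        ext v; simp only [mem_ofPred_eq, mem_empty_iff_false, iff_false]; rintro ⟨h1, h2⟩; omega
      rw [e]; exact IsFsigma.of_closed isClosed_empty
  · by_cases hv : v ∈ ⋃ n, T n
    · obtain ⟨n, hn⟩ := mem_iUnion.1 hv
      rw [(hp n).2.2.2 v hn]
      by_cases hG : v ∈ G n
      · rw [hN'1 n v hn hG, hNX _ ((hp n).2.2.1 hG)]
        simp [hG, Nat.odd_add]
      · rw [hN'2 n v hn hG]; simp [hG]
    · rw [hN'3 v hv]
      simp only [Nat.not_odd_zero, iff_false]
      exact fun h => hv (hcov h)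

end

/-! Part 12 -/
section
open Set

namespace Pres

theorem TC.meas {t t' : Pres} {f : Cantor → Cantor} (h : TC t t' f) : Measurable f :=
  measurable_of_isOpen (fun U hU => (h.preimage (TO.of_open t' hU)).fsigma.meas)

theorem nb_eq (t : Pres) {v w : Cantor} {n : ℕ} (h : w ∈ t.nb v n) {m : ℕ} (hm : m ≤ n) : t.nb w m = t.nb v m := by
  ext u
  constructor
  · intro hu i hi; rw [hu i hi]; exact h i (by omega)
  · intro hu i hi; rw [hu i hi]; exact (h i (by omega)).symm

theorem nb_symm (t : Pres) {v w : Cantor} {n : ℕ} (h : w ∈ t.nb v n) : v ∈ t.nb w n := fun i hi => (h i hi).symm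

noncomputable def nn (t : Pres) (Q : Set Cantor → Prop) (v : Cantor) : ℕ := sInf {n | Q (t.nb v n)}

theorem nn_spec (t : Pres) (Q : Set Cantor → Prop) {v : Cantor} (h : ∃ n, Q (t.nb v n)) : Q (t.nb v (t.nn Q v)) :=
  Nat.sInf_mem (s := {n | Q (t.nb v n)}) h

theorem nn_le (t : Pres) (Q : Set Cantor → Prop) {v : Cantor} {n : ℕ} (h : Q (t.nb v n)) : t.nn Q v ≤ n :=
  Nat.sInf_le (s := {n | Q (t.nb v n)}) h

theorem nn_eq (t : Pres) (Q : Set Cantor → Prop) {v w : Cantor} (h : ∃ n, Q (t.nb v n)) (hw : w ∈ t.nb v (t.nn Q v)) :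
    t.nn Q w = t.nn Q v := by
  have h1 : Q (t.nb w (t.nn Q v)) := by rw [nb_eq t hw le_rfl]; exact nn_spec t Q h
  have h2 := nn_le t Q h1
  have h3 := nn_spec t Q ⟨_, h1⟩
  rw [nb_eq t hw h2] at h3
  exact le_antisymm h2 (nn_le t Q h3)

theorem TC.of_nb {t t' : Pres} {r : Cantor → Cantor} (h : ∀ v m, ∃ n, ∀ w ∈ t.nb v n, r w ∈ t'.nb (r v) m) : TC t t' r := by
  refine continuous_pi (fun i => continuous_iff_continuousAt.2 (fun c => ?_))
  obtain ⟨n, hn⟩ := h (t.p c) (i+1)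
  refine (continuousAt_const (y := t'.e (r (t.p c)) i)).congr ?_
  filter_upwards [(t.nb_cl (t.p c) n).2.mem_nhds (t.mem_nb (t.p c) n)] with c' hc'
  exact (hn _ hc' i (by omega)).symm

theorem TC.nb {t t' : Pres} {r : Cantor → Cantor} (h : TC t t' r) (v : Cantor) (m : ℕ) : ∃ n, ∀ w ∈ t.nb v n, r w ∈ t'.nb (r v) m :=
  (h.preimage (t'.nb_cl (r v) m).to).nb (t'.mem_nb (r v) m)

def Simple (t : Pres) (X V : Set Cantor) : Prop :=
  ∃ N : Cantor → ℕ, (∀ n, t.TO {v | v ∈ V ∧ N v ≤ n}) ∧ ∀ v ∈ V, (v ∈ X ↔ Odd (N v))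

theorem Simple.mono {t : Pres} {X V V' : Set Cantor} (h : Simple t X V) (hV' : t.TO V') (hs : V' ⊆ V) : Simple t X V' := by
  obtain ⟨N, h1, h2⟩ := h
  refine ⟨N, fun n => ?_, fun v hv => h2 v (hs hv)⟩
  have : {v | v ∈ V' ∧ N v ≤ n} = V' ∩ {v | v ∈ V ∧ N v ≤ n} := by
    ext v; simp only [mem_ofPred_eq, mem_inter_iff]
    exact ⟨fun h => ⟨h.1, hs h.1, h.2⟩, fun h => ⟨h.1, h.2.2⟩⟩
  rw [this]; exact hV'.inter (h1 n)

theorem simple_of_local {t : Pres} {X V : Set Cantor} (hV : t.TO V) (h : ∀ v ∈ V, ∃ P, t.TO P ∧ v ∈ P ∧ Simple t X P) : Simple t X V := by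
  let Q : Set Cantor → Prop := fun S => Simple t X (S ∩ V)
  have hQ : ∀ v ∈ V, ∃ n, Q (t.nb v n) := by
    intro v hv
    obtain ⟨P, hP, hvP, hS⟩ := h v hv
    obtain ⟨n, hn⟩ := hP.nb hvP
    exact ⟨n, hS.mono ((t.nb_cl v n).to.inter hV) (inter_subset_left.trans hn)⟩
  have : ∀ S : Set Cantor, ∃ N : Cantor → ℕ, Q S → (∀ n, t.TO {v | v ∈ S ∩ V ∧ N v ≤ n}) ∧ ∀ v ∈ S ∩ V, (v ∈ X ↔ Odd (N v)) := by
    intro S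
    by_cases hS : Q S
    · obtain ⟨N, hN⟩ := hS
      exact ⟨N, fun _ => hN⟩
    · exact ⟨fun _ => 0, fun h => absurd h hS⟩
  choose NN hNN using this
  refine ⟨fun v => NN (t.nb v (t.nn Q v)) v, fun n => ?_, fun v hv => ?_⟩
  · apply TO.of_local
    rintro v ⟨hv, hvn⟩
    refine ⟨_, (hNN _ (nn_spec t Q (hQ v hv))).1 n, ⟨⟨t.mem_nb _ _, hv⟩, hvn⟩, ?_⟩
    rintro w ⟨⟨hw1, hw2⟩, hw3⟩
    refine ⟨hw2, ?_⟩
    simp only [nn_eq t Q (hQ v hv) hw1]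
    rw [nb_eq t hw1 le_rfl]
    exact hw3
  · exact (hNN _ (nn_spec t Q (hQ v hv))).2 v ⟨t.mem_nb _ _, hv⟩

theorem Simple.pull {t t' : Pres} {X V B : Set Cantor} (h : Simple t' X V) (hB : t.TO B) (hr : Red t B X t' V X) : Simple t X B := by
  obtain ⟨N, h1, h2⟩ := h
  obtain ⟨k, k1, k2, k3⟩ := hr
  refine ⟨fun w => N (k w), fun n => ?_, fun v hv => (k3 v hv).trans (h2 _ (k2 v))⟩
  have : {v | v ∈ B ∧ N (k v) ≤ n} = B ∩ k ⁻¹' {v | v ∈ V ∧ N v ≤ n} := by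
    ext v; simp only [mem_ofPred_eq, mem_inter_iff, mem_preimage]
    exact ⟨fun h => ⟨h.1, k2 v, h.2⟩, fun h => ⟨h.1, h.2.2⟩⟩
  rw [this]; exact hB.inter (k1.preimage (h1 n))

def Core (t : Pres) (X s : Set Cantor) : Set Cantor := {y | y ∈ s ∧ ∀ V, t.TO V → y ∈ V → V ⊆ s → ¬ Simple t X V}

theorem core_gen {X : Set Cantor} (hd : Dense X) (hh : IsHomogeneous X) (hD : ¬ InDelta X) {t : Pres} {s : Set Cantor} {x : Cantor} (hx : x ∈ s)
    (hg : t.Gen x) : x ∈ Core t X s := by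
  refine ⟨hx, fun V hV hxV hVs hS => hD ?_⟩
  obtain ⟨s', cs', hxs', hs'⟩ := exists_clopen_nhds (hg V hV hxV)
  obtain ⟨N, h1, h2⟩ := hS.mono (TO.of_open t cs'.2) hs'
  exact delta_of_local hd hh cs' ⟨x, hxs'⟩ N (fun n => (h1 n).fsigma) h2

open Classical in
theorem lemmaC {X : Set Cantor} {t0 : Pres} {s : Set Cantor} (c : Ctx X t0 s) (hne : (Core t0 X s).Nonempty)
    {t : Pres} {C : Set Cantor} (hC : t.TO Cᶜ) {h : Cantor → Cantor} (hh : TC t t0 h) (hhs : ∀ v, h v ∈ s) :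
    Red t univ (C ∩ h ⁻¹' X) t0 s X := by
  have hYm : MeasurableSet (C ∩ h ⁻¹' X) := by
    refine MeasurableSet.inter ?_ (hh.meas c.mX)
    exact (compl_compl C) ▸ hC.fsigma.meas.compl
  have hs0 : t0.TCl s := TCl.of_clopen t0 c.cs
  refine (wadge t t0 (TCl.univ t) univ_nonempty hs0 c.ns hYm c.mX).resolve_right ?_
  rintro ⟨g, g1, -, g3⟩
  set f : Cantor → Cantor := fun v => h (g v) with hf
  have fTC : TC t0 t0 f := hh.comp g1
  have fs : ∀ v, f v ∈ s := fun v => hhs _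
  have hgC : t0.TO (g ⁻¹' Cᶜ) := g1.preimage hC
  have hout : ∀ v ∈ s, g v ∉ C → v ∈ X := fun v hv hv' => (g3 v hv).2 (fun h' => hv' h'.1)
  have hin : ∀ v ∈ s, g v ∈ C → (v ∈ X ↔ f v ∉ X) := by
    intro v hv hv'
    rw [g3 v hv]
    simp only [mem_compl_iff, mem_inter_iff, hv', true_and, mem_preimage, hf]
  set K := Core t0 X s with hKdef
  have KC : ∀ v ∈ K, g v ∈ C := by
    intro v hv
    by_contra hv'
    refine hv.2 (s ∩ g ⁻¹' Cᶜ) (hs0.to.inter hgC) ⟨hv.1, hv'⟩ inter_subset_left ⟨fun _ => 1, fun n => ?_, fun w hw => ?_⟩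
    · rcases n with _ | n
      · have : {v | v ∈ s ∩ g ⁻¹' Cᶜ ∧ 1 ≤ 0} = (∅ : Set Cantor) := by ext; simp
        rw [this]; exact TO.of_open t0 isOpen_empty
      · have : {v | v ∈ s ∩ g ⁻¹' Cᶜ ∧ 1 ≤ n + 1} = s ∩ g ⁻¹' Cᶜ := by ext; simp
        rw [this]; exact hs0.to.inter hgC
    · simp [hout w hw.1 hw.2]
  have fK : ∀ v ∈ K, f v ∈ K := by
    intro v hv
    refine ⟨fs v, fun V hV hfV hVs hS => ?_⟩
    obtain ⟨N, N1, N2⟩ := hS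
    have hV' : t0.TO (s ∩ f ⁻¹' V) := hs0.to.inter (fTC.preimage hV)
    refine hv.2 (s ∩ f ⁻¹' V) hV' ⟨hv.1, hfV⟩ inter_subset_left
      ⟨fun w => if g w ∈ C then N (f w) + 1 else 1, fun n => ?_, fun w hw => ?_⟩
    · rcases n with _ | n
      · have : {v | v ∈ s ∩ f ⁻¹' V ∧ (if g v ∈ C then N (f v) + 1 else 1) ≤ 0} = (∅ : Set Cantor) := by
          ext w; simp only [mem_ofPred_eq, mem_empty_iff_false, iff_false]
          rintro ⟨-, h2⟩
          split_ifs at h2 <;> omega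
        rw [this]; exact TO.of_open t0 isOpen_empty
      · have : {v | v ∈ s ∩ f ⁻¹' V ∧ (if g v ∈ C then N (f v) + 1 else 1) ≤ n+1} =
            ((s ∩ f ⁻¹' V) ∩ g ⁻¹' Cᶜ) ∪ (s ∩ f ⁻¹' {v | v ∈ V ∧ N v ≤ n}) := by
          ext w
          simp only [mem_ofPred_eq, mem_union, mem_inter_iff, mem_preimage, mem_compl_iff]
          by_cases hw : g w ∈ C
          · simp only [hw, if_true, not_true, and_false, false_or, add_le_add_iff_right]; tauto
          · simp only [hw, if_false, not_false_eq_true, and_true]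
            constructor
            · rintro ⟨h1, -⟩; exact Or.inl h1
            · rintro (h1 | h1)
              · exact ⟨h1, by omega⟩
              · exact ⟨⟨h1.1, h1.2.1⟩, by omega⟩
        rw [this]
        exact (hV'.inter hgC).union (hs0.to.inter (fTC.preimage (N1 n)))
    · by_cases hw' : g w ∈ C
      · simp only [hw', if_true]
        rw [hin w hw.1 hw', Nat.odd_add_one, N2 _ hw.2]
      · simp only [hw', if_false]
        simp [hout w hw.1 hw']
  obtain ⟨k0, hk0⟩ := hne
  let Q : Set Cantor → Prop := fun S => S ∩ K = ∅
  have locs : ∀ v ∈ s, v ∉ K → ∃ V, t0.TO V ∧ v ∈ V ∧ V ⊆ s ∧ Simple t0 X V := by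
    intro v hv hvK
    by_contra hcon
    push Not at hcon
    exact hvK ⟨hv, hcon⟩
  have hQ : ∀ v ∈ s, v ∉ K → ∃ n, Q (t0.nb v n) := by
    intro v hv hvK
    obtain ⟨V, hV, hvV, hVs, hS⟩ := locs v hv hvK
    obtain ⟨n, hn⟩ := hV.nb hvV
    refine ⟨n, ?_⟩
    ext w
    simp only [mem_inter_iff, mem_empty_iff_false, iff_false]
    rintro ⟨hw1, hw2⟩
    exact hw2.2 V hV (hn hw1) hVs hS
  let Good : Set Cantor → ℕ → (Cantor → Cantor) → Prop := fun S n ρ => TC t0 t0 ρ ∧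
    (∃ κ ∈ K, (∀ w ∈ S, κ ∈ t0.nb w (n-1)) ∧ ∀ x, ρ x ∈ t0.nb (f κ) n ∩ s) ∧ ∀ w ∈ S ∩ s, (w ∈ Xᶜ ↔ ρ w ∈ X)
  have hgood : ∀ v ∈ s, v ∉ K → 1 ≤ t0.nn Q v ∧ ∃ ρ, Good (t0.nb v (t0.nn Q v)) (t0.nn Q v) ρ := by
    intro v hv hvK
    have hq := nn_spec t0 Q (hQ v hv hvK)
    set n := t0.nn Q v with hn
    have hn1 : 1 ≤ n := by
      by_contra h0
      have h0 : n = 0 := by omega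
      rw [h0] at hq
      have : k0 ∈ t0.nb v 0 ∩ K := ⟨fun i hi => by omega, hk0⟩
      rw [hq] at this; exact this
    refine ⟨hn1, ?_⟩
    have : ¬ Q (t0.nb v (n-1)) := by
      intro h'
      have := nn_le t0 Q h'
      omega
    obtain ⟨κ, hκ1, hκ2⟩ := nonempty_iff_ne_empty.2 this
    have hV : t0.TCl (t0.nb v n ∩ s) := (t0.nb_cl v n).inter hs0
    have hVs : Simple t0 X (t0.nb v n ∩ s) := by
      refine simple_of_local hV.to (fun w hw => ?_)
      have hwK : w ∉ K := by
        intro h'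
        have : w ∈ t0.nb v n ∩ K := ⟨hw.1, h'⟩
        rw [hq] at this; exact this
      obtain ⟨P, hP, hwP, -, hS⟩ := locs w hw.2 hwK
      exact ⟨P, hP, hwP, hS⟩
    have hB : t0.TCl (t0.nb (f κ) n ∩ s) := (t0.nb_cl (f κ) n).inter hs0
    rcases wadge t0 t0 hV ⟨v, t0.mem_nb _ _, hv⟩ hB ⟨f κ, t0.mem_nb _ _, fs κ⟩ c.mX.compl c.mX with ⟨ρ, ρ1, ρ2, ρ3⟩ | hr
    · refine ⟨ρ, ρ1, ⟨κ, hκ2, fun w hw => ?_, ρ2⟩, ρ3⟩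
      rw [nb_eq t0 hw (by omega)]
      exact hκ1
    · exfalso
      rw [compl_compl] at hr
      exact (fK κ hκ2).2 _ hB.to ⟨t0.mem_nb _ _, fs κ⟩ inter_subset_right (hVs.pull hB.to hr)
  have : ∀ S n, ∃ ρ : Cantor → Cantor, (∃ ρ, Good S n ρ) → Good S n ρ := by
    intro S n
    by_cases h' : ∃ ρ, Good S n ρ
    · exact ⟨h'.choose, fun _ => h'.choose_spec⟩
    · exact ⟨fun x => x, fun h'' => absurd h'' h'⟩
  choose Rho hRho using this
  let r : Cantor → Cantor := fun v => if v ∈ K then f v else if v ∈ s then Rho (t0.nb v (t0.nn Q v)) (t0.nn Q v) v else k0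
  have r1 : ∀ v ∈ K, r v = f v := fun v hv => if_pos hv
  have r2 : ∀ v ∈ s, v ∉ K → r v = Rho (t0.nb v (t0.nn Q v)) (t0.nn Q v) v := fun v hv hv' => by
    simp only [r, if_neg hv', if_pos hv]
  have Ks : ∀ v ∈ K, v ∈ s := fun v hv => hv.1
  have r3 : ∀ v ∉ s, r v = k0 := fun v hv => by
    simp only [r, if_neg hv, if_neg (fun h' => hv (Ks v h'))]
  have G : ∀ v ∈ s, v ∉ K → Good (t0.nb v (t0.nn Q v)) (t0.nn Q v) (Rho (t0.nb v (t0.nn Q v)) (t0.nn Q v)) :=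
    fun v hv hvK => hRho _ _ (hgood v hv hvK).2
  refine c.nsd t0 (TC.id t0) ⟨r, ?_, fun v => ?_, fun v hv => ?_⟩
  · apply TC.of_nb
    intro v m
    by_cases hv : v ∈ s
    · obtain ⟨n0, hn0⟩ := hs0.to.nb hv
      by_cases hvK : v ∈ K
      · obtain ⟨n1, hn1⟩ := fTC.nb v m
        refine ⟨n0 + n1 + m, fun w hw => ?_⟩
        have hws : w ∈ s := hn0 (t0.nb_mono v (by omega) hw)
        rw [r1 v hvK]
        by_cases hwK : w ∈ K
        · rw [r1 w hwK]; exact hn1 w (t0.nb_mono v (by omega) hw)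
        · rw [r2 w hws hwK]
          obtain ⟨κ, hκK, hκ, hκ2⟩ := (G w hws hwK).2.1
          have hlt : n0 + n1 + m < t0.nn Q w := by
            by_contra hle
            have hq := nn_spec t0 Q (hQ w hws hwK)
            have : v ∈ t0.nb w (t0.nn Q w) ∩ K := ⟨t0.nb_mono w (by omega) (t0.nb_symm hw), hvK⟩
            rw [hq] at this; exact this
          have h1 : κ ∈ t0.nb w (n0 + n1 + m) := t0.nb_mono w (by omega) (hκ w (t0.mem_nb _ _))
          have h2 : κ ∈ t0.nb v n1 := by
            rw [nb_eq t0 hw le_rfl] at h1; exact t0.nb_mono v (by omega) h1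
          have h3 := hn1 κ h2
          have h4 := t0.nb_mono _ (show m ≤ t0.nn Q w by omega) (hκ2 w).1
          rw [nb_eq t0 h3 le_rfl] at h4
          exact h4
      · obtain ⟨n1, hn1⟩ := (G v hv hvK).1.nb v m
        refine ⟨n0 + n1 + t0.nn Q v, fun w hw => ?_⟩
        have hws : w ∈ s := hn0 (t0.nb_mono v (by omega) hw)
        have hw1 := t0.nb_mono v (show t0.nn Q v ≤ n0 + n1 + t0.nn Q v by omega) hw
        have hwK : w ∉ K := by
          intro h'
          have hq := nn_spec t0 Q (hQ v hv hvK)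
          have : w ∈ t0.nb v (t0.nn Q v) ∩ K := ⟨hw1, h'⟩
          rw [hq] at this; exact this
        rw [r2 v hv hvK, r2 w hws hwK, nn_eq t0 Q (hQ v hv hvK) hw1, nb_eq t0 hw1 le_rfl]
        exact hn1 w (t0.nb_mono v (by omega) hw)
    · obtain ⟨n0, hn0⟩ := hs0.toc.nb hv
      refine ⟨n0, fun w hw => ?_⟩
      rw [r3 v hv, r3 w (hn0 hw)]; exact t0.mem_nb _ _
  · by_cases hv : v ∈ s
    · by_cases hvK : v ∈ K
      · rw [r1 v hvK]; exact fs v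
      · rw [r2 v hv hvK]
        obtain ⟨κ, -, -, hκ2⟩ := (G v hv hvK).2.1
        exact (hκ2 v).2
    · rw [r3 v hv]; exact hk0.1
  · by_cases hvK : v ∈ K
    · rw [r1 v hvK, mem_compl_iff, hin v hv (KC v hvK), not_not]
    · rw [r2 v hv hvK]
      exact (G v hv hvK).2.2 v ⟨t0.mem_nb _ _, hv⟩

end Pres

end

/-! Part 13 -/
section
open Set

namespace Pres

theorem exists_out {X : Set Cantor} {t0 : Pres} {s : Set Cantor} (c : Ctx X t0 s) (hne : (Core t0 X s).Nonempty) : ∃ a ∈ s, a ∉ X := by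
  obtain ⟨k, hk⟩ := c.ns
  obtain ⟨f, f1, f2, f3⟩ := lemmaC c hne (t := t0) (C := ∅) (h := fun _ => k) (TO.of_open t0 (by simp)) (TC.const _ _ _) (fun _ => hk)
  exact ⟨f k, f2 k, fun h => ((f3 k (mem_univ _)).2 h).1⟩

open Classical in
theorem self_red {X : Set Cantor} (hd : Dense X) (hh : IsHomogeneous X) {t0 : Pres} {s : Set Cantor} (c : Ctx X t0 s) (hne : (Core t0 X s).Nonempty) :
    ∃ f : Cantor → Cantor, Continuous f ∧ (∀ v, f v ∈ s) ∧ X = f ⁻¹' X := by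
  obtain ⟨a, has, haX⟩ := exists_out c hne
  obtain ⟨T, G, h, hT, hdis, hcov, hp⟩ := hom_part hd hh c.cs c.ns
  obtain ⟨t, ht, hV⟩ := exists_finer t0 (ι := Unit ⊕ (ℕ ⊕ (ℕ × List ℕ))) (fun q => match q with
    | Sum.inl _ => (⋃ n, T n)ᶜ
    | Sum.inr (Sum.inl n) => (G n)ᶜ
    | Sum.inr (Sum.inr (n, l)) => (G n)ᶜ ∪ h n ⁻¹' (t0.e ⁻¹' lcyl l)) (by
      rintro (_ | n | ⟨n, l⟩)
      · exact IsFsigma.of_closed (isOpen_iUnion (fun n => (hT n).2)).isClosed_compl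
      · exact (hp n).1
      · exact fs_pre (hp n).1 (hp n).2.1 (t0.fs _ (lcyl_open l).2))
  have hU : t.TO (⋃ n, T n)ᶜ := hV (Sum.inl ())
  have hG : ∀ n, t.TO (G n)ᶜ := fun n => hV (Sum.inr (Sum.inl n))
  have hH : ∀ n l, t.TO ((G n)ᶜ ∪ h n ⁻¹' (t0.e ⁻¹' lcyl l)) := fun n l => hV (Sum.inr (Sum.inr (n, l)))
  have : ∀ n, ∃ F, TC t t0 F ∧ (∀ v, F v ∈ s) ∧ ∀ v ∈ T n, (v ∈ X ↔ F v ∈ X) := by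
    intro n
    rcases (G n).eq_empty_or_nonempty with he | hGne
    · refine ⟨fun _ => a, TC.const _ _ _, fun _ => has, fun v hv => ?_⟩
      rw [(hp n).2.2.2 v hv, he]; simp [haX]
    · obtain ⟨r, r1, r2, r3⟩ := retract t (hG n) hGne
      have hTC : TC t t0 (fun v => h n (r v)) := by
        apply TC.of_lcyl
        intro l
        have e : (fun v => h n (r v)) ⁻¹' (t0.e ⁻¹' lcyl l) = r ⁻¹' ((G n)ᶜ ∪ h n ⁻¹' (t0.e ⁻¹' lcyl l)) := by
          ext v
          have := r2 v
          simp only [mem_preimage, mem_union, mem_compl_iff, this, not_true, false_or]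
        rw [e]; exact r1.preimage (hH n l)
      obtain ⟨F, F1, F2, F3⟩ := lemmaC c hne (hG n) hTC (fun v => (hp n).2.2.1 (r2 v))
      refine ⟨F, F1, F2, fun v hv => ?_⟩
      rw [← F3 v (mem_univ _), (hp n).2.2.2 v hv]
      refine and_congr_right (fun hvG => ?_)
      simp only [mem_preimage, r3 v hvG]
  choose F F1 F2 F3 using this
  let Φ : Cantor → Cantor := fun v => if hv : ∃ n, v ∈ T n then F hv.choose v else a
  have Φ1 : ∀ n, ∀ v ∈ T n, Φ v = F n v := by
    intro n v hv
    have h' : ∃ n, v ∈ T n := ⟨n, hv⟩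
    simp only [Φ, dif_pos h', hdis _ _ v h'.choose_spec hv]
  have Φ2 : ∀ v ∈ (⋃ n, T n)ᶜ, Φ v = a := by
    intro v hv
    have h' : ¬ ∃ n, v ∈ T n := fun ⟨n, h⟩ => hv (mem_iUnion.2 ⟨n, h⟩)
    simp only [Φ, dif_neg h']
  have hred : Red t univ X t0 s X := by
    refine ⟨Φ, TC.glue (fun v => ?_), fun v => ?_, fun v _ => ?_⟩
    · by_cases hv : v ∈ ⋃ n, T n
      · obtain ⟨n, hn⟩ := mem_iUnion.1 hv
        exact ⟨T n, TO.of_open t (hT n).2, hn, F n, F1 n, Φ1 n⟩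
      · exact ⟨_, hU, hv, _, TC.const _ _ a, Φ2⟩
    · by_cases hv : v ∈ ⋃ n, T n
      · obtain ⟨n, hn⟩ := mem_iUnion.1 hv
        rw [Φ1 n v hn]; exact F2 n v
      · rw [Φ2 v hv]; exact has
    · by_cases hv : v ∈ ⋃ n, T n
      · obtain ⟨n, hn⟩ := mem_iUnion.1 hv
        rw [Φ1 n v hn]; exact F3 n v hn
      · rw [Φ2 v hv]
        simp only [haX, iff_false]
        exact fun h' => hv (hcov h')
  exact lemmaB c c.mX ht hred

end Pres

end

/-! Part 14 -/
section
open Set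

namespace Semi

noncomputable def u : ℕ ≃ ℕ × List Bool := (nonempty_equiv_of_countable (α := ℕ) (β := ℕ × List Bool)).some

def comp (l l' : List Bool) : Prop := ∀ j, j < l.length → j < l'.length → l.getD j false = l'.getD j false
def isp (l : List Bool) (w : Cantor) : Prop := ∀ j < l.length, l.getD j false = w j
def pre (w : Cantor) (n : ℕ) : List Bool := (List.range n).map w
theorem pre_len (w : Cantor) (n : ℕ) : (pre w n).length = n := by simp [pre]
theorem pre_isp (w : Cantor) (n : ℕ) : isp (pre w n) w := by
  intro j hj
  rw [pre_len] at hj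
  simp [pre, hj]
theorem isp_uniq {l l' : List Bool} {w : Cantor} (h : isp l w) (h' : isp l' w) (hl : l.length = l'.length) : l = l' := by
  apply List.ext_getElem hl
  intro j h1 h2
  have a := h j h1
  have b := h' j h2
  rw [List.getD_eq_getElem _ _ h1] at a
  rw [List.getD_eq_getElem _ _ h2] at b
  rw [a, b]

noncomputable def code (i : ℕ) (w : Cantor) (n : ℕ) : ℕ := u.symm (i, pre w n)
theorem u_code (i w n) : u (code i w n) = (i, pre w n) := by simp [code]
theorem code_inj (i : ℕ) (w : Cantor) : Function.Injective (code i w) := by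
  intro m n h
  have := congrArg (fun a => (u a).2.length) h
  simpa [u_code, pre_len] using this

theorem esc {s : ℕ → ℕ} (hs : Function.Injective s) {F : Set ℕ} (hF : F.Finite) : ∃ M, ∀ m ≥ M, s m ∉ F := by
  have : (s ⁻¹' F).Finite := hF.preimage hs.injOn
  obtain ⟨M, hM⟩ := this.bddAbove
  exact ⟨M + 1, fun m hm h => by have := hM h; omega⟩

def D (N i : ℕ) : Set Cantor := {x | ∀ a b, N ≤ a → N ≤ b → x a = true → x b = true → (u a).1 = i ∧ comp (u a).2 (u b).2}

open Classical in
noncomputable def A (i : ℕ) (w : Cantor) : Cantor := fun a => decide ((u a).1 = i ∧ isp (u a).2 w)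
theorem mem_A {i w a} : A i w a = true ↔ (u a).1 = i ∧ isp (u a).2 w := by simp [A]
theorem code_A (i w n) : A i w (code i w n) = true := by rw [mem_A, u_code]; exact ⟨rfl, pre_isp _ _⟩

def EqF (x y : Cantor) : Prop := {n | x n ≠ y n}.Finite
theorem EqF.symm {x y} (h : EqF x y) : EqF y x := by
  exact Set.Finite.subset h (fun n hn => Ne.symm hn)
theorem EqF.trans {x y z} (h : EqF x y) (h' : EqF y z) : EqF x z := by
  refine (Set.Finite.union h h').subset (fun n hn => ?_)
  by_contra hc
  simp only [mem_union, mem_ofPred_eq, not_or, not_not] at hc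
  exact hn (hc.1.trans hc.2)

theorem A_D (i w) : A i w ∈ D 0 i := by
  intro a b _ _ ha hb
  rw [mem_A] at ha hb
  exact ⟨ha.1, fun j h1 h2 => (ha.2 j h1).trans (hb.2 j h2).symm⟩

theorem D_down {N i} {x y : Cantor} (hy : y ∈ D N i) (h : ∀ n, x n = true → y n = true) : x ∈ D N i :=
  fun a b ha hb h1 h2 => hy a b ha hb (h _ h1) (h _ h2)

theorem D_fin {N i} {x y : Cantor} (hx : x ∈ D N i) (h : EqF x y) : ∃ N', y ∈ D N' i := by
  obtain ⟨M, hM⟩ := Set.Finite.bddAbove h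
  have key : ∀ a, M + 1 ≤ a → x a = y a := fun a ha => by
    by_contra hc
    have := hM hc; omega
  refine ⟨max N (M+1), fun a b ha hb h1 h2 => hx a b (by omega) (by omega) ?_ ?_⟩
  · rw [key a (by omega), h1]
  · rw [key b (by omega), h2]

theorem A_inj {i i' w w'} (h : EqF (A i w) (A i' w')) : i = i' ∧ w = w' := by
  obtain ⟨M, hM⟩ := esc (code_inj i w) h
  have key : ∀ m ≥ M, i = i' ∧ isp (pre w m) w' := by
    intro m hm
    have := hM m hm
    simp only [mem_ofPred_eq, not_not, code_A] at this
    have := mem_A.1 this.symm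
    rwa [u_code] at this
  refine ⟨(key M le_rfl).1, funext fun j => ?_⟩
  have h1 := (key (M+j+1) (by omega)).2 j (by rw [pre_len]; omega)
  have h2 := pre_isp w (M+j+1) j (by rw [pre_len]; omega)
  rw [← h1, ← h2]

theorem A_sub {i j N w} {y : Cantor} (h : {n | A i w n = true ∧ ¬ y n = true}.Finite) (hy : y ∈ D N j) : j = i ∧ EqF y (A i w) := by
  obtain ⟨M, hM⟩ := esc (code_inj i w) (h.union (Set.finite_Iio N))
  have k1 : ∀ m ≥ M, y (code i w m) = true ∧ N ≤ code i w m := by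
    intro m hm
    have := hM m hm
    simp only [mem_union, mem_ofPred_eq, code_A, true_and, not_or, not_not, mem_Iio, not_lt] at this
    exact this
  have hj : j = i := by
    have := (hy _ _ (k1 M le_rfl).2 (k1 M le_rfl).2 (k1 M le_rfl).1 (k1 M le_rfl).1).1
    rw [u_code] at this; exact this.symm
  refine ⟨hj, (h.union (Set.finite_Iio N)).subset (fun a ha => ?_)⟩
  by_cases haN : a < N
  · exact Or.inr haN
  left
  by_cases hya : y a = true
  · exfalso
    apply ha
    rw [hya, eq_comm, mem_A]
    have := k1 (M + (u a).2.length) (by omega)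
    have := hy a _ (by omega) this.2 hya this.1
    refine ⟨this.1.trans hj, fun k hk => ?_⟩
    rw [u_code] at this
    have h2 := this.2 k hk (by rw [pre_len]; omega)
    rw [h2]
    exact pre_isp _ _ _ (by rw [pre_len]; omega)
  · refine ⟨?_, hya⟩
    by_contra hc
    apply ha
    simp only [Bool.not_eq_true] at hya hc
    rw [hya, hc]

def S (W : ℕ → Set Cantor) : Set Cantor := {x | (∀ N i, x ∉ D N i) ∨ ∃ i w, w ∈ W i ∧ EqF x (A i w)}

theorem S_A {W i w} {x : Cantor} (h : EqF x (A i w)) : x ∈ S W ↔ w ∈ W i := by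
  constructor
  · rintro (h' | ⟨i', w', hw, h'⟩)
    · obtain ⟨N, hN⟩ := D_fin (A_D i w) h.symm
      exact absurd hN (h' _ _)
    · obtain ⟨rfl, rfl⟩ := A_inj (h.symm.trans h')
      exact hw
  · exact fun hw => Or.inr ⟨i, w, hw, h⟩

theorem S_semi (W) : IsSemifilter (S W) := by
  refine ⟨?_, ?_, ?_, ?_⟩
  · rintro (h | ⟨i, w, hw, h⟩)
    · exact h 0 0 (fun a b _ _ h => by simp at h)
    · obtain ⟨M, hM⟩ := esc (code_inj i w) h
      have := hM M le_rfl
      simp [code_A] at this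
  · left
    intro N i h
    obtain ⟨M, hM⟩ := esc (code_inj (i+1) (fun _ => true)) (Set.finite_Iio N)
    have h1 := hM M le_rfl
    simp only [mem_Iio, not_lt] at h1
    have := (h _ _ h1 h1 rfl rfl).1
    rw [u_code] at this
    simp at this
  · rintro x (h | ⟨i, w, hw, h⟩) y hxy
    · exact Or.inl (fun N i hy => h N i (D_down hy hxy))
    · by_cases hy : ∀ N i, y ∉ D N i
      · exact Or.inl hy
      · push Not at hy
        obtain ⟨N, j, hy⟩ := hy
        refine Or.inr ⟨i, w, hw, (A_sub (h.subset ?_) hy).2⟩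
        rintro n ⟨h1, h2⟩ h3
        exact h2 (hxy n (h3.trans h1))
  · rintro x (h | ⟨i, w, hw, h⟩) y hxy
    · left
      intro N i hy
      obtain ⟨N', h'⟩ := D_fin hy (EqF.symm hxy)
      exact h _ _ h'
    · exact Or.inr ⟨i, w, hw, (EqF.symm hxy).trans h⟩

theorem D_closed (N i) : IsClosed (D N i) := by
  have : D N i = ⋂ a, ⋂ b, {x : Cantor | N ≤ a → N ≤ b → x a = true → x b = true → (u a).1 = i ∧ comp (u a).2 (u b).2} := by
    ext x; simp only [D, mem_iInter, mem_ofPred_eq]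
  rw [this]
  refine isClosed_iInter (fun a => isClosed_iInter (fun b => ?_))
  by_cases hc : N ≤ a ∧ N ≤ b ∧ ¬ ((u a).1 = i ∧ comp (u a).2 (u b).2)
  · have : {x : Cantor | N ≤ a → N ≤ b → x a = true → x b = true → (u a).1 = i ∧ comp (u a).2 (u b).2} = ((fun x : Cantor => (x a, x b)) ⁻¹' {(true, true)})ᶜ := by
      ext x; simp only [mem_ofPred_eq, mem_compl_iff, mem_preimage, mem_singleton_iff, Prod.mk.injEq]; tauto
    rw [this]
    exact (((isClopen_discrete _).preimage ((continuous_apply a).prodMk (continuous_apply b))).compl).1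
  · have : {x : Cantor | N ≤ a → N ≤ b → x a = true → x b = true → (u a).1 = i ∧ comp (u a).2 (u b).2} = univ := by
      ext x; simp only [mem_ofPred_eq, mem_univ, iff_true]; tauto
    rw [this]; exact isClosed_univ

theorem D_dense (N i) : Dense (D N i)ᶜ := by
  intro x
  rw [mem_closure_iff]
  intro U hU hx
  obtain ⟨n, hn⟩ := exists_cylC hU hx
  obtain ⟨M, hM⟩ := esc (code_inj (i+1) (fun _ => true)) (Set.finite_Iio (max N n))
  have h1 := hM M le_rfl
  simp only [mem_Iio, not_lt] at h1
  refine ⟨fun a => if a < n then x a else true, hn _ (fun i hi => by simp [hi]), fun h => ?_⟩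
  have h2 : ¬ code (i+1) (fun _ => true) M < n := by omega
  have := (h _ _ (show N ≤ _ by omega) (show N ≤ _ by omega) (if_neg h2) (if_neg h2)).1
  rw [u_code] at this
  simp at this

theorem baire_of {S : Set Cantor} {G : ℕ → Set Cantor} (h1 : ∀ n, IsOpen (G n)) (h2 : ∀ n, Dense (G n)) (h3 : ⋂ n, G n ⊆ S) : BaireSpace S := by
  constructor
  intro f fo fd
  have hS : Dense S := (dense_iInter_of_isOpen h1 h2).mono h3
  have : ∀ n, ∃ U : Set Cantor, IsOpen U ∧ Subtype.val ⁻¹' U = f n := fun n => isOpen_induced_iff.1 (fo n)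
  choose U hU hUf using this
  have hUd : ∀ n, Dense (U n) := by
    intro n
    rw [dense_iff_inter_open]
    intro V hV hVn
    obtain ⟨x, hx, hxS⟩ := hS.inter_open_nonempty V hV hVn
    obtain ⟨y, hy1, hy2⟩ := (fd n).inter_open_nonempty (Subtype.val ⁻¹' V) (hV.preimage continuous_subtype_val) ⟨⟨x, hxS⟩, hx⟩
    rw [← hUf] at hy2
    exact ⟨y, hy1, hy2⟩
  rw [dense_iff_inter_open]
  intro V hV ⟨v, hv⟩
  obtain ⟨V', hV', rfl⟩ := isOpen_induced_iff.1 hV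
  have hd : Dense (⋂ n, U n ∩ G n) := by
    apply dense_iInter_of_isOpen
    · exact fun n => (hU n).inter (h1 n)
    · exact fun n => (hUd n).inter_of_isOpen_left (h2 n) (hU n)
  obtain ⟨x, hx1, hx2⟩ := hd.inter_open_nonempty V' hV' ⟨v, hv⟩
  rw [mem_iInter] at hx2
  refine ⟨⟨x, h3 (mem_iInter.2 fun n => (hx2 n).2)⟩, hx1, mem_iInter.2 fun n => ?_⟩
  rw [← hUf]; exact (hx2 n).1

theorem S_baire (W) : BaireSpace (S W) := by
  refine baire_of (G := fun n => (D n.unpair.1 n.unpair.2)ᶜ) (fun n => (D_closed _ _).isOpen_compl) (fun n => D_dense _ _) ?_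
  intro x hx
  left
  intro N i
  have := mem_iInter.1 hx (Nat.pair N i)
  simpa using this

def Lv (N i m : ℕ) : Set ℕ := {a | N ≤ a ∧ (u a).1 = i ∧ (u a).2.length = m}
theorem Lv_fin (N i m) : (Lv N i m).Finite := by
  have : ((fun l => u.symm (i, l)) '' {l : List Bool | l.length = m}).Finite := (List.finite_length_eq Bool m).image _
  refine this.subset (fun a ha => ⟨(u a).2, ha.2.2, ?_⟩)
  simp [← ha.2.1]

theorem clopen_fin {F : Set ℕ} (hF : F.Finite) : IsClopen {x : Cantor | ∃ a ∈ F, x a = true} := by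
  have : {x : Cantor | ∃ a ∈ F, x a = true} = ⋃ a ∈ F, (fun x : Cantor => x a) ⁻¹' {true} := by ext; simp
  rw [this]
  exact hF.isClopen_biUnion (fun a _ => (isClopen_discrete _).preimage (continuous_apply a))

def E (N M i : ℕ) : Set Cantor := {x | x ∈ D N i ∧ ∀ m ≥ M, ∃ a ∈ Lv N i m, x a = true}
theorem E_closed (N M i) : IsClosed (E N M i) := by
  have : E N M i = D N i ∩ ⋂ m, ⋂ (_ : m ≥ M), {x : Cantor | ∃ a ∈ Lv N i m, x a = true} := by
    ext x; simp [E]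
  rw [this]
  exact (D_closed _ _).inter (isClosed_iInter fun m => isClosed_iInter fun _ => (clopen_fin (Lv_fin _ _ _)).1)

open Classical in
noncomputable def wf (N M i : ℕ) (x : Cantor) : Cantor := fun j => decide (∃ a ∈ Lv N i (M+j+1) ∩ {a | (u a).2.getD j false = true}, x a = true)
theorem wf_cont (N M i) : Continuous (wf N M i) := by
  refine continuous_pi (fun j => ?_)
  rw [continuous_bool_rng true]
  convert clopen_fin ((Lv_fin N i (M+j+1)).subset (inter_subset_left (t := {a | (u a).2.getD j false = true}))) using 1
  ext x
  simp only [wf, mem_preimage, mem_singleton_iff, decide_eq_true_eq, mem_ofPred_eq]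

theorem E_eq {N M i x} (hx : x ∈ E N M i) : EqF x (A i (wf N M i x)) := by
  have k : ∀ a, N ≤ a → x a = true → A i (wf N M i x) a = true := by
    intro a ha hxa
    rw [mem_A]
    refine ⟨(hx.1 a a ha ha hxa hxa).1, fun j hj => ?_⟩
    obtain ⟨b, hb, hxb⟩ := hx.2 (M+j+1) (by omega)
    have hab := (hx.1 a b ha hb.1 hxa hxb).2 j hj (by rw [hb.2.2]; omega)
    rw [Bool.eq_iff_iff]
    simp only [wf, decide_eq_true_eq]
    constructor
    · intro h
      exact ⟨b, ⟨hb, by rw [mem_ofPred_eq, ← hab, h]⟩, hxb⟩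
    · rintro ⟨b', ⟨hb', hbj⟩, hxb'⟩
      have := (hx.1 a b' ha hb'.1 hxa hxb').2 j hj (by rw [hb'.2.2]; omega)
      rw [this]; exact hbj
  refine ((Set.finite_Iio N).union (Set.Finite.biUnion (Set.finite_Iio M) (fun m _ => Lv_fin N i m))).subset (fun a ha => ?_)
  by_cases haN : a < N
  · exact Or.inl haN
  right
  have hxa : ¬ x a = true := fun h => ha (by rw [h, k a (by omega) h])
  have hA : A i (wf N M i x) a = true := by
    by_contra hc
    apply ha
    simp only [Bool.not_eq_true] at hxa hc
    rw [hxa, hc]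
  simp only [mem_iUnion]
  refine ⟨(u a).2.length, ?_, by omega, (mem_A.1 hA).1, rfl⟩
  rw [mem_Iio]
  by_contra hm
  obtain ⟨b, hb, hxb⟩ := hx.2 (u a).2.length (by omega)
  have hAb := mem_A.1 (k b hb.1 hxb)
  have hA' := mem_A.1 hA
  have : u a = u b := Prod.ext (hA'.1.trans hAb.1.symm) (isp_uniq hA'.2 hAb.2 hb.2.2.symm)
  rw [u.injective this] at hxa
  exact hxa hxb

theorem D_eq {N i i' w x} (hx : x ∈ D N i) (h : EqF x (A i' w)) : i' = i ∧ ∃ M, x ∈ E N M i := by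
  have := A_sub (h.subset (fun n hn h' => hn.2 (h'.trans hn.1))) hx
  obtain ⟨rfl, -⟩ := this
  refine ⟨rfl, ?_⟩
  obtain ⟨M, hM⟩ := esc (code_inj i w) (Set.Finite.union h (Set.finite_Iio N))
  refine ⟨M, hx, fun m hm => ⟨code i w m, ?_, ?_⟩⟩
  · have := hM m hm
    simp only [mem_union, mem_Iio, not_or, not_lt] at this
    exact ⟨this.2, by rw [u_code], by rw [u_code, pre_len]⟩
  · have := hM m hm
    simp only [mem_union, mem_ofPred_eq, code_A, not_or, not_not] at this
    exact this.1

theorem S_D {W N i x} (hx : x ∈ D N i) : x ∈ S W ↔ ∃ M, x ∈ E N M i ∧ wf N M i x ∈ W i := by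
  constructor
  · rintro (h | ⟨i', w, hw, h⟩)
    · exact absurd hx (h _ _)
    · obtain ⟨rfl, M, hM⟩ := D_eq hx h
      obtain ⟨-, rfl⟩ := A_inj ((E_eq hM).symm.trans h)
      exact ⟨M, hM, hw⟩
  · rintro ⟨M, hM, hw⟩
    exact (S_A (E_eq hM)).2 hw

/-! the map into the semifilter -/
open Classical in
noncomputable def cc (C : ℕ → Set Cantor) (z : Cantor) (j : ℕ) : ℕ :=
  Nat.find (p := fun c => j ≤ c ∨ ∃ z', (∀ i < j, z' i = z i) ∧ z' ∈ C c) ⟨j, Or.inl le_rfl⟩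
theorem cc_spec (C z j) : j ≤ cc C z j ∨ ∃ z', (∀ i < j, z' i = z i) ∧ z' ∈ C (cc C z j) := by
  classical
  exact Nat.find_spec (p := fun c => j ≤ c ∨ ∃ z', (∀ i < j, z' i = z i) ∧ z' ∈ C c) ⟨j, Or.inl le_rfl⟩
theorem cc_le {C z j c} (h : j ≤ c ∨ ∃ z', (∀ i < j, z' i = z i) ∧ z' ∈ C c) : cc C z j ≤ c := by
  classical
  exact Nat.find_min' _ h
theorem cc_mono (C z) : Monotone (cc C z) := by
  intro j k hjk
  apply cc_le
  rcases cc_spec C z k with h | ⟨z', h1, h2⟩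
  · left; omega
  · right; exact ⟨z', fun i hi => h1 i (by omega), h2⟩
theorem cc_congr {C z z' j} (h : ∀ i < j, z i = z' i) : cc C z j = cc C z' j := by
  apply le_antisymm
  · apply cc_le
    rcases cc_spec C z' j with h' | ⟨z'', h1, h2⟩
    · exact Or.inl h'
    · exact Or.inr ⟨z'', fun i hi => by rw [h1 i hi, h i hi], h2⟩
  · apply cc_le
    rcases cc_spec C z j with h' | ⟨z'', h1, h2⟩
    · exact Or.inl h'
    · exact Or.inr ⟨z'', fun i hi => by rw [h1 i hi, h i hi], h2⟩

theorem cc_cases {C : ℕ → Set Cantor} (hC : ∀ i, IsClosed (C i)) (z : Cantor) :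
    (∃ i, z ∈ C i ∧ ∃ J, ∀ j ≥ J, cc C z j = i) ∨ ((∀ i, z ∉ C i) ∧ ∀ i, ∃ J, ∀ j ≥ J, i < cc C z j) := by
  by_cases hb : ∀ i, ∃ J, ∀ j ≥ J, i < cc C z j
  · right
    refine ⟨fun i hi => ?_, hb⟩
    obtain ⟨J, hJ⟩ := hb i
    have := hJ J le_rfl
    have h2 : cc C z J ≤ i := cc_le (Or.inr ⟨z, fun _ _ => rfl, hi⟩)
    omega
  · left
    push Not at hb
    obtain ⟨B, hB⟩ := hb
    have hB' : ∀ j, cc C z j ≤ B := fun j => by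
      obtain ⟨k, h1, h2⟩ := hB j
      exact (cc_mono C z h1).trans h2
    obtain ⟨J, hJ⟩ : ∃ J, ∀ j, cc C z j ≤ cc C z J := by
      have hf : (range (cc C z)).Finite := (Set.finite_Iic B).subset (by rintro _ ⟨j, rfl⟩; exact hB' j)
      obtain ⟨_, ⟨J, rfl⟩, hJ⟩ := hf.exists_maximalFor id _ (range_nonempty _)
      refine ⟨J, fun j => ?_⟩
      by_contra hc
      have := hJ (mem_range_self j) (by simp only [id]; omega)
      simp only [id] at this
      omega
    have hst : ∀ j ≥ J, cc C z j = cc C z J := fun j hj => le_antisymm (hJ j) (cc_mono C z hj)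
    refine ⟨cc C z J, ?_, J, hst⟩
    rw [← (hC _).closure_eq, mem_closure_iff]
    intro U hU hz
    obtain ⟨n, hn⟩ := exists_cylC hU hz
    rcases cc_spec C z (n + J + cc C z J + 1) with h | ⟨z', h1, h2⟩
    · have := hst (n + J + cc C z J + 1) (by omega)
      omega
    · rw [hst _ (by omega)] at h2
      exact ⟨z', hn _ (fun i hi => h1 i (by omega)), h2⟩

open Classical in
noncomputable def hh (C : ℕ → Set Cantor) (z : Cantor) : Cantor := fun a =>
  decide (isp (u a).2 z ∧ (u a).1 = cc C z (u a).2.length)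

theorem hh_cont (C) : Continuous (hh C) := by
  refine continuous_pi (fun a => ?_)
  refine continuous_iff_continuousAt.2 (fun z => ?_)
  have : ∀ᶠ z' in nhds z, hh C z' a = hh C z a := by
    filter_upwards [(cyl_clopen z (u a).2.length).2.mem_nhds (fun _ _ => rfl)] with z' hz
    have hz' : ∀ i < (u a).2.length, z' i = z i := hz
    have e1 : isp (u a).2 z' ↔ isp (u a).2 z := by
      unfold isp
      exact forall₂_congr (fun j hj => by rw [hz' j hj])
    have e2 : cc C z' (u a).2.length = cc C z (u a).2.length := cc_congr hz'
    unfold hh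
    rw [decide_eq_decide, e1, e2]
  exact (continuousAt_const (y := hh C z a)).congr (this.mono (fun y hy => hy.symm))

theorem hh_stab {C z i J} (h : ∀ j ≥ J, cc C z j = i) : EqF (hh C z) (A i z) := by
  have hf : (⋃ j ∈ Iio J, ({code i z j, code (cc C z j) z j} : Set ℕ)).Finite := Set.Finite.biUnion (Set.finite_Iio J) (fun j _ => by simp)
  refine hf.subset (fun a ha => ?_)
  have h1 : isp (u a).2 z ∧ ((u a).1 = i ∨ (u a).1 = cc C z (u a).2.length) ∧ (u a).2.length < J := by
    have ha' : ¬ (hh C z a = A i z a) := ha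
    rw [Bool.eq_iff_iff, mem_A] at ha'
    simp only [hh, decide_eq_true_eq] at ha'
    by_cases hj : (u a).2.length < J
    · tauto
    · rw [h _ (by omega)] at ha'
      tauto
  simp only [mem_iUnion]
  refine ⟨(u a).2.length, h1.2.2, ?_⟩
  have hp : (u a).2 = pre z (u a).2.length := isp_uniq h1.1 (pre_isp _ _) (pre_len _ _).symm
  rcases h1.2.1 with h2 | h2
  · left
    apply u.injective; rw [u_code]; exact Prod.ext h2 hp
  · right
    apply u.injective; rw [u_code]; exact Prod.ext h2 hp

theorem hh_unb {C z} (h : ∀ i, ∃ J, ∀ j ≥ J, i < cc C z j) (N i) : hh C z ∉ D N i := by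
  intro hD
  obtain ⟨J, hJ⟩ := h i
  have hin : Function.Injective (fun j => code (cc C z j) z j) := by
    intro m n h
    have := congrArg (fun a => (u a).2.length) h
    simpa [u_code, pre_len] using this
  obtain ⟨M, hM⟩ := esc hin (Set.finite_Iio N)
  have h1 := hM (M + J) (by omega)
  simp only [mem_Iio, not_lt] at h1
  have hx : hh C z (code (cc C z (M+J)) z (M+J)) = true := by
    simp only [hh, decide_eq_true_eq, u_code, pre_len, and_true]
    exact pre_isp _ _
  have h2 := (hD _ _ h1 h1 hx hx).1
  rw [u_code] at h2
  have := hJ (M+J) (by omega)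
  simp only at h2
  omega

theorem hh_red {C W : ℕ → Set Cantor} {s X : Set Cantor} (hC : ∀ i, IsClosed (C i)) (hCW : ∀ i, C i ⊆ W i) (hs : s \ X ⊆ ⋃ i, C i) {z : Cantor} (hz : z ∈ s) :
    z ∈ X ↔ hh C z ∈ S (fun i => W i ∩ X) := by
  rcases cc_cases hC z with ⟨i, hi, J, hJ⟩ | ⟨h1, h2⟩
  · rw [S_A (hh_stab hJ)]
    exact ⟨fun h => ⟨hCW i hi, h⟩, fun h => h.2⟩
  · refine iff_of_true ?_ (Or.inl (fun N i => hh_unb h2 N i))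
    by_contra hX
    obtain ⟨i, hi⟩ := mem_iUnion.1 (hs ⟨hz, hX⟩)
    exact h1 i hi

end Semi

end

/-! Part 15 -/
section
open Set

namespace Pres

open Classical in
noncomputable def waitf (P : ℕ → Set Cantor) (φ : ℕ → Cantor → Cantor) (a : Cantor) (x : Cantor) : Cantor :=
  if h : ∃ k, x ∈ P k then φ (Nat.find h) x else a

theorem waitf_pos {P : ℕ → Set Cantor} {φ : ℕ → Cantor → Cantor} {a x : Cantor} (h : ∃ k, x ∈ P k) :
    ∃ k, x ∈ P k ∧ (∀ j < k, x ∉ P j) ∧ waitf P φ a x = φ k x := by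
  classical
  exact ⟨Nat.find h, Nat.find_spec h, fun j hj => Nat.find_min h hj, by rw [waitf, dif_pos h]⟩

theorem waitf_neg {P : ℕ → Set Cantor} {φ : ℕ → Cantor → Cantor} {a x : Cantor} (h : ¬ ∃ k, x ∈ P k) :
    waitf P φ a x = a := by rw [waitf, dif_neg h]

theorem TCl.avoid {t : Pres} {P : ℕ → Set Cantor} (hP : ∀ k, t.TCl (P k)) (m : ℕ) : t.TO {x | ∀ j < m, x ∉ P j} := by
  induction m with
  | zero => exact TO.of_open t (by simp)
  | succ m ih =>
    have : {x | ∀ j < m + 1, x ∉ P j} = {x | ∀ j < m, x ∉ P j} ∩ (P m)ᶜ := by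
      ext x
      simp only [mem_ofPred_eq, mem_inter_iff, mem_compl_iff]
      exact Nat.forall_lt_succ_right
    rw [this]
    exact ih.inter (hP m).toc

theorem waitf_TC {t t' : Pres} {P : ℕ → Set Cantor} (hP : ∀ k, t.TCl (P k)) {φ : ℕ → Cantor → Cantor} {a : Cantor}
    (h1 : ∀ k, TC t t' (φ k)) (h2 : ∀ k x, φ k x ∈ t'.nb a k) : TC t t' (waitf P φ a) := by
  apply TC.of_nb
  intro v m
  by_cases hv : ∃ k, v ∈ P k
  · obtain ⟨k, hk, hmin, e⟩ := waitf_pos (φ := φ) (a := a) hv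
    have hO : t.TO (P k ∩ {x | ∀ j < k, x ∉ P j} ∩ φ k ⁻¹' (t'.nb (φ k v) m)) :=
      ((hP k).to.inter (TCl.avoid hP k)).inter ((h1 k).preimage (t'.nb_cl _ _).to)
    obtain ⟨n, hn⟩ := hO.nb (x := v) ⟨⟨hk, hmin⟩, t'.mem_nb _ _⟩
    refine ⟨n, fun w hw => ?_⟩
    obtain ⟨⟨g1, g2⟩, g3⟩ := hn hw
    obtain ⟨k', hk', hmin', e'⟩ := waitf_pos (φ := φ) (a := a) ⟨k, g1⟩
    have : k' = k := by
      rcases lt_trichotomy k' k with h | h | h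
      · exact absurd hk' (g2 _ h)
      · exact h
      · exact absurd g1 (hmin' _ h)
    subst this
    rw [e, e']; exact g3
  · obtain ⟨n, hn⟩ := (TCl.avoid hP m).nb (x := v) (fun j _ h => hv ⟨j, h⟩)
    refine ⟨n, fun w hw => ?_⟩
    have hw' := hn hw
    rw [waitf_neg hv]
    by_cases hv' : ∃ k, w ∈ P k
    · obtain ⟨k, hk, -, e⟩ := waitf_pos (φ := φ) (a := a) hv'
      rw [e]
      refine t'.nb_mono a ?_ (h2 k w)
      by_contra hc
      exact hw' k (by omega) hk
    · rw [waitf_neg hv']; exact t'.mem_nb _ _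

theorem exists_data {X : Set Cantor} {t0 : Pres} {s : Set Cantor} (c : Ctx X t0 s) (hne : (Core t0 X s).Nonempty) :
    ∃ (W C : ℕ → Set Cantor) (y : ℕ → Cantor), (∀ i, t0.TCl (W i)) ∧ (∀ i, IsClosed (C i)) ∧ (∀ i, C i ⊆ W i) ∧
      (∀ i, y i ∈ s ∧ y i ∉ X) ∧ (∀ i W', t0.TCl W' → y i ∈ W' → Red t0 (W i) X t0 W' X) ∧ s \ X ⊆ ⋃ i, C i := by
  let L : Set (List ℕ) := {l | ∃ y, y ∈ s ∧ y ∉ X ∧ ∀ W', t0.TCl W' → y ∈ W' → Red t0 (t0.e ⁻¹' lcyl l) X t0 W' X}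
  have hL : ∀ y ∈ s, y ∉ X → ∃ l ∈ L, y ∈ t0.e ⁻¹' lcyl l := by
    intro y hy hyX
    obtain ⟨V, hV, hyV, hr⟩ := exists_local c.mX t0 y
    obtain ⟨n, hn⟩ := hV.to.nb hyV
    have e : t0.e ⁻¹' lcyl (List.ofFn (fun i : Fin n => t0.e y i)) = t0.nb y n := by
      ext v; exact mem_lcyl_ofFn _ _ _
    refine ⟨List.ofFn (fun i : Fin n => t0.e y i), ⟨y, hy, hyX, fun W' hW' hyW' => ?_⟩, ?_⟩
    · rw [e]
      exact (Red.incl (TC.id t0) (t0.nb_cl y n) hn ⟨y, hyV⟩).comp (hr W' hW' hyW')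
    · rw [e]; exact t0.mem_nb _ _
  have hF : ∀ l : List ℕ, IsFsigma (t0.e ⁻¹' lcyl l) := fun l => t0.fs _ (lcyl_open l).2
  choose F F1 F2 using hF
  obtain ⟨a, ha, haX⟩ := exists_out c hne
  obtain ⟨l0, hl0, -⟩ := hL a ha haX
  haveI : Nonempty (L × ℕ) := ⟨(⟨l0, hl0⟩, 0)⟩
  obtain ⟨g, hg⟩ := exists_surjective_nat (L × ℕ)
  have hy : ∀ l : L, ∃ y, y ∈ s ∧ y ∉ X ∧ ∀ W', t0.TCl W' → y ∈ W' → Red t0 (t0.e ⁻¹' lcyl l.1) X t0 W' X := fun l => l.2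
  choose y y1 y2 y3 using hy
  refine ⟨fun i => t0.e ⁻¹' lcyl (g i).1.1, fun i => F (g i).1.1 (g i).2, fun i => y (g i).1, fun i => TCl.of_code _ (lcyl_open _),
    fun i => F1 _ _, fun i => ?_, fun i => ⟨y1 _, y2 _⟩, fun i => y3 _, ?_⟩
  · dsimp only
    rw [F2]; exact subset_iUnion _ _
  · rintro z ⟨hz, hzX⟩
    obtain ⟨l, hl, hzl⟩ := hL z hz hzX
    rw [F2] at hzl
    obtain ⟨n, hn⟩ := mem_iUnion.1 hzl
    obtain ⟨i, hi⟩ := hg (⟨l, hl⟩, n)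
    refine mem_iUnion.2 ⟨i, ?_⟩
    simp only [hi]; exact hn

open Semi in
theorem S_le {X : Set Cantor} {t0 : Pres} {s : Set Cantor} (c : Ctx X t0 s) {W : ℕ → Set Cantor} {y : ℕ → Cantor}
    (hW : ∀ i, t0.TCl (W i)) (hy : ∀ i, y i ∈ s ∧ y i ∉ X) (hr : ∀ i W', t0.TCl W' → y i ∈ W' → Red t0 (W i) X t0 W' X)
    {x0 : Cantor} (h0 : x0 ∈ s) (h0X : x0 ∈ X) (hg : t0.Gen x0) : WadgeLe (S (fun i => W i ∩ X)) X := by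
  obtain ⟨t, ht, hV⟩ := exists_finer t0 (ι := (ℕ × ℕ) ⊕ ((ℕ × ℕ × ℕ) ⊕ (ℕ × ℕ × ℕ × List ℕ))) (fun q => match q with
    | Sum.inl (N, i) => D N i
    | Sum.inr (Sum.inl (N, M, i)) => E N M i
    | Sum.inr (Sum.inr (N, M, i, l)) => wf N M i ⁻¹' (t0.e ⁻¹' lcyl l)) (by
      rintro (⟨N, i⟩ | ⟨N, M, i⟩ | ⟨N, M, i, l⟩)
      · exact IsFsigma.of_closed (D_closed _ _)
      · exact IsFsigma.of_closed (E_closed _ _ _)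
      · exact (t0.fs _ (lcyl_open l).2).preimage (wf_cont _ _ _))
  have tD : ∀ N i, t.TCl (D N i) := fun N i => TCl.mk' (hV (Sum.inl (N, i))) (TO.of_open t (D_closed N i).isOpen_compl)
  have tE : ∀ N M i, t.TCl (E N M i) := fun N M i => TCl.mk' (hV (Sum.inr (Sum.inl (N, M, i)))) (TO.of_open t (E_closed N M i).isOpen_compl)
  have tw : ∀ N M i, TC t t0 (wf N M i) := fun N M i => TC.of_lcyl (fun l => hV (Sum.inr (Sum.inr (N, M, i, l))))
  have hq : ∀ i m, Red t0 (W i) X t0 (t0.nb (y i) m ∩ s) X := fun i m =>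
    hr i _ ((t0.nb_cl _ _).inter (TCl.of_clopen t0 c.cs)) ⟨t0.mem_nb _ _, (hy i).1⟩
  choose q q1 q2 q3 using hq
  have hgk : ∀ k, Red t0 s X t0 (t0.nb x0 k ∩ s) X := fun k =>
    c.gen x0 h0 hg _ ((t0.nb_cl _ _).inter (TCl.of_clopen t0 c.cs)) ⟨t0.mem_nb _ _, h0⟩
  choose g g1 g2 g3 using hgk
  let P : ℕ → ℕ → ℕ → Set Cantor := fun N i M => E N M i ∩ wf N M i ⁻¹' (W i)
  let ψ : ℕ → ℕ → Cantor → Cantor := fun N i => waitf (P N i) (fun M x => q i M (wf N M i x)) (y i)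
  have ψ1 : ∀ N i, TC t t0 (ψ N i) := fun N i => waitf_TC
    (fun M => (tE N M i).inter ((tw N M i).preimageCl (hW i))) (fun M => (q1 i M).comp (tw N M i)) (fun M x => (q2 i M _).1)
  have ψ2 : ∀ N i x, ψ N i x ∈ s := by
    intro N i x
    by_cases h : ∃ M, x ∈ P N i M
    · obtain ⟨M, -, -, e⟩ := waitf_pos (φ := fun M x => q i M (wf N M i x)) (a := y i) h
      simp only [ψ, e]; exact (q2 _ _ _).2
    · simp only [ψ, waitf_neg h]; exact (hy i).1
  have ψ3 : ∀ N i x, x ∈ D N i → (x ∈ S (fun i => W i ∩ X) ↔ ψ N i x ∈ X) := by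
    intro N i x hx
    rw [S_D hx]
    by_cases h : ∃ M, x ∈ P N i M
    · obtain ⟨M, hM, -, e⟩ := waitf_pos (φ := fun M x => q i M (wf N M i x)) (a := y i) h
      simp only [ψ, e]
      rw [← q3 i M _ hM.2]
      constructor
      · rintro ⟨M', h1, h2, h3⟩
        rw [(A_inj ((E_eq hM.1).symm.trans (E_eq h1))).2]; exact h3
      · exact fun h => ⟨M, hM.1, hM.2, h⟩
    · simp only [ψ, waitf_neg h]
      refine iff_of_false ?_ (hy i).2
      rintro ⟨M, h1, h2, h3⟩
      exact h ⟨M, h1, h2⟩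
  let f := waitf (fun k => D k.unpair.1 k.unpair.2) (fun k x => g k (ψ k.unpair.1 k.unpair.2 x)) x0
  have f1 : TC t t0 f := waitf_TC (fun k => tD _ _) (fun k => (g1 k).comp (ψ1 _ _)) (fun k x => (g2 k _).1)
  have f2 : ∀ x, f x ∈ s ∧ (x ∈ S (fun i => W i ∩ X) ↔ f x ∈ X) := by
    intro x
    by_cases h : ∃ k : ℕ, x ∈ D k.unpair.1 k.unpair.2
    · obtain ⟨k, hk, -, e⟩ := waitf_pos (P := fun k : ℕ => D k.unpair.1 k.unpair.2) (φ := fun k x => g k (ψ k.unpair.1 k.unpair.2 x)) (a := x0) h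
      simp only [f, e]
      refine ⟨(g2 _ _).2, ?_⟩
      rw [ψ3 _ _ x hk]
      exact g3 _ _ (ψ2 _ _ _)
    · have e := waitf_neg (P := fun k : ℕ => D k.unpair.1 k.unpair.2) (φ := fun k x => g k (ψ k.unpair.1 k.unpair.2 x)) (a := x0) h
      simp only [f, e]
      refine ⟨h0, iff_of_true (Or.inl (fun N i hx => h ⟨Nat.pair N i, by simpa using hx⟩)) h0X⟩
  have hm : MeasurableSet (S (fun i => W i ∩ X)) := by
    have : S (fun i => W i ∩ X) = f ⁻¹' X := by ext x; exact (f2 x).2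
    rw [this]; exact f1.meas c.mX
  obtain ⟨F, F1, -, F3⟩ := lemmaB c hm ht ⟨f, f1, fun x => (f2 x).1, fun x _ => (f2 x).2⟩
  exact ⟨F, F1, F3⟩

open Semi in
theorem final (X : Set Cantor)
    (hB : @MeasurableSet Cantor (borel Cantor) X) (hd : Dense X)
    (hhom : IsHomogeneous X) (hbaire : BaireSpace X) (hdel : ¬ InDelta X) :
    ∃ S : Set Cantor, IsSemifilter S ∧ BaireSpace S ∧ WadgeEquiv S X := by
  have hX := meas_borel.1 hB
  obtain ⟨t0, s, c⟩ := exists_ctx hX hd hbaire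
  obtain ⟨x0, h0X, h0, hg⟩ := exists_gen hd hbaire t0 c.cs.2 c.ns
  have hne : (Core t0 X s).Nonempty := ⟨x0, core_gen hd hhom hdel h0 hg⟩
  obtain ⟨W, C, y, hW, hC, hCW, hy, hr, hs⟩ := exists_data c hne
  obtain ⟨f, f1, f2, f3⟩ := self_red hd hhom c hne
  refine ⟨S (fun i => W i ∩ X), S_semi _, S_baire _, S_le c hW hy hr h0 h0X hg, fun z => Semi.hh C (f z), (hh_cont C).comp f1, ?_⟩
  ext z
  have h1 : z ∈ X ↔ f z ∈ X := by
    conv_lhs => rw [f3]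
    rfl
  rw [h1]
  exact hh_red hC hCW hs (f2 z)

end Pres

end

/-- A dense homogeneous Baire Borel subspace of Cantor space outside Δ is
Wadge equivalent to a Baire semifilter. -/
theorem baire_wadge_semifilter (X : Set Cantor)
    (hB : @MeasurableSet Cantor (borel Cantor) X) (hd : Dense X)
    (hhom : IsHomogeneous X) (hbaire : BaireSpace X) (hdel : ¬ InDelta X) :
    ∃ S : Set Cantor, IsSemifilter S ∧ BaireSpace S ∧ WadgeEquiv S X := by
  exact Pres.final X hB hd hhom hbaire hdel
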